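/- arXiv:1709.02006 — 4 statements merged into one kernel-verified Lean document; each statement's English description precedes it below -/
import Mathlib

section
/- The element σ belongs to W, and the centralizer of σ in W is isomorphic to ((C₃ × C₃) ⋊ C₂) × S₃ × C₂, where the nontrivial element of C₂ acts on C₃ × C₃ by exchanging the two factors; in particular, the centralizer of σ in W has order 216. (This is the computation of the centralizer in the Weyl group W(E₇) of the subgroup C₃ generated by the element ab = (123)(456) ∈ S₇ ⊂ W(E₇).) -/
/-!
Write `a = (123)` and `b = (456)`, so that `σ = ab`, let `γ` be the Geiser involution (`−1` on `K^⊥`)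
and let `A₂` be the root system of the roots orthogonal to the `2A₂` on which `σ` acts. Then `a`, `b`,
`W(A₂) ≅ S₃`, `γ` and `t = (14)(25)(36) · s`, where `s` is the reflection in `2L − E₁ − ⋯ − E₆`, all
lie in `W` and centralize `σ`. The involution `t` exchanges `a` and `b` and, thanks to the factor
`s`, commutes with `W(A₂)`, so these elements define a homomorphism (`mainHom`) from
`((C₃ × C₃) ⋊ C₂) × S₃ × C₂` to the centralizer; it is injective (`mainHom_injective`). Membership in
`W` uses that `γ` is the ninth power of the Coxeter element (`geiser_word`) and that the other
elements are products of adjacent transpositions and of `s_{r₀}`.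

For the opposite bound, `W` preserves the form, fixes `K` and permutes the 56 exceptional classes.
An element of the centralizer is therefore determined by the images `(x, y, z)` of `(E₁, E₄, E₇)`
(`eq_of_frame`); these are exceptional classes, `z` is fixed by `σ`, and
`x, σx, σ²x, y, σy, σ²y, z` are pairwise orthogonal (`exists_frame`). There are 216 such triples
(`frames_length`), which is the order of the abstract group, so the injection is an isomorphism.

The group elements are realized as integral matrices, and identities between them are decided by
kernel computation.
-/

/-- The intersection form `B(x,y) = x₀y₀ − x₁y₁ − ⋯ − x₇y₇` on `ℚ⁸` (the Picard lattice of a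
del Pezzo surface of degree 2 in the basis `L, E₁, …, E₇`). -/
def picForm (x y : Fin 8 → ℚ) : ℚ :=
  x 0 * y 0 - ∑ i : Fin 7, x i.succ * y i.succ

/-- The simple roots `L − E₁ − E₂ − E₃` and `E_i − E_{i+1}` (`1 ≤ i ≤ 6`) of the root system
`E₇` inside the Picard lattice. -/
def simpleRootE7 : Fin 7 → Fin 8 → ℚ :=
  ![![1, -1, -1, -1, 0, 0, 0, 0],
    ![0, 1, -1, 0, 0, 0, 0, 0],
    ![0, 0, 1, -1, 0, 0, 0, 0],
    ![0, 0, 0, 1, -1, 0, 0, 0],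
    ![0, 0, 0, 0, 1, -1, 0, 0],
    ![0, 0, 0, 0, 0, 1, -1, 0],
    ![0, 0, 0, 0, 0, 0, 1, -1]]

/-- The Weyl group `W(E₇)`, as the subgroup of `GL(ℚ⁸)` generated by the seven simple
reflections `x ↦ x + B(x, rᵢ)·rᵢ`. -/
def weylE7 : Subgroup ((Fin 8 → ℚ) ≃ₗ[ℚ] (Fin 8 → ℚ)) :=
  Subgroup.closure
    {g | ∃ i : Fin 7, ∀ v : Fin 8 → ℚ, g v = v + picForm v (simpleRootE7 i) • simpleRootE7 i}

/-- `C₃`, a cyclic group of order 3. -/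
abbrev C3 : Type := Multiplicative (ZMod 3)

/-- `C₂`, a cyclic group of order 2. -/
abbrev C2 : Type := Multiplicative (ZMod 2)

/-- The action of `C₂` on `C₃ × C₃` in which the nontrivial element exchanges the two
factors. -/
def swapHom : C2 →* MulAut (C3 × C3) where
  toFun g := (MulEquiv.prodComm : (C3 × C3) ≃* (C3 × C3)) ^ (g.toAdd.val)
  map_one' := by rfl
  map_mul' a b := by
    have h : (MulEquiv.prodComm : (C3 × C3) ≃* (C3 × C3)) ^ 2 = 1 := by
      rw [sq]
      ext x <;> rfl
    show (MulEquiv.prodComm : (C3 × C3) ≃* (C3 × C3)) ^ ((a.toAdd + b.toAdd).val) = _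
    rw [ZMod.val_add, ← pow_eq_pow_mod _ h, pow_add]

/-! ### Integral matrices for the elements involved -/

/-- Integral `8 × 8` matrices, acting on column vectors in the basis `L, E₁, …, E₇`. -/
abbrev M8 := Matrix (Fin 8) (Fin 8) ℤ

/-- Permutation matrices, with `e_j ↦ e_{π j}`. -/
def permMat : Equiv.Perm (Fin 8) →* M8 where
  toFun π := Matrix.of fun i j => (if i = π j then 1 else 0 : ℤ)
  map_one' := by ext i j; simp [Matrix.one_apply]; rfl
  map_mul' π τ := by ext i j; simp [Matrix.mul_apply]; rfl

/-- The diagonal of the Gram matrix of the intersection form. -/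
def sgnZ : Fin 8 → ℤ := ![1, -1, -1, -1, -1, -1, -1, -1]

/-- The intersection form on the lattice `ℤ⁸`. -/
def picZ (x y : Fin 8 → ℤ) : ℤ := ∑ i, sgnZ i * x i * y i

/-- The simple roots of `E₇`, as integral vectors. -/
def rootZ : Fin 7 → Fin 8 → ℤ :=
  ![![1, -1, -1, -1, 0, 0, 0, 0],
    ![0, 1, -1, 0, 0, 0, 0, 0],
    ![0, 0, 1, -1, 0, 0, 0, 0],
    ![0, 0, 0, 1, -1, 0, 0, 0],
    ![0, 0, 0, 0, 1, -1, 0, 0],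
    ![0, 0, 0, 0, 0, 1, -1, 0],
    ![0, 0, 0, 0, 0, 0, 1, -1]]

/-- The matrix of the reflection in the `i`-th simple root. -/
def reflMat (i : Fin 7) : M8 :=
  Matrix.of fun j k => ((if j = k then 1 else 0) + rootZ i j * (sgnZ k * rootZ i k) : ℤ)

/-- Three vectors `v₀, v₁, v₂` whose differences are the roots `L − E₁ − E₂ − E₃`, `L − E₄ − E₅ − E₆`
and `2L − E₁ − ⋯ − E₆` (up to sign) orthogonal to `E₁ − E₂, E₂ − E₃, E₄ − E₅, E₅ − E₆`. They are the
weights of the standard representation of this `A₂` up to a common shift, which is immaterial in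
`rhoFun`. -/
def weightZ : Fin 3 → Fin 8 → ℤ :=
  ![![1, -1, -1, -1, 0, 0, 0, 0], 0, ![-1, 0, 0, 0, 1, 1, 1, 0]]

/-- The element of `W(A₂) ≅ S₃` that sends each `v_j − v_k` to `v_{π j} − v_{π k}`:
`x ↦ x − ∑ₖ B(x, v_k) (v_{π k} − v_k)`. It fixes the orthogonal complement of `A₂`. -/
def rhoFun (π : Equiv.Perm (Fin 3)) : M8 :=
  Matrix.of fun i j => ((if i = j then 1 else 0)
      - ∑ k, (weightZ (π k) i - weightZ k i) * (sgnZ j * weightZ k j) : ℤ)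

/-- The embedding of `S₃ = W(A₂)` given by `rhoFun`. -/
def rhoMat : Equiv.Perm (Fin 3) →* M8 where
  toFun := rhoFun
  map_one' := by decide +kernel
  map_mul' := by decide +kernel

/-- The canonical class `K = −3L + E₁ + ⋯ + E₇`. -/
def canZ : Fin 8 → ℤ := ![-3, 1, 1, 1, 1, 1, 1, 1]

/-- The Geiser involution `x ↦ −x + B(x, K) K`, which is `−1` on `K^⊥`. -/
def geiserMat : M8 :=
  Matrix.of fun i j => (canZ i * (sgnZ j * canZ j) - (if i = j then 1 else 0) : ℤ)

/-- Permutations of the basis as invertible integral matrices. -/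
def permU : Equiv.Perm (Fin 8) →* M8ˣ := permMat.toHomUnits

/-- `S₃ = W(A₂)` inside the invertible integral matrices. -/
def rhoU : Equiv.Perm (Fin 3) →* M8ˣ := rhoMat.toHomUnits

/-- The Geiser involution as an invertible matrix. -/
def geiserU : M8ˣ := ⟨geiserMat, geiserMat, by decide +kernel, by decide +kernel⟩

/-- The simple reflections as invertible matrices. -/
def reflU (i : Fin 7) : M8ˣ :=
  ⟨reflMat i, reflMat i, by revert i; decide +kernel, by revert i; decide +kernel⟩

/-- The 3-cycle `(123)`. -/
def permA : Equiv.Perm (Fin 8) := c[1, 2, 3]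

/-- The 3-cycle `(456)`. -/
def permB : Equiv.Perm (Fin 8) := c[4, 5, 6]

/-- The involution `(14)(25)(36)`, which exchanges `(123)` and `(456)`. -/
def permT : Equiv.Perm (Fin 8) := Equiv.swap 1 4 * Equiv.swap 2 5 * Equiv.swap 3 6

/-- The matrix of `a = (123)`; then `σ = ab`. -/
def aU : M8ˣ := permU permA

/-- The matrix of `b = (456)`. -/
def bU : M8ˣ := permU permB

/-- The involution exchanging `a` and `b` by conjugation. Since `(14)(25)(36)` acts on `W(A₂) = S₃` as
conjugation by the transposition `(0 2)`, the factor `rhoU (swap 0 2)` makes `tU` centralize `S₃`. -/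
def tU : M8ˣ := permU permT * rhoU (Equiv.swap 0 2)

/-! ### Relations between the generators of the centralizer -/

theorem aU_pow : aU ^ 3 = 1 := by
  rw [aU, ← map_pow, show permA ^ 3 = 1 by decide +kernel, map_one]

theorem bU_pow : bU ^ 3 = 1 := by
  rw [bU, ← map_pow, show permB ^ 3 = 1 by decide +kernel, map_one]

theorem geiserU_pow : geiserU ^ 2 = 1 := by
  ext1; rw [Units.val_pow_eq_pow_val]; show geiserMat ^ 2 = 1; decide +kernel

theorem aU_bU : Commute aU bU := by
  rw [commute_iff_eq, aU, bU, ← map_mul, ← map_mul]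
  congr 1; decide +kernel

/-- Conjugation by `(14)(25)(36)` is conjugation by `(0 2)` on `S₃ = W(A₂)`. -/
theorem permT_rhoU (π : Equiv.Perm (Fin 3)) :
    permU permT * rhoU π = rhoU (Equiv.swap 0 2 * π * Equiv.swap 0 2) * permU permT := by
  ext1
  show permMat permT * rhoMat π = rhoMat (Equiv.swap 0 2 * π * Equiv.swap 0 2) * permMat permT
  revert π; decide +kernel

theorem aU_rhoU (π : Equiv.Perm (Fin 3)) : Commute aU (rhoU π) := by
  rw [commute_iff_eq]; ext1
  show permMat permA * rhoMat π = rhoMat π * permMat permA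
  revert π; decide +kernel

theorem bU_rhoU (π : Equiv.Perm (Fin 3)) : Commute bU (rhoU π) := by
  rw [commute_iff_eq]; ext1
  show permMat permB * rhoMat π = rhoMat π * permMat permB
  revert π; decide +kernel

theorem geiserU_rhoU (π : Equiv.Perm (Fin 3)) : Commute geiserU (rhoU π) := by
  rw [commute_iff_eq]; ext1
  show geiserMat * rhoMat π = rhoMat π * geiserMat
  revert π; decide +kernel

theorem geiserU_permU {π : Equiv.Perm (Fin 8)} (h : π 0 = 0) : Commute geiserU (permU π) := by
  rw [commute_iff_eq]; ext1
  show geiserMat * permMat π = permMat π * geiserMat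
  have hc : ∀ i, canZ (π i) = canZ i := by
    intro i
    by_cases hi : i = 0
    · rw [hi, h]
    · have : π i ≠ 0 := fun hh => hi (π.injective (hh.trans h.symm))
      have key : ∀ j : Fin 8, j ≠ 0 → canZ j = 1 := by decide
      rw [key _ hi, key _ this]
  have hs : ∀ i, sgnZ (π i) = sgnZ i := by
    intro i
    by_cases hi : i = 0
    · rw [hi, h]
    · have : π i ≠ 0 := fun hh => hi (π.injective (hh.trans h.symm))
      have key : ∀ j : Fin 8, j ≠ 0 → sgnZ j = -1 := by decide
      rw [key _ hi, key _ this]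
  ext i j
  have h1 : (geiserMat * permMat π) i j = geiserMat i (π j) := by
    simp [Matrix.mul_apply, permMat]
  have h2 : (permMat π * geiserMat) i j = geiserMat (π.symm i) j := by
    simp [Matrix.mul_apply, permMat, ← Equiv.symm_apply_eq]
  have h3 := hc (π.symm i)
  rw [Equiv.apply_symm_apply] at h3
  rw [h1, h2]
  simp [geiserMat, hc, hs, h3, Equiv.symm_apply_eq]

theorem tU_rhoU (π : Equiv.Perm (Fin 3)) : Commute tU (rhoU π) := by
  have hs : (Equiv.swap 0 2 * Equiv.swap 0 2 : Equiv.Perm (Fin 3)) = 1 := Equiv.swap_mul_self _ _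
  rw [commute_iff_eq, tU, mul_assoc, ← map_mul, permT_rhoU, permT_rhoU, ← mul_assoc, ← mul_assoc,
    ← map_mul, hs, one_mul, one_mul]

theorem tU_pow : tU ^ 2 = 1 := by
  have hs : (Equiv.swap 0 2 * Equiv.swap 0 2 : Equiv.Perm (Fin 3)) = 1 := Equiv.swap_mul_self _ _
  rw [pow_two]
  nth_rw 1 [tU]
  rw [permT_rhoU, hs, one_mul, tU, mul_assoc, ← mul_assoc (permU permT), ← map_mul,
    show permT * permT = 1 by decide +kernel, map_one, one_mul, ← map_mul, hs, map_one]

theorem tU_aU : tU * aU = bU * tU := by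
  rw [tU, mul_assoc, ← (aU_rhoU _).eq, ← mul_assoc, ← mul_assoc]
  congr 1
  rw [aU, bU, ← map_mul, ← map_mul]; congr 1; decide +kernel

theorem tU_bU : tU * bU = aU * tU := by
  rw [tU, mul_assoc, ← (bU_rhoU _).eq, ← mul_assoc, ← mul_assoc]
  congr 1
  rw [aU, bU, ← map_mul, ← map_mul]; congr 1; decide +kernel

theorem geiserU_aU : Commute geiserU aU := geiserU_permU (by decide +kernel)

theorem geiserU_bU : Commute geiserU bU := geiserU_permU (by decide +kernel)

theorem geiserU_tU : Commute geiserU tU :=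
  (geiserU_permU (by decide +kernel)).mul_right (geiserU_rhoU _)

set_option synthInstance.maxSize 2000 in
set_option synthInstance.maxHeartbeats 400000 in
/-- The only one of the 216 products `a^x b^y t^z ρ(π) γ^u` that equals `1` is the trivial one; here
`t^z` is split into its two commuting factors. -/
theorem eq_one_of_product_eq_one : ∀ (x y : Fin 3) (z : Fin 2) (π : Equiv.Perm (Fin 3)) (u : Fin 2),
    permMat (permA ^ x.1 * permB ^ y.1 * permT ^ z.1) *
      rhoMat ((Equiv.swap 0 2) ^ z.1 * π) * geiserMat ^ u.1 = 1 →
    x = 0 ∧ y = 0 ∧ z = 0 ∧ π = 1 ∧ u = 0 := by decide +kernel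

/-! ### Exceptional classes -/

/-- The exceptional classes `E_i` and `L − E_i − E_j`. -/
def excHalf : List (Fin 8 → ℤ) :=
  (List.finRange 7).map (fun i => Pi.single i.succ 1) ++
  ((List.finRange 7).flatMap fun i => ((List.finRange 7).filter (i < ·)).map fun j =>
    Pi.single 0 1 - Pi.single i.succ 1 - Pi.single j.succ 1)

/-- The 56 exceptional classes: the Geiser involution sends an exceptional class `x` to `−K − x`, and
this gives the classes missing from `excHalf`. -/
def exc : List (Fin 8 → ℤ) := excHalf ++ excHalf.map fun x => -canZ - x

theorem exc_refl : ∀ i : Fin 7, ∀ x ∈ exc,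
    (fun j => x j + picZ x (rootZ i) * rootZ i j) ∈ exc := by decide +kernel

/-- The action of `σ` on integral vectors. -/
def sigZ (x : Fin 8 → ℤ) : Fin 8 → ℤ := ![x 0, x 3, x 1, x 2, x 6, x 4, x 5, x 7]

/-- Triples `(x, y, z)` of exceptional classes with `z` fixed by `σ` and such that
`x, σx, σ²x, y, σy, σ²y, z` are pairwise orthogonal. An element of the centralizer of `σ` sends
`(E₁, E₄, E₇)` to such a triple. -/
def frames : List ((Fin 8 → ℤ) × (Fin 8 → ℤ) × (Fin 8 → ℤ)) :=
  (exc.filter fun z => sigZ z = z).flatMap fun z =>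
    (exc.filter fun x => picZ x z = 0 ∧ picZ x (sigZ x) = 0).flatMap fun x =>
      ((exc.filter fun y => picZ y z = 0 ∧ picZ y (sigZ y) = 0).filter fun y =>
        picZ x y = 0 ∧ picZ x (sigZ y) = 0 ∧ picZ x (sigZ (sigZ y)) = 0).map fun y => (x, y, z)

theorem frames_length : frames.length = 216 := by decide +kernel

/-! ### Membership in the Weyl group -/

/-- The Coxeter element of `E₇` has order 18, and its ninth power is `−1` on `K^⊥`. -/
theorem geiser_word :
    (reflU 0 * reflU 1 * reflU 2 * reflU 3 * reflU 4 * reflU 5 * reflU 6) ^ 9 = geiserU := by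
  ext1
  simp only [Units.val_pow_eq_pow_val, Units.val_mul]
  show (reflMat 0 * reflMat 1 * reflMat 2 * reflMat 3 * reflMat 4 * reflMat 5 * reflMat 6) ^ 9
    = geiserMat
  decide +kernel

/-- The transposition of `E_{i+1}` and `E_{i+2}`, for `0 ≤ i ≤ 5`. -/
def adjSwap (i : Fin 6) : Equiv.Perm (Fin 8) := Equiv.swap i.castSucc.succ i.succ.succ

theorem permU_adjSwap (i : Fin 6) : permU (adjSwap i) = reflU i.succ := by
  ext1
  show permMat (adjSwap i) = reflMat i.succ
  revert i; decide +kernel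

theorem rhoU_swap : rhoU (Equiv.swap 0 1) = reflU 0 := by
  ext1
  show rhoMat (Equiv.swap 0 1) = reflMat 0
  decide +kernel

/-- The Weyl group as a group of integral matrices. -/
def weylU : Subgroup M8ˣ := Subgroup.closure (Set.range reflU)

theorem reflU_mem (i : Fin 7) : reflU i ∈ weylU := Subgroup.subset_closure ⟨i, rfl⟩

theorem geiserU_mem : geiserU ∈ weylU := by
  rw [← geiser_word]
  exact pow_mem (mul_mem (mul_mem (mul_mem (mul_mem (mul_mem (mul_mem (reflU_mem _) (reflU_mem _))
    (reflU_mem _)) (reflU_mem _)) (reflU_mem _)) (reflU_mem _)) (reflU_mem _)) 9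

theorem permU_word_mem (l : List (Fin 6)) : permU (l.map adjSwap).prod ∈ weylU := by
  rw [map_list_prod]
  refine list_prod_mem fun u hu => ?_
  simp only [List.map_map, List.mem_map] at hu
  obtain ⟨i, -, rfl⟩ := hu
  rw [Function.comp_apply, permU_adjSwap]
  exact reflU_mem _

theorem aU_mem : aU ∈ weylU := by
  rw [aU, show permA = ([0, 1].map adjSwap).prod by decide +kernel]
  exact permU_word_mem _

theorem bU_mem : bU ∈ weylU := by
  rw [bU, show permB = ([3, 4].map adjSwap).prod by decide +kernel]
  exact permU_word_mem _

theorem permT_mem : permU permT ∈ weylU := by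
  rw [show permT = ([2, 1, 0, 3, 2, 1, 4, 3, 2].map adjSwap).prod by decide +kernel]
  exact permU_word_mem _

theorem rhoU_mem (π : Equiv.Perm (Fin 3)) : rhoU π ∈ weylU := by
  have h01 : rhoU (Equiv.swap 0 1) ∈ weylU := rhoU_swap ▸ reflU_mem 0
  have h12 : rhoU (Equiv.swap 1 2) ∈ weylU := by
    have h := permT_rhoU (Equiv.swap 0 1)
    rw [show (Equiv.swap 0 2 * Equiv.swap 0 1 * Equiv.swap 0 2 : Equiv.Perm (Fin 3))
      = Equiv.swap 1 2 by decide, ← mul_inv_eq_iff_eq_mul] at h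
    rw [← h]
    exact mul_mem (mul_mem permT_mem h01) (inv_mem permT_mem)
  have key : ∀ π : Equiv.Perm (Fin 3), ∃ k l m : Fin 2,
      π = Equiv.swap 0 1 ^ k.1 * Equiv.swap 1 2 ^ l.1 * Equiv.swap 0 1 ^ m.1
      ∨ π = Equiv.swap 1 2 ^ k.1 * Equiv.swap 0 1 ^ l.1 := by decide +kernel
  obtain ⟨k, l, m, rfl | rfl⟩ := key π
  · simp only [map_mul, map_pow]
    exact mul_mem (mul_mem (pow_mem h01 _) (pow_mem h12 _)) (pow_mem h01 _)
  · simp only [map_mul, map_pow]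
    exact mul_mem (pow_mem h12 _) (pow_mem h01 _)

theorem tU_mem : tU ∈ weylU := mul_mem permT_mem (rhoU_mem _)

/-! ### The homomorphism from the abstract group -/

/-- The homomorphism from `C_n` sending the generator to an element `u` with `u ^ n = 1`. -/
def cyclicHom {G : Type*} [Group G] (n : ℕ) [NeZero n] (u : G) (h : u ^ n = 1) :
    Multiplicative (ZMod n) →* G where
  toFun x := u ^ x.toAdd.val
  map_one' := by simp
  map_mul' x y := by
    rw [toAdd_mul, ZMod.val_add, ← pow_eq_pow_mod _ h, pow_add]

/-- The homomorphism `C₃ × C₃ → GL₈(ℤ)` given by `a` and `b`. -/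
def abHom : C3 × C3 →* M8ˣ :=
  (cyclicHom 3 aU aU_pow).noncommCoprod (cyclicHom 3 bU bU_pow)
    fun _ _ => aU_bU.pow_pow _ _

theorem abHom_apply (x : C3 × C3) : abHom x = aU ^ x.1.toAdd.val * bU ^ x.2.toAdd.val := rfl

theorem abHom_swap (g : C2) : abHom.comp (swapHom g).toMonoidHom =
    (MulAut.conj (cyclicHom 2 tU tU_pow g)).toMonoidHom.comp abHom := by
  have key : ∀ g : C2, g = 1 ∨ g = Multiplicative.ofAdd 1 := by decide
  ext1 x
  rcases key g with rfl | rfl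
  · simp
  · have h1 : swapHom (Multiplicative.ofAdd 1) x = (x.2, x.1) := by
      rfl
    have h2 : cyclicHom 2 tU tU_pow (Multiplicative.ofAdd 1) = tU := pow_one _
    have ha : tU * aU * tU⁻¹ = bU := by rw [tU_aU, mul_inv_cancel_right]
    have hb : tU * bU * tU⁻¹ = aU := by rw [tU_bU, mul_inv_cancel_right]
    simp only [MonoidHom.comp_apply, MulEquiv.coe_toMonoidHom, h1, h2, abHom_apply, map_mul,
      map_pow, MulAut.conj_apply, ha, hb]
    exact (aU_bU.pow_pow _ _)

/-- The homomorphism `(C₃ × C₃) ⋊ C₂ → GL₈(ℤ)` given by `a`, `b` and `t`. -/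
def semiHom : (C3 × C3) ⋊[swapHom] C2 →* M8ˣ :=
  SemidirectProduct.lift abHom (cyclicHom 2 tU tU_pow) abHom_swap

theorem semiHom_apply (g : (C3 × C3) ⋊[swapHom] C2) : semiHom g =
    aU ^ g.left.1.toAdd.val * bU ^ g.left.2.toAdd.val * tU ^ g.right.toAdd.val := rfl

theorem commute_semiHom {u : M8ˣ} (ha : Commute u aU) (hb : Commute u bU) (ht : Commute u tU)
    (g : (C3 × C3) ⋊[swapHom] C2) : Commute u (semiHom g) := by
  rw [semiHom_apply]
  exact ((ha.pow_right _).mul_right (hb.pow_right _)).mul_right (ht.pow_right _)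

/-- The homomorphism `S₃ × C₂ → GL₈(ℤ)` given by `W(A₂)` and the Geiser involution. -/
def rhoGeiserHom : Equiv.Perm (Fin 3) × C2 →* M8ˣ :=
  rhoU.noncommCoprod (cyclicHom 2 geiserU geiserU_pow)
    fun π _ => ((geiserU_rhoU π).pow_left _).symm

theorem rhoGeiserHom_apply (x : Equiv.Perm (Fin 3) × C2) :
    rhoGeiserHom x = rhoU x.1 * geiserU ^ x.2.toAdd.val := rfl

/-- The group `((C₃ × C₃) ⋊ C₂) × S₃ × C₂`. -/
abbrev TargetGroup : Type := ((C3 × C3) ⋊[swapHom] C2) × Equiv.Perm (Fin 3) × C2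

/-- The homomorphism whose image will be the centralizer of `σ`. -/
def mainHom : TargetGroup →* M8ˣ :=
  semiHom.noncommCoprod rhoGeiserHom fun g x => by
    rw [rhoGeiserHom_apply]
    refine Commute.mul_right ?_ (Commute.pow_right ?_ _)
    · exact (commute_semiHom (aU_rhoU _).symm (bU_rhoU _).symm (tU_rhoU _).symm g).symm
    · exact (commute_semiHom geiserU_aU geiserU_bU geiserU_tU g).symm

theorem mainHom_apply (g : TargetGroup) : mainHom g = semiHom g.1 * rhoGeiserHom g.2 := rfl

theorem mainHom_mem (g : TargetGroup) : mainHom g ∈ weylU := by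
  rw [mainHom_apply, semiHom_apply, rhoGeiserHom_apply]
  exact mul_mem (mul_mem (mul_mem (pow_mem aU_mem _) (pow_mem bU_mem _)) (pow_mem tU_mem _))
    (mul_mem (rhoU_mem _) (pow_mem geiserU_mem _))

theorem mainHom_commute (g : TargetGroup) : Commute (aU * bU) (mainHom g) := by
  have ht : Commute (aU * bU) tU := by
    rw [commute_iff_eq, ← mul_assoc, tU_aU, mul_assoc, mul_assoc, tU_bU, ← mul_assoc, ← mul_assoc,
      aU_bU.eq]
  rw [mainHom_apply, rhoGeiserHom_apply]
  exact (commute_semiHom ((Commute.refl _).mul_left aU_bU.symm) (aU_bU.mul_left (Commute.refl _))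
    ht _).mul_right (((aU_rhoU _).mul_left (bU_rhoU _)).mul_right
      ((geiserU_aU.mul_right geiserU_bU).symm.pow_right _))

theorem mainHom_injective : Function.Injective mainHom := by
  rw [injective_iff_map_eq_one]
  rintro ⟨⟨⟨x, y⟩, z⟩, π, u⟩ h
  have hz : tU ^ z.toAdd.val =
      permU (permT ^ z.toAdd.val) * rhoU (Equiv.swap 0 2 ^ z.toAdd.val) := by
    have hc : Commute (permU permT) (rhoU (Equiv.swap 0 2)) := by
      rw [commute_iff_eq, permT_rhoU, Equiv.swap_mul_self, one_mul]
    rw [tU, hc.mul_pow, map_pow, map_pow]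
  have h2 : permU (permA ^ x.toAdd.val * permB ^ y.toAdd.val * permT ^ z.toAdd.val) *
      rhoU ((Equiv.swap 0 2) ^ z.toAdd.val * π) * geiserU ^ u.toAdd.val = 1 := by
    rw [← h, mainHom_apply, semiHom_apply, rhoGeiserHom_apply, hz]
    simp only [map_mul, map_pow, mul_assoc]
    rfl
  have h3 := congrArg Units.val h2
  obtain ⟨rfl, rfl, rfl, rfl, rfl⟩ := eq_one_of_product_eq_one x.toAdd y.toAdd z.toAdd π u.toAdd h3
  rfl

theorem card_target : Nat.card TargetGroup = 216 := by
  have : Fintype.card (Equiv.Perm (Fin 3)) = 6 := by decide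
  simp [TargetGroup, SemidirectProduct.card, Nat.card_prod, this, Nat.card_eq_fintype_card]

/-! ### Passage to `ℚ⁸` -/

/-- The inclusion `ℤ⁸ ⊂ ℚ⁸`. -/
def castV (x : Fin 8 → ℤ) : Fin 8 → ℚ := fun i => (x i : ℚ)

theorem castV_injective : Function.Injective castV := fun x y h => by
  ext i
  have hi : (x i : ℚ) = y i := congrFun h i
  exact_mod_cast hi

theorem picForm_eq (x y : Fin 8 → ℚ) : picForm x y = ∑ i, (sgnZ i : ℚ) * x i * y i := by
  simp [picForm, Fin.sum_univ_succ, sgnZ]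
  ring

theorem picForm_castV (x y : Fin 8 → ℤ) : picForm (castV x) (castV y) = picZ x y := by
  simp [picForm_eq, picZ, castV]

theorem picForm_comm (x y : Fin 8 → ℚ) : picForm x y = picForm y x := by
  simp only [picForm_eq]
  exact Finset.sum_congr rfl fun i _ => by ring

theorem picForm_add (x y z : Fin 8 → ℚ) : picForm (x + y) z = picForm x z + picForm y z := by
  simp only [picForm_eq, ← Finset.sum_add_distrib, Pi.add_apply]
  exact Finset.sum_congr rfl fun i _ => by ring

theorem picForm_smul (c : ℚ) (x z : Fin 8 → ℚ) : picForm (c • x) z = c * picForm x z := by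
  simp only [picForm_eq, Finset.mul_sum, Pi.smul_apply, smul_eq_mul]
  exact Finset.sum_congr rfl fun i _ => by ring

theorem simpleRoot_eq (i : Fin 7) : simpleRootE7 i = castV (rootZ i) := by
  ext j
  fin_cases i <;> fin_cases j <;> simp [simpleRootE7, castV, rootZ]

theorem picForm_root (i : Fin 7) : picForm (simpleRootE7 i) (simpleRootE7 i) = -2 := by
  rw [simpleRoot_eq, picForm_castV]
  have : ∀ i, picZ (rootZ i) (rootZ i) = -2 := by decide
  rw [this]; norm_num

theorem picForm_can_root (i : Fin 7) : picForm (castV canZ) (simpleRootE7 i) = 0 := by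
  rw [simpleRoot_eq, picForm_castV]
  have : ∀ i, picZ canZ (rootZ i) = 0 := by decide
  rw [this]; norm_num

/-- The embedding `GL₈(ℤ) → GL(ℚ⁸)`. -/
noncomputable def realize : M8ˣ →* ((Fin 8 → ℚ) ≃ₗ[ℚ] (Fin 8 → ℚ)) :=
  (LinearMap.GeneralLinearGroup.generalLinearEquiv ℚ (Fin 8 → ℚ)).toMonoidHom.comp
    (Matrix.GeneralLinearGroup.toLin.toMonoidHom.comp
      (Matrix.GeneralLinearGroup.map (Int.castRingHom ℚ)))

theorem realize_apply (u : M8ˣ) (v : Fin 8 → ℚ) :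
    realize u v = (u.val.map (Int.cast : ℤ → ℚ)).mulVec v := rfl

theorem realize_castV (u : M8ˣ) (x : Fin 8 → ℤ) :
    realize u (castV x) = castV (u.val.mulVec x) := by
  ext i
  simp [realize_apply, castV, Matrix.mulVec, dotProduct]

theorem realize_injective : Function.Injective realize := by
  intro u w h
  ext i j
  have := congrFun (congrArg (fun f : (Fin 8 → ℚ) ≃ₗ[ℚ] (Fin 8 → ℚ) => f (Pi.single j 1)) h) i
  simpa [realize_apply] using this

theorem realize_reflU (i : Fin 7) (v : Fin 8 → ℚ) :
    realize (reflU i) v = v + picForm v (simpleRootE7 i) • simpleRootE7 i := by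
  rw [simpleRoot_eq, picForm_eq]
  ext j
  have : ∀ k, ((reflU i).val.map (Int.cast : ℤ → ℚ)) j k * v k =
      (if j = k then v k else 0) + (sgnZ k * v k * castV (rootZ i) k) * castV (rootZ i) j := by
    intro k
    show ((reflMat i j k : ℤ) : ℚ) * v k = _
    simp only [reflMat, Matrix.of_apply, castV]
    push_cast
    split_ifs <;> ring
  rw [realize_apply, Matrix.mulVec, dotProduct]
  simp only [this, Finset.sum_add_distrib, ← Finset.sum_mul]
  simp

theorem weylE7_eq : weylE7 = weylU.map realize := by
  rw [weylE7, weylU, MonoidHom.map_closure]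
  congr 1
  ext g
  simp only [Set.mem_ofPred_eq, Set.mem_image, Set.mem_range, exists_exists_eq_and]
  refine exists_congr fun i => ⟨fun h => ?_, ?_⟩
  · ext1 v
    rw [realize_reflU, h]
  · rintro rfl v
    exact realize_reflU i v

theorem weyl_form {g : (Fin 8 → ℚ) ≃ₗ[ℚ] (Fin 8 → ℚ)} (hg : g ∈ weylE7) :
    ∀ x y, picForm (g x) (g y) = picForm x y := by
  induction hg using Subgroup.closure_induction with
  | mem g hg =>
    obtain ⟨i, hi⟩ := hg
    intro x y
    have hr := picForm_root i
    rw [hi, hi, picForm_add, picForm_smul, picForm_comm x, picForm_comm (simpleRootE7 i),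
      picForm_add, picForm_add, picForm_smul, picForm_smul, hr, picForm_comm y x,
      picForm_comm _ x]
    ring
  | one => intro x y; rfl
  | mul g h _ _ ihg ihh => intro x y; rw [LinearEquiv.mul_apply, LinearEquiv.mul_apply, ihg, ihh]
  | inv g _ ih =>
    intro x y
    rw [← ih, ← LinearEquiv.mul_apply, ← LinearEquiv.mul_apply, mul_inv_cancel]
    rfl

theorem weyl_can {g : (Fin 8 → ℚ) ≃ₗ[ℚ] (Fin 8 → ℚ)} (hg : g ∈ weylE7) :
    g (castV canZ) = castV canZ := by
  have : weylE7 ≤ MulAction.stabilizer ((Fin 8 → ℚ) ≃ₗ[ℚ] (Fin 8 → ℚ)) (castV canZ) := by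
    refine (Subgroup.closure_le _).2 ?_
    rintro g ⟨i, hi⟩
    show g (castV canZ) = castV canZ
    rw [hi, picForm_can_root, zero_smul, add_zero]
  exact this hg

open scoped Pointwise in
/-- `W` permutes the exceptional classes, because every simple reflection does. -/
theorem weyl_exc {g : (Fin 8 → ℚ) ≃ₗ[ℚ] (Fin 8 → ℚ)} (hg : g ∈ weylE7)
    {x : Fin 8 → ℤ} (hx : x ∈ exc) : ∃ y ∈ exc, g (castV x) = castV y := by
  have hfin : (castV '' {x | x ∈ exc}).Finite := (List.finite_toSet exc).image _
  have : weylE7 ≤ MulAction.stabilizer ((Fin 8 → ℚ) ≃ₗ[ℚ] (Fin 8 → ℚ))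
      (castV '' {x | x ∈ exc}) := by
    refine (Subgroup.closure_le _).2 ?_
    rintro g ⟨i, hi⟩
    refine (MulAction.mem_stabilizer_set_iff_smul_set_subset hfin).2 ?_
    rintro _ ⟨_, ⟨x, hx, rfl⟩, rfl⟩
    refine ⟨_, exc_refl i x hx, ?_⟩
    show _ = g (castV x)
    rw [hi, simpleRoot_eq, picForm_castV]
    ext j
    simp [castV]
  have h2 := this hg
  rw [MulAction.mem_stabilizer_set_iff_smul_set_subset hfin] at h2
  obtain ⟨y, hy, h⟩ := h2 ⟨castV x, ⟨x, hx, rfl⟩, rfl⟩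
  exact ⟨y, hy, h.symm⟩

theorem castV_single (i : Fin 8) : castV (Pi.single i 1) = Pi.single i 1 := by
  ext j
  by_cases h : j = i
  · subst h; simp [castV]
  · simp [castV, h]

theorem eq_realize (σ : (Fin 8 → ℚ) ≃ₗ[ℚ] (Fin 8 → ℚ))
    (h : ∀ i, σ (Pi.single i 1) = Pi.single (permA (permB i)) 1) : σ = realize (aU * bU) := by
  apply LinearEquiv.toLinearMap_injective
  refine LinearMap.pi_ext' fun i => LinearMap.ext_ring ?_
  show σ (Pi.single i 1) = realize (aU * bU) (Pi.single i 1)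
  rw [h, ← castV_single, ← castV_single, realize_castV]
  congr 1
  show _ = (permMat permA * permMat permB).mulVec _
  revert i
  decide +kernel

theorem realize_sig (x : Fin 8 → ℤ) : realize (aU * bU) (castV x) = castV (sigZ x) := by
  rw [realize_castV]
  congr 1
  have hM : (aU * bU).val = Matrix.of fun i j =>
      (if (![0, 3, 1, 2, 6, 4, 5, 7] : Fin 8 → Fin 8) i = j then 1 else 0 : ℤ) := by
    show permMat permA * permMat permB = _
    decide +kernel
  rw [hM]
  ext i
  simp only [Matrix.mulVec, dotProduct, Matrix.of_apply, ite_mul, one_mul, zero_mul,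
    Finset.sum_ite_eq, Finset.mem_univ, if_true]
  fin_cases i <;> rfl

/-! ### The centralizer has at most 216 elements -/

theorem mem_frames {x y z : Fin 8 → ℤ} (hx : x ∈ exc) (hy : y ∈ exc) (hz : z ∈ exc)
    (h1 : sigZ z = z) (h2 : picZ x z = 0) (h3 : picZ x (sigZ x) = 0) (h4 : picZ y z = 0)
    (h5 : picZ y (sigZ y) = 0) (h6 : picZ x y = 0) (h7 : picZ x (sigZ y) = 0)
    (h8 : picZ x (sigZ (sigZ y)) = 0) : (x, y, z) ∈ frames := by
  simp only [frames, List.mem_flatMap, List.mem_map, List.mem_filter, decide_eq_true_eq]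
  exact ⟨z, ⟨hz, h1⟩, x, ⟨hx, h2, h3⟩, y, ⟨⟨hy, h4, h5⟩, h6, h7, h8⟩, rfl⟩

theorem single_mem_exc : ∀ i : Fin 7, Pi.single i.succ 1 ∈ exc := by decide +kernel

theorem exists_frame {g : (Fin 8 → ℚ) ≃ₗ[ℚ] (Fin 8 → ℚ)} (hg : g ∈ weylE7)
    (hc : ∀ v, g (realize (aU * bU) v) = realize (aU * bU) (g v)) :
    ∃ f ∈ frames, g (castV (Pi.single 1 1)) = castV f.1 ∧ g (castV (Pi.single 4 1)) = castV f.2.1 ∧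
      g (castV (Pi.single 7 1)) = castV f.2.2 := by
  obtain ⟨x, hx, gx⟩ := weyl_exc hg (single_mem_exc 0)
  obtain ⟨y, hy, gy⟩ := weyl_exc hg (single_mem_exc 3)
  obtain ⟨z, hz, gz⟩ := weyl_exc hg (single_mem_exc 6)
  have step : ∀ {u w}, g (castV u) = castV w → g (castV (sigZ u)) = castV (sigZ w) := by
    intro u w h
    rw [← realize_sig, hc, h, realize_sig]
  have pair : ∀ {u w u' w'}, g (castV u) = castV w → g (castV u') = castV w' →
      picZ u u' = 0 → picZ w w' = 0 := by
    intro u w u' w' h h' h0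
    have := weyl_form hg (castV u) (castV u')
    rw [h, h', picForm_castV, picForm_castV] at this
    rw [← h0]
    exact_mod_cast this
  refine ⟨(x, y, z), mem_frames hx hy hz ?_ (pair gx gz (by decide +kernel))
    (pair gx (step gx) (by decide +kernel)) (pair gy gz (by decide +kernel))
    (pair gy (step gy) (by decide +kernel)) (pair gx gy (by decide +kernel))
    (pair gx (step gy) (by decide +kernel)) (pair gx (step (step gy)) (by decide +kernel)),
    gx, gy, gz⟩
  apply castV_injective
  rw [← step gz, ← gz]
  congr 2
  decide +kernel

/-- An element of the centralizer is determined by its values on `E₁, E₄, E₇`: commuting with `σ` gives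
the values on all `E_i`, and the value on `L` follows since `3L = E₁ + ⋯ + E₇ − K` and `K` is fixed. -/
theorem eq_of_frame {g h : (Fin 8 → ℚ) ≃ₗ[ℚ] (Fin 8 → ℚ)} (hg : g ∈ weylE7) (hh : h ∈ weylE7)
    (gc : ∀ v, g (realize (aU * bU) v) = realize (aU * bU) (g v))
    (hc : ∀ v, h (realize (aU * bU) v) = realize (aU * bU) (h v))
    (h1 : g (castV (Pi.single 1 1)) = h (castV (Pi.single 1 1)))
    (h4 : g (castV (Pi.single 4 1)) = h (castV (Pi.single 4 1)))
    (h7 : g (castV (Pi.single 7 1)) = h (castV (Pi.single 7 1))) : g = h := by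
  have step : ∀ {u}, g (castV u) = h (castV u) → g (castV (sigZ u)) = h (castV (sigZ u)) := by
    intro u e
    rw [← realize_sig, gc, e, hc]
  have s12 : sigZ (Pi.single 1 1) = Pi.single 2 1 := by decide +kernel
  have s23 : sigZ (Pi.single 2 1) = Pi.single 3 1 := by decide +kernel
  have s45 : sigZ (Pi.single 4 1) = Pi.single 5 1 := by decide +kernel
  have s56 : sigZ (Pi.single 5 1) = Pi.single 6 1 := by decide +kernel
  have h2 := step h1
  rw [s12] at h2
  have h3 := step h2
  rw [s23] at h3
  have h5 := step h4
  rw [s45] at h5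
  have h6 := step h5
  rw [s56] at h6
  have hcan := (weyl_can hg).trans (weyl_can hh).symm
  simp only [castV_single] at h1 h2 h3 h4 h5 h6 h7
  have h0 : g (Pi.single 0 1) = h (Pi.single 0 1) := by
    have e : (Pi.single 0 1 : Fin 8 → ℚ) = (3⁻¹ : ℚ) • (Pi.single 1 1 + Pi.single 2 1 +
        Pi.single 3 1 + Pi.single 4 1 + Pi.single 5 1 + Pi.single 6 1 + Pi.single 7 1
        - castV canZ) := by
      ext i
      fin_cases i <;> simp [castV, canZ]
    rw [e]
    simp only [map_smul, map_sub, map_add, h1, h2, h3, h4, h5, h6, h7, hcan]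
  apply LinearEquiv.toLinearMap_injective
  refine LinearMap.pi_ext' fun i => LinearMap.ext_ring ?_
  show g (Pi.single i 1) = h (Pi.single i 1)
  fin_cases i <;> assumption

/-- The element `ab = (123)(456) ∈ S₇ ⊂ W(E₇)` belongs to the Weyl group `W(E₇)`, and its
centralizer in `W(E₇)` is isomorphic to `((C₃ × C₃) ⋊ C₂) × S₃ × C₂`, where the nontrivial
element of `C₂` acts on `C₃ × C₃` by exchanging the two factors; in particular this
centralizer has order 216. -/
theorem centralizer_of_order_three_element_in_weylE7
    (σ : (Fin 8 → ℚ) ≃ₗ[ℚ] (Fin 8 → ℚ))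
    (h0 : σ (Pi.single (0 : Fin 8) (1 : ℚ)) = Pi.single 0 1)
    (h1 : σ (Pi.single (1 : Fin 8) (1 : ℚ)) = Pi.single 2 1)
    (h2 : σ (Pi.single (2 : Fin 8) (1 : ℚ)) = Pi.single 3 1)
    (h3 : σ (Pi.single (3 : Fin 8) (1 : ℚ)) = Pi.single 1 1)
    (h4 : σ (Pi.single (4 : Fin 8) (1 : ℚ)) = Pi.single 5 1)
    (h5 : σ (Pi.single (5 : Fin 8) (1 : ℚ)) = Pi.single 6 1)
    (h6 : σ (Pi.single (6 : Fin 8) (1 : ℚ)) = Pi.single 4 1)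
    (h7 : σ (Pi.single (7 : Fin 8) (1 : ℚ)) = Pi.single 7 1) :
    ∃ hσ : σ ∈ weylE7,
      Nonempty ((Subgroup.centralizer {(⟨σ, hσ⟩ : weylE7)} : Subgroup weylE7) ≃*
          ((C3 × C3) ⋊[swapHom] C2) × Equiv.Perm (Fin 3) × C2) ∧
      Nat.card (Subgroup.centralizer {(⟨σ, hσ⟩ : weylE7)} : Subgroup weylE7) = 216 := by
  have hσe : σ = realize (aU * bU) := eq_realize σ fun i => by
    have hp : ∀ i, permA (permB i) = ![0, 2, 3, 1, 5, 6, 4, 7] i := by decide +kernel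
    rw [hp]
    fin_cases i <;> assumption
  clear h0 h1 h2 h3 h4 h5 h6 h7
  have hmem : ∀ u ∈ weylU, realize u ∈ weylE7 := fun u hu =>
    weylE7_eq ▸ Subgroup.mem_map_of_mem realize hu
  have hσ : σ ∈ weylE7 := hσe ▸ hmem _ (mul_mem aU_mem bU_mem)
  refine ⟨hσ, ?_⟩
  subst hσe
  set C := Subgroup.centralizer {(⟨realize (aU * bU), hσ⟩ : weylE7)} with hC
  have hcomm : ∀ g : C, ∀ v, g.1.1 (realize (aU * bU) v) = realize (aU * bU) (g.1.1 v) := by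
    intro g v
    have := congrArg Subtype.val (Subgroup.mem_centralizer_singleton_iff.1 g.2)
    exact congrArg (fun f : (Fin 8 → ℚ) ≃ₗ[ℚ] (Fin 8 → ℚ) => f v) this
  choose F hF using fun g : C => exists_frame g.1.2 (hcomm g)
  let F' : C → frames.toFinset := fun g => ⟨F g, List.mem_toFinset.2 (hF g).1⟩
  have hF' : Function.Injective F' := by
    intro g h e
    have e' : F g = F h := congrArg Subtype.val e
    obtain ⟨-, g1, g4, g7⟩ := hF g
    obtain ⟨-, h1, h4, h7⟩ := hF h
    rw [← e'] at h1 h4 h7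
    exact Subtype.ext (Subtype.ext (eq_of_frame g.1.2 h.1.2 (hcomm g) (hcomm h)
      (g1.trans h1.symm) (g4.trans h4.symm) (g7.trans h7.symm)))
  have hfin : Finite C := Finite.of_injective F' hF'
  have hle : Nat.card C ≤ 216 := by
    refine (Nat.card_le_card_of_injective F' hF').trans ?_
    rw [Nat.card_eq_fintype_card, Fintype.card_coe, ← frames_length]
    exact List.toFinset_card_le _
  let f : TargetGroup →* C :=
    ((realize.comp mainHom).codRestrict weylE7 fun g => hmem _ (mainHom_mem g)).codRestrict C
      fun g => by
        rw [hC, Subgroup.mem_centralizer_singleton_iff]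
        apply Subtype.ext
        show realize (mainHom g) * realize (aU * bU) = realize (aU * bU) * realize (mainHom g)
        rw [← map_mul, ← map_mul, (mainHom_commute g).eq]
  have hf : Function.Injective f := by
    intro g h e
    exact mainHom_injective (realize_injective (congrArg (fun x : C => x.1.1) e))
  have hbij : Function.Bijective f := hf.bijective_of_nat_card_le (by rwa [card_target])
  let e : TargetGroup ≃* C := MulEquiv.ofBijective f hbij
  exact ⟨⟨e.symm⟩, by rw [← Nat.card_congr e.toEquiv, card_target]⟩
end

section
/- Assume in addition that A is not a square in k, that u, w are nonzero elements of k with 16Au² − 27 = Aw², and set B = 0 and C = u²/A². Then the field K_{A,B,C} is not k-rational (i.e., the del Pezzo surface X_{A,B,C} of degree 2 is not k-rational). -/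
/-!
Write `A = α²` and `f(s) = s³ - (9 / (4 A)) s² + C`. The relation between `u` and `w` says that the
discriminant of `f` is a nonzero square in `k`, so over the splitting field `L` of `f · (X² - A)` the
cubic has distinct roots `a, b, c`, and there is an involution `σ` of `L` over `k` with `σ α = -α`
fixing `a, b, c` (`exists_involution`). The equation of the surface can be rewritten as
`t² - A (x y - 3 s / (2 A))² = f(s)`, both for `s = x + y` and for `s = ω x + ω² y`.

If `K` were rational, `M = L(s₁, s₂)`, with `σ` acting on coefficients, would be generated over `L` by
the `σ`-invariant elements `x, y, t`. Then `f(x + y) = (x + y - a) (x + y - b) (x + y - c)` is a norm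
`z · σ z`, and unique factorization in `L[s₁, s₂]` shows that `x + y - a` is a constant times a norm
`h · σ h` (`sub_root_eq_unit_mul_norm`).

This is impossible (`no_norm_sub_root`). Use the other conic bundle structure, over the line with
coordinate `S = ω x + ω² y`. With `θ = t - α (x y - 3 S / (2 A))` and `D = ω x - ω² y` one has
`σ θ = f(S) / θ`, `σ D = D`, `M = L(S)(θ)(D)` and `θ D² = (2 / α) (θ² + g θ - f(S))` for some
`g ∈ L(S)`. Take norms from `M` to `L(S)(θ)`, and consider the sum of the valuations at `S = a` and
`S = b`, modulo 2, of the leading and trailing coefficients of polynomials in `θ`. The norm of `h` has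
even end parity, whereas `x + y - a` has norm `κ (θ - θ₀) (θ₀ θ + f) / θ`, the product of `θ - θ₀`
with its `σ`-conjugate up to factors in `L(S)` and powers of `θ`, and
`θ₀ = (3 / (2 α)) (S - a)` has odd parity. Since the end parity of a polynomial in `θ` is determined
by its norm for `σ` (`endParity_eq_of_norm_eq`), this is a contradiction (`no_norm_representation`).
-/

/-- A field extension `K` of `k` (of transcendence degree 2) is *k-rational* if it is
isomorphic as a `k`-algebra to the field of rational functions in two variables over `k`. -/
def IsKRational (k : Type*) (K : Type*) [Field k] [Field K] [Algebra k K] : Prop :=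
  Nonempty (K ≃ₐ[k] FractionRing (MvPolynomial (Fin 2) k))

section NonRationality
open Polynomial
universe v

/-! ### Norms in unique factorization domains -/

/-- If `G · G'` is a norm `q · σ q` up to units and up to the norm `p · σ p`, where `G` is `σ`-invariant up
to units and coprime to `G'`, then `G` is itself associated to a norm. A prime `π ∣ G` with `σ π` not
associated to `π` is split off together with `σ π`; if `σ π` is associated to `π`, then `π` occurs in
`G` with even multiplicity, so `π · σ π` still divides `G`. -/
theorem assoc_norm_of_coprime {R : Type*} [CommRing R] [IsDomain R]
    [UniqueFactorizationMonoid R] (σ : R →+* R) (hσ : ∀ r, σ (σ r) = r)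
    (G : R) : ∀ (G' p q : R), G ≠ 0 → G' ≠ 0 → p ≠ 0 → q ≠ 0 →
      (∀ π, Prime π → π ∣ G → ¬ π ∣ G') → Associated (σ G) G →
      Associated (G * G' * (p * σ p)) (q * σ q) → ∃ h, Associated G (h * σ h) := by
  have hinj : Function.Injective σ := fun a b h => by rw [← hσ a, h, hσ]
  have hdvd : ∀ {a b : R}, a ∣ b → σ a ∣ σ b := fun h => map_dvd σ h
  let e : R ≃+* R := RingEquiv.ofRingHom σ σ (by ext; simp [hσ]) (by ext; simp [hσ])
  have hprime : ∀ {a : R}, Prime a → Prime (σ a) := fun {a} h =>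
    (MulEquiv.prime_iff (e : R ≃* R)).2 h
  induction G using (wellFounded_dvdNotUnit (α := R)).induction with | _ G ih
  intro G' p q hG hG' hp hq hcop hσG hrel
  by_cases hu : IsUnit G
  · exact ⟨1, by simpa using associated_one_iff_isUnit.2 hu⟩
  obtain ⟨π, hπi, hπG⟩ := WfDvdMonoid.exists_irreducible_factor hu hG
  have hπ : Prime π := hπi.prime
  have hσπG : σ π ∣ G := (hdvd hπG).trans hσG.dvd
  have hN : π * σ π ∣ G := by
    by_cases hass : Associated π (σ π)
    · -- the multiplicity of `π` in `G` is even
      have h0 : emultiplicity π G' = 0 := emultiplicity_eq_zero.2 (hcop π hπ hπG)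
      have hmσ : ∀ r, emultiplicity π (σ r) = emultiplicity π r := by
        have key : ∀ r n, π ^ n ∣ r → π ^ n ∣ σ r := fun r n h => by
          refine (pow_dvd_pow_of_dvd hass.dvd n).trans ?_
          rw [← map_pow]; exact hdvd h
        intro r
        refine emultiplicity_eq_emultiplicity_iff.2 fun n => ⟨fun h => ?_, key r n⟩
        rw [← hσ r]; exact key _ n h
      have h1 := emultiplicity_eq_of_associated_right (a := π) hrel
      rw [emultiplicity_mul hπ, emultiplicity_mul hπ, emultiplicity_mul hπ, emultiplicity_mul hπ,
        hmσ, hmσ, h0, add_zero] at h1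
      have fG := (FiniteMultiplicity.of_prime_left hπ hG).emultiplicity_eq_multiplicity
      have fp := (FiniteMultiplicity.of_prime_left hπ hp).emultiplicity_eq_multiplicity
      have fq := (FiniteMultiplicity.of_prime_left hπ hq).emultiplicity_eq_multiplicity
      rw [fG, fp, fq] at h1
      have h2 : multiplicity π G + (multiplicity π p + multiplicity π p)
        = multiplicity π q + multiplicity π q := by exact_mod_cast h1
      have h3 : multiplicity π G ≠ 0 := by
        intro h; exact (multiplicity_eq_zero.1 h) hπG
      have h4 : π ^ 2 ∣ G := pow_dvd_of_le_multiplicity (by omega)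
      refine (Associated.dvd ?_).trans h4
      rw [pow_two]
      exact (Associated.refl π).mul_mul hass.symm
    · obtain ⟨c, rfl⟩ := hπG
      rcases (hprime hπ).dvd_or_dvd hσπG with h | h
      · exact absurd ((hprime hπ).associated_of_dvd hπ h).symm hass
      · exact mul_dvd_mul_left π h
  obtain ⟨G1, rfl⟩ := hN
  have hG1 : G1 ≠ 0 := right_ne_zero_of_mul hG
  have hN0 : π * σ π ≠ 0 := left_ne_zero_of_mul hG
  obtain ⟨h, hh⟩ := ih G1 ⟨hG1, π * σ π, fun h => hπ.not_isUnit (isUnit_of_mul_isUnit_left h), mul_comm _ _⟩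
    G' (π * p) q hG1 hG' (mul_ne_zero hπ.ne_zero hp) hq
    (fun ρ hρ h => hcop ρ hρ (h.mul_left _))
    (by
      rw [map_mul, map_mul, hσ, mul_comm (σ π) π] at hσG
      exact Associated.of_mul_left hσG (Associated.refl _) hN0)
    (by
      convert hrel using 1
      rw [map_mul]; ring)
  refine ⟨π * h, ?_⟩
  rw [map_mul]
  rw [show π * h * (σ π * σ h) = π * σ π * (h * σ h) by ring]
  exact (Associated.refl _).mul_mul hh

/-- If `(s - a) (s - b) (s - c)` is a norm for an invariant `s` in the fraction field of the unique
factorization domain `R`, then so is `s - a` up to a unit of `R`. With `s = n / d` in lowest terms,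
`d (n - a d)` is coprime to `(n - b d) (n - c d)` because the roots differ by units. -/
theorem sub_root_eq_unit_mul_norm {R M : Type*} [CommRing R] [IsDomain R]
    [UniqueFactorizationMonoid R] [Field M] [Algebra R M] [IsFractionRing R M]
    (σ : R →+* R) (hσ : ∀ r, σ (σ r) = r) (σM : M →+* M)
    (hσM : ∀ r, σM (algebraMap R M r) = algebraMap R M (σ r))
    {a b c : R} (ha : σ a = a)
    (hab : IsUnit (a - b)) (hac : IsUnit (a - c)) {s z : M} (hs : σM s = s)
    (hz : z * σM z = (s - algebraMap R M a) * (s - algebraMap R M b) * (s - algebraMap R M c))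
    (hz0 : z ≠ 0) :
    ∃ (v : Rˣ) (h : M), algebraMap R M v * h * σM h = s - algebraMap R M a := by
  have hinj : Function.Injective (algebraMap R M) := IsFractionRing.injective R M
  have hσinj : Function.Injective σ := fun r r' h => by rw [← hσ r, h, hσ]
  have hσ0 : ∀ {r}, r ≠ 0 → σ r ≠ 0 := fun h h' => h (hσinj (by rw [h', map_zero]))
  have hm0 : ∀ {r}, r ≠ 0 → algebraMap R M r ≠ 0 := fun h h' => h (hinj (by rw [h', map_zero]))
  obtain ⟨n, ⟨d, hd⟩, hrel, hmk⟩ := IsFractionRing.exists_reduced_fraction (A := R) s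
  obtain ⟨z1, ⟨z2, hz2⟩, -, hzmk⟩ := IsFractionRing.exists_reduced_fraction (A := R) z
  rw [IsFractionRing.mk'_eq_div] at hmk hzmk
  simp only at hmk hzmk hrel
  have hd0 : d ≠ 0 := nonZeroDivisors.ne_zero hd
  have hz20 : z2 ≠ 0 := nonZeroDivisors.ne_zero hz2
  have hz10 : z1 ≠ 0 := by rintro rfl; simp at hzmk; exact hz0 hzmk.symm
  have hcross : σ n * d = n * σ d := by
    apply hinj
    have h1 := hs
    rw [← hmk, map_div₀, hσM, hσM, div_eq_div_iff (hm0 (hσ0 hd0)) (hm0 hd0)] at h1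
    simpa using h1
  have hdσ : d ∣ σ d := hrel.symm.dvd_of_dvd_mul_left (Dvd.intro_left _ hcross)
  obtain ⟨v, hv⟩ := hdσ
  have hn : σ n = n * v := by
    apply mul_right_cancel₀ hd0
    rw [hcross, hv]; ring
  have hvu : IsUnit v := by
    have h1 : σ (σ d) = d * (v * σ v) := by rw [hv, map_mul, hv]; ring
    rw [hσ] at h1
    exact IsUnit.of_mul_eq_one (σ v) (mul_left_cancel₀ hd0 (by rw [← h1, mul_one]))
  have hM : ∀ r : R, s - algebraMap R M r = algebraMap R M (n - r * d) / algebraMap R M d := by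
    intro r
    rw [← hmk, map_sub, map_mul]
    field_simp [hm0 hd0]
  have key : d * (n - a * d) * ((n - b * d) * (n - c * d)) * (z2 * σ z2)
      = d ^ 4 * (z1 * σ z1) := by
    apply hinj
    rw [hM a, hM b, hM c, ← hzmk, map_div₀, hσM, hσM] at hz
    have e1 := hm0 hd0
    have e2 := hm0 hz20
    have e3 := hm0 (hσ0 hz20)
    field_simp at hz
    simp only [map_mul, map_pow]
    linear_combination -(algebraMap R M d) * hz
  have hR0 : d ^ 4 * (z1 * σ z1) ≠ 0 := by
    have := hσ0 hz10
    positivity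
  have hG0 : d * (n - a * d) ≠ 0 := fun h => hR0 (by rw [← key, h]; ring)
  have hG'0 : (n - b * d) * (n - c * d) ≠ 0 := fun h => hR0 (by rw [← key, h]; ring)
  have hnd : ∀ π, Prime π → π ∣ d → ¬ π ∣ n := fun π hπ h1 h2 => hπ.not_isUnit (hrel h2 h1)
  have hcop : ∀ π, Prime π → π ∣ d * (n - a * d) → ¬ π ∣ (n - b * d) * (n - c * d) := by
    have aux : ∀ π r, Prime π → IsUnit (a - r) → π ∣ d * (n - a * d) → ¬ π ∣ n - r * d := by
      intro π r hπ hu h1 h2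
      have hπd : π ∣ d := by
        rcases hπ.dvd_or_dvd h1 with h1 | h1
        · exact h1
        · have : π ∣ (a - r) * d := by
            have := dvd_sub h2 h1
            rwa [show n - r * d - (n - a * d) = (a - r) * d by ring] at this
          exact (hπ.dvd_or_dvd this).resolve_left fun h => hπ.not_isUnit (isUnit_of_dvd_unit h hu)
      refine hnd π hπ hπd ?_
      have := dvd_add h2 (hπd.mul_left r)
      rwa [sub_add_cancel] at this
    intro π hπ h1 h2
    rcases hπ.dvd_or_dvd h2 with h2 | h2
    · exact aux π b hπ hab h1 h2
    · exact aux π c hπ hac h1 h2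
  have hσG : Associated (σ (d * (n - a * d))) (d * (n - a * d)) := by
    have : σ (d * (n - a * d)) = d * (n - a * d) * (v * v) := by
      rw [map_mul, map_sub, map_mul, ha, hv, hn]; ring
    rw [this]
    exact (associated_mul_unit_left _ _ (hvu.mul hvu))
  obtain ⟨h, w, hw⟩ := assoc_norm_of_coprime σ hσ _ _ z2 (d ^ 2 * z1) hG0 hG'0 hz20
    (mul_ne_zero (pow_ne_zero _ hd0) hz10) hcop hσG (by
      rw [key, map_mul, map_pow, hv]
      have : d ^ 2 * z1 * ((d * v) ^ 2 * σ z1) = d ^ 4 * (z1 * σ z1) * (v ^ 2) := by ring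
      rw [this]
      exact (associated_mul_unit_right _ _ (hvu.pow 2)))
  obtain ⟨v, rfl⟩ := hvu
  refine ⟨w⁻¹ * v, algebraMap R M h / algebraMap R M d, ?_⟩
  have e1 := hm0 hd0
  have e2 : algebraMap R M (v : R) ≠ 0 := hm0 v.ne_zero
  have hw' : h * σ h * (↑(w⁻¹) : R) = d * (n - a * d) := by
    rw [← hw, mul_assoc, Units.mul_inv, mul_one]
  rw [hM a, map_div₀, hσM, hσM, hv]
  have hwM := congrArg (algebraMap R M) hw'
  simp only [map_mul] at hwM
  simp only [map_mul, Units.val_mul]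
  field_simp
  linear_combination hwM

/-! ### Twisted reversal and the parity of end coefficients -/

section TwistedReverse
variable {F : Type*} [Field F]

/-- The twisted reversal `p(θ) ↦ θ ^ deg p · p^σ(f / θ)`, where `p^σ` has the coefficients of `p` moved
by `σ`. It clears denominators in the semilinear substitution `θ ↦ f / θ`, see `aeval_twistRev`. -/
noncomputable def twistRev (σ : F →+* F) (f : F) (p : F[X]) : F[X] :=
  ((p.map σ).comp (C f * X)).reverse

/-- The sum of the parities `χ` of the trailing and of the leading coefficient of `p`; here `χ` plays
the role of a discrete valuation modulo 2 on `F`. -/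
noncomputable def endParity (χ : F → ZMod 2) (p : F[X]) : ZMod 2 :=
  χ p.trailingCoeff + χ p.leadingCoeff

variable {σ : F →+* F} {f : F} {χ : F → ZMod 2}

theorem twistRev_mul (p q : F[X]) :
    twistRev σ f (p * q) = twistRev σ f p * twistRev σ f q := by
  simp [twistRev, reverse_mul_of_domain]

theorem twistRev_C (c : F) : twistRev σ f (C c) = C (σ c) := by
  simp [twistRev]

theorem twistRev_X : twistRev σ f X = C f := by
  have h : (X : F[X]).reverse = 1 := by
    have := reverse_mul_X (C (1 : F))
    rwa [reverse_C, C_1, one_mul] at this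
  simp [twistRev, reverse_mul_of_domain, h]

theorem twistRev_X_pow (j : ℕ) : twistRev σ f (X ^ j) = C (f ^ j) := by
  induction j with
  | zero => simpa using twistRev_C (σ := σ) (f := f) 1
  | succ j ih => rw [pow_succ, twistRev_mul, ih, twistRev_X, pow_succ, C_mul]

theorem comp_scale_ne_zero (hf : f ≠ 0) {p : F[X]} (hp : p ≠ 0) :
    (p.map σ).comp (C f * X) ≠ 0 := by
  intro h
  apply hp
  ext n
  have := congrArg (fun r => r.coeff n) h
  simpa [hf] using this

theorem twistRev_ne_zero (hf : f ≠ 0) {p : F[X]} (hp : p ≠ 0) : twistRev σ f p ≠ 0 := by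
  simpa [twistRev] using comp_scale_ne_zero hf hp

theorem natDegree_comp_scale (hf : f ≠ 0) (p : F[X]) :
    ((p.map σ).comp (C f * X)).natDegree = p.natDegree := by
  rw [natDegree_comp, natDegree_C_mul_X _ hf, mul_one, natDegree_map]

theorem natTrailingDegree_comp_scale (hf : f ≠ 0) (p : F[X]) :
    ((p.map σ).comp (C f * X)).natTrailingDegree = p.natTrailingDegree := by
  have : ((p.map σ).comp (C f * X)).support = p.support := by
    ext n; simp [hf]
  simp only [natTrailingDegree, trailingDegree, this]

/-- The twisted reversal is an involution up to nonzero constants and the power of `X` dividing `p`. -/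
theorem twistRev_twistRev (hσ : ∀ z, σ (σ z) = z) (hf : f ≠ 0) (hσf : σ f = f)
    (p : F[X]) (hp : p ≠ 0) :
    ∃ κ ≠ 0, ∃ j, C κ * p = X ^ j * twistRev σ f (twistRev σ f p) := by
  obtain ⟨p0, hp0, hX⟩ := exists_eq_pow_rootMultiplicity_mul_and_not_dvd p hp 0
  set j := rootMultiplicity 0 p
  rw [C_0, sub_zero] at hp0 hX
  have hc : p0.coeff 0 ≠ 0 := fun h => hX (X_dvd_iff.2 h)
  have hp00 : p0 ≠ 0 := by rintro rfl; simp at hX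
  have hd : (twistRev σ f p0).natDegree = p0.natDegree := by
    rw [twistRev, reverse_natDegree, natDegree_comp_scale hf, natTrailingDegree_comp_scale hf,
      natTrailingDegree_eq_zero.2 (Or.inr hc), Nat.sub_zero]
  have key : twistRev σ f (twistRev σ f p0) = C (f ^ p0.natDegree) * p0 := by
    ext n
    rw [twistRev, coeff_reverse, natDegree_comp_scale hf, hd]
    simp only [comp_C_mul_X_coeff, coeff_map, coeff_C_mul]
    rw [twistRev, coeff_reverse, natDegree_comp_scale hf, revAt_invol]
    simp only [comp_C_mul_X_coeff, coeff_map, map_mul, map_pow, hσ, hσf]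
    rcases le_or_gt n p0.natDegree with h | h
    · rw [revAt_le h, mul_assoc, ← pow_add, Nat.add_sub_cancel' h, mul_comm]
    · rw [coeff_eq_zero_of_natDegree_lt h]; simp
  refine ⟨f ^ j * f ^ p0.natDegree, by positivity, j, ?_⟩
  rw [hp0, twistRev_mul, twistRev_X_pow, twistRev_mul, twistRev_C, key, map_pow, hσf, C_mul]
  ring

theorem endParity_mul (hχ : ∀ z w, z ≠ 0 → w ≠ 0 → χ (z * w) = χ z + χ w)
    {p q : F[X]} (hp : p ≠ 0) (hq : q ≠ 0) :
    endParity χ (p * q) = endParity χ p + endParity χ q := by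
  rw [endParity, trailingCoeff_mul, leadingCoeff_mul, hχ _ _ (by simpa) (by simpa),
    hχ _ _ (by simpa) (by simpa), endParity, endParity]
  ring

theorem endParity_C (c : F) : endParity χ (C c) = 0 := by
  have : (C c).trailingCoeff = c := by simp [trailingCoeff]
  rw [endParity, this, leadingCoeff_C, CharTwo.add_self_eq_zero]

theorem endParity_X : endParity χ X = 0 := by
  have : (X : F[X]).trailingCoeff = 1 := by simp [trailingCoeff]
  rw [endParity, this, leadingCoeff_X, CharTwo.add_self_eq_zero]

theorem parity_pow (hχ : ∀ z w, z ≠ 0 → w ≠ 0 → χ (z * w) = χ z + χ w) {z : F} (hz : z ≠ 0)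
    (hχz : χ z = 0) (n : ℕ) : χ (z ^ n) = 0 := by
  induction n with
  | zero =>
    have := hχ 1 1 one_ne_zero one_ne_zero
    simpa using this
  | succ n ih => rw [pow_succ, hχ _ _ (pow_ne_zero _ hz) hz, ih, hχz, add_zero]

theorem endParity_twistRev (hχ : ∀ z w, z ≠ 0 → w ≠ 0 → χ (z * w) = χ z + χ w)
    (hχσ : ∀ z, χ (σ z) = χ z) (hf : f ≠ 0) (hχf : χ f = 0) {p : F[X]} (hp : p ≠ 0) :
    endParity χ (twistRev σ f p) = endParity χ p := by
  have h1 : ((p.map σ).comp (C f * X)).leadingCoeff = σ p.leadingCoeff * f ^ p.natDegree := by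
    rw [leadingCoeff, natDegree_comp_scale hf]; simp
  have h2 : ((p.map σ).comp (C f * X)).trailingCoeff
      = σ p.trailingCoeff * f ^ p.natTrailingDegree := by
    rw [trailingCoeff, natTrailingDegree_comp_scale hf]; simp [trailingCoeff]
  rw [endParity, twistRev, reverse_trailingCoeff, reverse_leadingCoeff, h1, h2,
    hχ _ _ (by simpa) (pow_ne_zero _ hf), hχ _ _ (by simpa) (pow_ne_zero _ hf),
    parity_pow hχ hf hχf, parity_pow hχ hf hχf, hχσ, hχσ, endParity]
  ring

/-- The end parity of `p` is determined, up to constants and powers of `X`, by the norm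
`p · twistRev p`: an irreducible factor `P` of `p` is matched in `q` by `P` or by `twistRev P`, and
these two have the same end parity. -/
theorem endParity_eq_of_norm_eq (hσ : ∀ z, σ (σ z) = z)
    (hχ : ∀ z w, z ≠ 0 → w ≠ 0 → χ (z * w) = χ z + χ w)
    (hχσ : ∀ z, χ (σ z) = χ z) (hf : f ≠ 0) (hσf : σ f = f) (hχf : χ f = 0) (N : ℕ) :
    ∀ (p q : F[X]) (κ : F) (i j : ℕ), p.natDegree + q.natDegree = N → p ≠ 0 → q ≠ 0 → κ ≠ 0 →
      X ^ i * (p * twistRev σ f p) = C κ * X ^ j * (q * twistRev σ f q) →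
      endParity χ p = endParity χ q := by
  induction N using Nat.strong_induction_on with
  | _ N ih =>
  intro p q κ i j hN hp hq hκ hrel
  by_cases hXp : X ∣ p
  · obtain ⟨p, rfl⟩ := hXp
    have hp' : p ≠ 0 := right_ne_zero_of_mul hp
    rw [endParity_mul hχ X_ne_zero hp', endParity_X, zero_add]
    rw [natDegree_X_mul hp'] at hN
    refine ih _ (by omega) p q (f⁻¹ * κ) (i + 1) j rfl hp' hq (by positivity) ?_
    rw [twistRev_mul, twistRev_X] at hrel
    have hff : C f⁻¹ * C f = 1 := by rw [← C_mul, inv_mul_cancel₀ hf, C_1]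
    linear_combination (C f⁻¹) * hrel - (X * X ^ i * p * twistRev σ f p) * hff + (C_mul (a := f⁻¹) (b := κ)) * (-(X ^ j * (q * twistRev σ f q)))
  by_cases hXq : X ∣ q
  · obtain ⟨q, rfl⟩ := hXq
    have hq' : q ≠ 0 := right_ne_zero_of_mul hq
    rw [endParity_mul hχ X_ne_zero hq', endParity_X, zero_add]
    rw [natDegree_X_mul hq'] at hN
    refine ih _ (by omega) p q (f * κ) i (j + 1) rfl hp hq' (by positivity) ?_
    rw [twistRev_mul, twistRev_X] at hrel
    rw [hrel, C_mul]
    ring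
  have hCκ : IsUnit (C κ) := isUnit_C.2 (isUnit_iff_ne_zero.2 hκ)
  have hnotX : ∀ {P r : F[X]}, Irreducible P → P ∣ r → ¬ X ∣ r → ∀ n, ¬ P ∣ X ^ n := by
    intro P r hP hPr hr n h
    have h1 : P ∣ X := hP.prime.dvd_of_dvd_pow h
    exact hr ((hP.associated_of_dvd irreducible_X h1).dvd'.trans hPr)
  by_cases hpu : IsUnit p
  · by_cases hqu : IsUnit q
    · obtain ⟨c, -, rfl⟩ := Polynomial.isUnit_iff.1 hpu
      obtain ⟨d, -, rfl⟩ := Polynomial.isUnit_iff.1 hqu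
      rw [endParity_C, endParity_C]
    · obtain ⟨Q, hQ, hQq⟩ := WfDvdMonoid.exists_irreducible_factor hqu hq
      obtain ⟨c, hc, rfl⟩ := Polynomial.isUnit_iff.1 hpu
      exfalso
      refine hnotX hQ hQq hXq i ?_
      have h1 : Q ∣ X ^ i * (C c * twistRev σ f (C c)) := by
        rw [hrel]; exact (hQq.mul_right _).mul_left _
      have h2 : IsUnit (C c * twistRev σ f (C c)) := by
        rw [twistRev_C, ← C_mul, isUnit_C]
        exact hc.mul (hc.map σ)
      exact h2.dvd_mul_right.1 h1
  obtain ⟨P, hP, hPp⟩ := WfDvdMonoid.exists_irreducible_factor hpu hp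
  have hPX := hnotX hP hPp hXp
  have hPX0 : ¬ X ∣ P := fun h => hXp (h.trans hPp)
  have hPd : 0 < P.natDegree := hP.natDegree_pos
  obtain ⟨p, rfl⟩ := hPp
  have hp' : p ≠ 0 := right_ne_zero_of_mul hp
  have hPs : twistRev σ f P ≠ 0 := twistRev_ne_zero hf hP.ne_zero
  have hPd' : (twistRev σ f P).natDegree = P.natDegree := by
    rw [twistRev, reverse_natDegree, natDegree_comp_scale hf, natTrailingDegree_comp_scale hf,
      natTrailingDegree_eq_zero.2 (Or.inr fun h => hPX0 (X_dvd_iff.2 h)), Nat.sub_zero]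
  have hdvd : P ∣ q * twistRev σ f q := by
    have h1 : P ∣ C κ * X ^ j * (q * twistRev σ f q) := by
      rw [← hrel]; exact ((dvd_mul_right _ _).mul_right _).mul_left _
    rcases hP.prime.dvd_or_dvd h1 with h | h
    · exact absurd (hCκ.dvd_mul_left.1 h) (hPX j)
    · exact h
  obtain ⟨κ', hκ', m, hss⟩ := twistRev_twistRev hσ hf hσf P hP.ne_zero
  rw [endParity_mul hχ hP.ne_zero hp']
  rw [natDegree_mul hP.ne_zero hp'] at hN
  rcases hP.prime.dvd_or_dvd hdvd with h | h
  · obtain ⟨q, rfl⟩ := h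
    have hq' : q ≠ 0 := right_ne_zero_of_mul hq
    rw [endParity_mul hχ hP.ne_zero hq']
    rw [natDegree_mul hP.ne_zero hq'] at hN
    rw [ih _ (by omega) p q κ i j rfl hp' hq' hκ ?_]
    rw [twistRev_mul, twistRev_mul] at hrel
    refine mul_left_cancel₀ (mul_ne_zero hP.ne_zero hPs) ?_
    linear_combination hrel
  · -- `P` divides the twisted reverse of `q`, hence its own twisted reverse divides `q`
    have h1 : twistRev σ f P ∣ q := by
      obtain ⟨r, hr⟩ := h
      obtain ⟨μ, hμ, n, hq2⟩ := twistRev_twistRev hσ hf hσf q hq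
      rw [hr, twistRev_mul] at hq2
      have : IsUnit (C μ) := isUnit_C.2 (isUnit_iff_ne_zero.2 hμ)
      rw [← this.dvd_mul_left, hq2]
      exact (dvd_mul_right _ _).mul_left _
    obtain ⟨q, rfl⟩ := h1
    have hq' : q ≠ 0 := right_ne_zero_of_mul hq
    rw [endParity_mul hχ hPs hq', endParity_twistRev hχ hχσ hf hχf hP.ne_zero]
    rw [natDegree_mul hPs hq', hPd'] at hN
    rw [ih _ (by omega) p q (κ * κ') (i + m) j rfl hp' hq' (by positivity) ?_]
    rw [twistRev_mul, twistRev_mul] at hrel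
    refine mul_left_cancel₀ (mul_ne_zero hP.ne_zero hPs) ?_
    rw [C_mul]
    linear_combination X ^ m * hrel - C κ * X ^ j * twistRev σ f P * q * twistRev σ f q * hss

theorem trailingCoeff_add_of_lt {r s : F[X]} (hr : r ≠ 0)
    (h : s = 0 ∨ r.natTrailingDegree < s.natTrailingDegree) :
    (r + s).trailingCoeff = r.trailingCoeff := by
  rcases h with rfl | h
  · rw [add_zero]
  have h0 : s.coeff r.natTrailingDegree = 0 := coeff_eq_zero_of_lt_natTrailingDegree h
  have hne : (r + s).coeff r.natTrailingDegree ≠ 0 := by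
    rw [coeff_add, h0, add_zero]
    exact trailingCoeff_nonzero_iff_nonzero.2 hr
  have hrs : r + s ≠ 0 := by
    intro h; rw [h] at hne; simp at hne
  have : (r + s).natTrailingDegree = r.natTrailingDegree := by
    refine le_antisymm (natTrailingDegree_le_of_ne_zero hne) (le_natTrailingDegree hrs ?_)
    intro m hm
    rw [coeff_add, coeff_eq_zero_of_lt_natTrailingDegree hm,
      coeff_eq_zero_of_lt_natTrailingDegree (hm.trans h), add_zero]
  rw [trailingCoeff, this, coeff_add, h0, add_zero, trailingCoeff]

theorem leadingCoeff_add_of_lt {r s : F[X]} (h : s = 0 ∨ s.natDegree < r.natDegree) :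
    (r + s).leadingCoeff = r.leadingCoeff := by
  rcases h with rfl | h
  · rw [add_zero]
  · rw [add_comm]; exact leadingCoeff_add_of_degree_lt (degree_lt_degree h)

/-- The quadratic polynomial `c (θ² + g θ - f)` in the variable `θ`. The conic bundle under
consideration has the equation `θ D² = c (θ² + g θ - f)`. -/
noncomputable def quadFactor (c g f : F) : F[X] := C c * (X ^ 2 + C g * X - C f)

theorem quadFactor_natDegree {c : F} (hc : c ≠ 0) (g f : F) :
    (quadFactor c g f).natDegree = 2 := by
  unfold quadFactor; compute_degree!

theorem quadFactor_leadingCoeff {c : F} (hc : c ≠ 0) (g f : F) :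
    (quadFactor c g f).leadingCoeff = c := by
  rw [leadingCoeff, quadFactor_natDegree hc]
  simp [quadFactor]

theorem quadFactor_coeff_zero (c g f : F) :
    (quadFactor c g f).coeff 0 = - (c * f) := by
  simp [quadFactor]

theorem quadFactor_ne_zero {c : F} (hc : c ≠ 0) (g f : F) : quadFactor c g f ≠ 0 := by
  intro h
  have := quadFactor_natDegree hc g f
  rw [h] at this; simp at this

theorem quadFactor_natTrailingDegree {c : F} (hc : c ≠ 0) (g : F) {f : F} (hf : f ≠ 0) :
    (quadFactor c g f).natTrailingDegree = 0 :=
  natTrailingDegree_eq_zero.2 (Or.inr (by rw [quadFactor_coeff_zero]; simp [hc, hf]))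

/-- `θ · quadFactor` is not a square, since the two sides have degrees of different parity. -/
theorem eq_zero_of_X_mul_sq_eq {c g f : F} (hc : c ≠ 0) {p₁ p₂ : F[X]}
    (h : X * p₁ ^ 2 = quadFactor c g f * p₂ ^ 2) : p₁ = 0 ∧ p₂ = 0 := by
  have hW := quadFactor_ne_zero hc g f
  by_cases h1 : p₁ = 0
  · subst h1
    refine ⟨rfl, ?_⟩
    have : quadFactor c g f * p₂ ^ 2 = 0 := by rw [← h]; simp
    simpa [hW] using this
  by_cases h2 : p₂ = 0
  · subst h2
    have : X * p₁ ^ 2 = 0 := by rw [h]; simp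
    exact absurd (by simpa using this) h1
  have := congrArg natDegree h
  rw [natDegree_X_mul (pow_ne_zero _ h1), natDegree_mul hW (pow_ne_zero _ h2), natDegree_pow,
    natDegree_pow, quadFactor_natDegree hc] at this
  omega

/-- The norm form of the conic bundle has even end parity: in `θ p₁² - c (θ² + g θ - f) p₂²` the
two terms never have the same degree, nor the same order at `θ = 0`, so the end coefficients are
squares times `1`, `-c` or `c f`, all of even parity. -/
theorem endParity_norm_form (hχ : ∀ z w, z ≠ 0 → w ≠ 0 → χ (z * w) = χ z + χ w)
    (hneg : χ (-1) = 0) (hf : f ≠ 0) (hχf : χ f = 0) {c : F} (g : F) (hc : c ≠ 0) (hχc : χ c = 0)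
    {p₁ p₂ : F[X]} (h : ¬ (p₁ = 0 ∧ p₂ = 0)) :
    endParity χ (X * p₁ ^ 2 - quadFactor c g f * p₂ ^ 2) = 0 := by
  have hW := quadFactor_ne_zero hc g f
  have hsq : ∀ z, z ≠ 0 → χ (z ^ 2) = 0 := fun z hz => by
    rw [pow_two, hχ _ _ hz hz, CharTwo.add_self_eq_zero]
  set r := X * p₁ ^ 2 with hr
  set s := -(quadFactor c g f * p₂ ^ 2) with hs
  rw [sub_eq_add_neg, ← hs]
  have r0 : p₁ ≠ 0 → r ≠ 0 := fun h => mul_ne_zero X_ne_zero (pow_ne_zero _ h)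
  have s0 : p₂ ≠ 0 → s ≠ 0 := fun h => neg_ne_zero.2 (mul_ne_zero hW (pow_ne_zero _ h))
  have rl : p₁ ≠ 0 → χ r.leadingCoeff = 0 := fun h => by
    rw [hr, leadingCoeff_mul, leadingCoeff_X, one_mul, leadingCoeff_pow]
    exact hsq _ (leadingCoeff_ne_zero.2 h)
  have rt : p₁ ≠ 0 → χ r.trailingCoeff = 0 := fun h => by
    have hX : (X : F[X]).trailingCoeff = 1 := by simp [trailingCoeff]
    rw [hr, pow_two, trailingCoeff_mul, trailingCoeff_mul, hX, one_mul, ← pow_two]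
    exact hsq _ (trailingCoeff_nonzero_iff_nonzero.2 h)
  have sl : p₂ ≠ 0 → χ s.leadingCoeff = 0 := fun h => by
    have h' := leadingCoeff_ne_zero.2 h
    rw [hs, leadingCoeff_neg, leadingCoeff_mul, quadFactor_leadingCoeff hc, leadingCoeff_pow,
      neg_eq_neg_one_mul, hχ _ _ (by simp) (by positivity), hneg, hχ _ _ hc (by positivity), hχc,
      hsq _ h']
    simp
  have st : p₂ ≠ 0 → χ s.trailingCoeff = 0 := fun h => by
    have h' := trailingCoeff_nonzero_iff_nonzero.2 h
    have hWt : (quadFactor c g f).trailingCoeff = -(c * f) := by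
      rw [trailingCoeff, quadFactor_natTrailingDegree hc g hf, quadFactor_coeff_zero]
    have : s.trailingCoeff = (c * f) * p₂.trailingCoeff ^ 2 := by
      have hm : (C (-1) : F[X]).trailingCoeff = -1 := by simp [trailingCoeff]
      have : s = C (-1) * (quadFactor c g f * (p₂ * p₂)) := by simp [hs, pow_two]
      rw [this, trailingCoeff_mul, trailingCoeff_mul, trailingCoeff_mul, hm, hWt]
      ring
    rw [this, hχ _ _ (by positivity) (by positivity), hχ _ _ hc hf, hχc, hχf, hsq _ h']
    simp
  have rd : p₁ ≠ 0 → r.natDegree = 2 * p₁.natDegree + 1 := fun h => by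
    rw [hr, natDegree_X_mul (pow_ne_zero _ h), natDegree_pow]
  have sd : p₂ ≠ 0 → s.natDegree = 2 * p₂.natDegree + 2 := fun h => by
    rw [hs, natDegree_neg, natDegree_mul hW (pow_ne_zero _ h), natDegree_pow,
      quadFactor_natDegree hc]; ring
  have rtd : p₁ ≠ 0 → r.natTrailingDegree = 2 * p₁.natTrailingDegree + 1 := fun h => by
    rw [hr, pow_two, natTrailingDegree_mul X_ne_zero (mul_ne_zero h h), natTrailingDegree_mul h h,
      natTrailingDegree_X]; ring
  have std : p₂ ≠ 0 → s.natTrailingDegree = 2 * p₂.natTrailingDegree := fun h => by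
    rw [hs, natTrailingDegree_neg, pow_two, natTrailingDegree_mul hW (mul_ne_zero h h),
      natTrailingDegree_mul h h, quadFactor_natTrailingDegree hc g hf]; ring
  rw [endParity]
  by_cases h1 : p₁ = 0
  · have hr' : r = 0 := by simp [hr, h1]
    have h2 : p₂ ≠ 0 := fun h2 => h ⟨h1, h2⟩
    rw [hr', zero_add, st h2, sl h2, add_zero]
  by_cases h2 : p₂ = 0
  · have hs' : s = 0 := by simp [hs, h2]
    rw [hs', add_zero, rt h1, rl h1, add_zero]
  have hl : χ (r + s).leadingCoeff = 0 := by
    have e1 := rd h1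
    have e2 := sd h2
    rcases lt_or_ge s.natDegree r.natDegree with h | h
    · rw [leadingCoeff_add_of_lt (Or.inr h), rl h1]
    · rw [add_comm, leadingCoeff_add_of_lt (Or.inr (by omega)), sl h2]
  have htr : χ (r + s).trailingCoeff = 0 := by
    have e1 := rtd h1
    have e2 := std h2
    rcases lt_or_ge r.natTrailingDegree s.natTrailingDegree with h | h
    · rw [trailingCoeff_add_of_lt (r0 h1) (Or.inr h), rt h1]
    · rw [add_comm, trailingCoeff_add_of_lt (s0 h2) (Or.inr (by omega)), st h2]
  rw [hl, htr, add_zero]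

/-- If the semilinear map `σM` sends `θ` to `f / θ`, then `twistRev p` evaluated at `θ` is
`σM (p(θ))` with the denominator `θ ^ deg p` cleared. -/
theorem aeval_twistRev {M : Type*} [Field M] [Algebra F M] (hf : f ≠ 0) {σM : M →+* M}
    (hσM : ∀ z, σM (algebraMap F M z) = algebraMap F M (σ z)) {θ : M} (hθ : θ ≠ 0)
    (hσθ : σM θ = algebraMap F M f / θ) (p : F[X]) :
    aeval θ (twistRev σ f p) = θ ^ p.natDegree * σM (aeval θ p) := by
  let _ : Invertible θ⁻¹ := invertibleOfNonzero (inv_ne_zero hθ)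
  have h := eval₂_reverse_mul_pow (algebraMap F M) θ⁻¹ ((p.map σ).comp (C f * X))
  have h2 : σM (aeval θ p) = eval₂ (algebraMap F M) θ⁻¹ ((p.map σ).comp (C f * X)) := by
    rw [eval₂_comp, eval₂_map, aeval_def, hom_eval₂, hσθ]
    have : σM.comp (algebraMap F M) = (algebraMap F M).comp σ := by ext z; simp [hσM]
    rw [this]
    simp [div_eq_mul_inv]
  rw [h2, ← h, natDegree_comp_scale hf, aeval_def, twistRev]
  have : ⅟(θ⁻¹) = θ := by rw [invOf_eq_inv, inv_inv]
  rw [this, mul_left_comm, ← mul_pow, mul_inv_cancel₀ hθ, one_pow, mul_one]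

/-- The obstruction on the conic bundle `M = F(θ)(D)`, `θ D² = c (θ² + g θ - f)`, with the semilinear
involution `σM` given by `θ ↦ f / θ` and `D ↦ D`. An element `c₁ + c₂ D` with norm
`κ (θ - θ₀) (θ₀ θ + f) / θ`, where `θ₀` has odd parity, is not of the form `u · h · σM h`. Indeed
`(θ - θ₀) (θ₀ θ + f)` is `θ - θ₀` times its twisted reversal, and `θ - θ₀` has odd end parity,
whereas the norm of `h` to `F(θ)` has even end parity. -/
theorem no_norm_representation {M : Type*} [Field M] [Algebra F M]
    (hσ : ∀ z, σ (σ z) = z)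
    (hχ : ∀ z w, z ≠ 0 → w ≠ 0 → χ (z * w) = χ z + χ w)
    (hχσ : ∀ z, χ (σ z) = χ z) (hneg : χ (-1) = 0)
    (hf : f ≠ 0) (hσf : σ f = f) (hχf : χ f = 0)
    (c g : F) (hc : c ≠ 0) (hχc : χ c = 0)
    (σM : M →+* M) (hσM : ∀ z, σM (algebraMap F M z) = algebraMap F M (σ z))
    (θ D : M) (hθ : Transcendental F θ) (hσθ : σM θ = algebraMap F M f / θ) (hσD : σM D = D)
    (hD : θ * D ^ 2 = aeval θ (quadFactor c g f))
    (hspan : ∀ z : M, ∃ p₁ p₂ q : F[X], q ≠ 0 ∧ aeval θ q * z = aeval θ p₁ + aeval θ p₂ * D)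
    (θ₀ c₁ c₂ κ u : F) (hθ₀ : θ₀ ≠ 0) (hσθ₀ : σ θ₀ = -θ₀) (hχθ₀ : χ θ₀ = 1) (hκ : κ ≠ 0)
    (hu : u ≠ 0)
    (hnorm : X * C c₁ ^ 2 - quadFactor c g f * C c₂ ^ 2
      = C κ * (X - C θ₀) * (C θ₀ * X + C f))
    (h : M) (hh : algebraMap F M u * h * σM h = algebraMap F M c₁ + algebraMap F M c₂ * D) :
    False := by
  have hinj : Function.Injective (aeval θ : F[X] →ₐ[F] M) := transcendental_iff_injective.1 hθ
  have hθ0 : θ ≠ 0 := by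
    rintro rfl; exact hθ isAlgebraic_zero
  set W := quadFactor c g f with hWdef
  have huniq : ∀ p₁ p₂ : F[X], aeval θ p₁ + aeval θ p₂ * D = 0 → p₁ = 0 ∧ p₂ = 0 := by
    intro p₁ p₂ h0
    refine eq_zero_of_X_mul_sq_eq (g := g) (f := f) hc (hinj ?_)
    rw [← hWdef]
    simp only [map_mul, map_pow, aeval_X, ← hD]
    linear_combination θ * (aeval θ p₁ - aeval θ p₂ * D) * h0
  obtain ⟨p₁, p₂, q, hq, hqh⟩ := hspan h
  have hstar := fun p => aeval_twistRev hf hσM hθ0 hσθ p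
  have hlift : ∃ N, ∃ p₁' p₂' q' : F[X], aeval θ p₁' = θ ^ N * σM (aeval θ p₁) ∧
      aeval θ p₂' = θ ^ N * σM (aeval θ p₂) ∧ aeval θ q' = θ ^ N * σM (aeval θ q) := by
    refine ⟨p₁.natDegree + p₂.natDegree + q.natDegree,
      X ^ (p₂.natDegree + q.natDegree) * twistRev σ f p₁,
      X ^ (p₁.natDegree + q.natDegree) * twistRev σ f p₂,
      X ^ (p₁.natDegree + p₂.natDegree) * twistRev σ f q, ?_, ?_, ?_⟩ <;>
    · rw [map_mul, map_pow, aeval_X, hstar]; ring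
  obtain ⟨N, p₁', p₂', q', h1, h2, h3⟩ := hlift
  have hqh' : aeval θ q' * σM h = aeval θ p₁' + aeval θ p₂' * D := by
    have := congrArg σM hqh
    rw [map_mul, map_add, map_mul, hσD] at this
    rw [h1, h2, h3]
    linear_combination θ ^ N * this
  have hC : ∀ z : F, aeval θ (C z) = algebraMap F M z := fun z => aeval_C θ z
  obtain ⟨e1, e2⟩ := huniq
    (X * q * q' * C c₁ - C u * (X * p₁ * p₁' + W * p₂ * p₂'))
    (X * q * q' * C c₂ - C u * X * (p₁ * p₂' + p₂ * p₁')) (by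
      simp only [map_mul, map_sub, map_add, aeval_X, hC, ← hD]
      linear_combination -θ * aeval θ q * aeval θ q' * hh
        + θ * algebraMap F M u * (aeval θ q' * σM h) * hqh
        + θ * algebraMap F M u * (aeval θ p₁ + aeval θ p₂ * D) * hqh')
  have e2' : q * q' * C c₂ - C u * (p₁ * p₂' + p₂ * p₁') = 0 := by
    refine mul_left_cancel₀ (X_ne_zero (R := F)) ?_
    rw [mul_zero, ← e2]; ring
  set p := X * p₁ ^ 2 - W * p₂ ^ 2 with hp
  have hmain : C u ^ 2 * (p * (X * p₁' ^ 2 - W * p₂' ^ 2))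
      = X * (q * q') ^ 2 * (C κ * (X - C θ₀) * (C θ₀ * X + C f)) := by
    rw [← hnorm]
    linear_combination (-(X * q * q' * C c₁) - C u * (X * p₁ * p₁' + W * p₂ * p₂')) * e1
      + X * W * (q * q' * C c₂ + C u * (p₁ * p₂' + p₂ * p₁')) * e2'
  have hQ : twistRev σ f (X - C θ₀) = C θ₀ * X + C f := by
    apply hinj
    rw [hstar]
    simp only [natDegree_X_sub_C, map_sub, map_add, map_mul, aeval_X, hC, hσθ, hσM, hσθ₀, map_neg]
    field_simp
    ring
  have hpstar : X ^ (2 * N + 2) * twistRev σ f p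
      = C f * X ^ p.natDegree * (X * p₁' ^ 2 - W * p₂' ^ 2) := by
    apply hinj
    have : aeval θ p = θ * (aeval θ p₁ ^ 2 - D ^ 2 * aeval θ p₂ ^ 2) := by
      simp only [hp, map_mul, map_sub, map_pow, aeval_X, ← hD]; ring
    simp only [map_mul, map_sub, map_pow, aeval_X, hC, ← hD]
    rw [hstar, this, h1, h2]
    simp only [map_mul, map_sub, map_pow, hσD, hσθ]
    field_simp
    ring
  have hqstar : X ^ N * twistRev σ f q = X ^ q.natDegree * q' := by
    apply hinj
    simp only [map_mul, map_pow, aeval_X]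
    rw [hstar, h3]; ring
  have hne : ¬ (p₁ = 0 ∧ p₂ = 0) := by
    rintro ⟨rfl, rfl⟩
    have hq' : aeval θ q ≠ 0 := fun h0 => hq (hinj (by simpa using h0))
    have hh0 : h = 0 := by simpa [hq'] using hqh
    have hz : aeval θ (C c₁) + aeval θ (C c₂) * D = 0 := by
      rw [hC, hC, ← hh, hh0]; simp
    obtain ⟨z1, z2⟩ := huniq _ _ hz
    rw [z1, z2] at hnorm
    have hnz : C κ * (X - C θ₀) * (C θ₀ * X + C f) ≠ 0 :=
      mul_ne_zero (mul_ne_zero (C_ne_zero.2 hκ) (X_sub_C_ne_zero _)) (by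
        rw [← hQ]; exact twistRev_ne_zero hf (X_sub_C_ne_zero _))
    exact hnz (by rw [← hnorm]; simp)
  have hp0 : p ≠ 0 := fun h0 =>
    hne (eq_zero_of_X_mul_sq_eq (g := g) (f := f) hc (sub_eq_zero.1 h0))
  have hQ0 : (X - C θ₀ : F[X]) ≠ 0 := X_sub_C_ne_zero _
  have hpar := endParity_eq_of_norm_eq hσ hχ hχσ hf hσf hχf _ p (q ^ 2 * (X - C θ₀))
    ((u ^ 2)⁻¹ * (f * κ)) (2 * N + 2 + 2 * q.natDegree) (p.natDegree + 1 + 2 * N) rfl hp0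
    (mul_ne_zero (pow_ne_zero _ hq) hQ0) (by positivity) (by
      have hu2 : (C u ^ 2 : F[X]) ≠ 0 := pow_ne_zero _ (C_ne_zero.2 hu)
      refine mul_left_cancel₀ hu2 ?_
      have hui : C u ^ 2 * C ((u ^ 2)⁻¹ * (f * κ)) = C f * C κ := by
        rw [← C_pow, ← C_mul, ← C_mul, ← mul_assoc, mul_inv_cancel₀ (by positivity), one_mul]
      rw [twistRev_mul, pow_two q, twistRev_mul, hQ]
      linear_combination X ^ (2 * q.natDegree) * C u ^ 2 * p * hpstar
        + X ^ (2 * q.natDegree) * C f * X ^ p.natDegree * hmain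
        - X ^ (p.natDegree + 1) * C f * C κ * q ^ 2 * (X - C θ₀) * (C θ₀ * X + C f)
          * (X ^ N * twistRev σ f q + X ^ q.natDegree * q') * hqstar
        - X ^ (p.natDegree + 1 + 2 * N) * (q ^ 2 * (X - C θ₀) * ((twistRev σ f q) ^ 2
          * (C θ₀ * X + C f))) * hui)
  have hχ1 : χ 1 = 0 := by simpa using hχ 1 1 one_ne_zero one_ne_zero
  rw [endParity_norm_form hχ hneg hf hχf g hc hχc hne, pow_two,
    endParity_mul hχ (mul_ne_zero hq hq) hQ0, endParity_mul hχ hq hq, CharTwo.add_self_eq_zero,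
    zero_add, endParity, leadingCoeff_X_sub_C, trailingCoeff,
    natTrailingDegree_eq_zero.2 (Or.inr (by simpa using hθ₀)), hχ1] at hpar
  have : χ (-θ₀) = 1 := by rw [neg_eq_neg_one_mul, hχ _ _ (by simp) hθ₀, hneg, hχθ₀, zero_add]
  simp [this] at hpar
end TwistedReverse

/-- The elements of the form `(p₁(θ) + p₂(θ) D) / q(θ)` are a field; if they contain generators of `M`
over `L`, they exhaust `M`. -/
theorem exists_span_of_adjoin_eq_top {L F M : Type*} [Field L] [Field F] [Field M] [Algebra L F]
    [Algebra F M] [Algebra L M] [IsScalarTower L F M] {c g f : F} (hc : c ≠ 0) {θ D : M}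
    (hθ : Transcendental F θ) (hD : θ * D ^ 2 = aeval θ (quadFactor c g f)) {s : Set M}
    (hs : ∀ z ∈ s, ∃ p₁ p₂ q : F[X], q ≠ 0 ∧ aeval θ q * z = aeval θ p₁ + aeval θ p₂ * D)
    (hgen : IntermediateField.adjoin L s = ⊤) (z : M) :
    ∃ p₁ p₂ q : F[X], q ≠ 0 ∧ aeval θ q * z = aeval θ p₁ + aeval θ p₂ * D := by
  have hz : z ∈ IntermediateField.adjoin L s := by rw [hgen]; trivial
  induction hz using IntermediateField.adjoin_induction with
  | mem v hv => exact hs v hv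
  | algebraMap l =>
    refine ⟨C (algebraMap L F l), 0, 1, one_ne_zero, ?_⟩
    simp [← IsScalarTower.algebraMap_apply]
  | add v w _ _ h1 h2 =>
    obtain ⟨p₁, p₂, q, hq, h1⟩ := h1
    obtain ⟨p₁', p₂', q', hq', h2⟩ := h2
    refine ⟨q' * p₁ + q * p₁', q' * p₂ + q * p₂', q * q', mul_ne_zero hq hq', ?_⟩
    simp only [map_mul, map_add]
    linear_combination aeval θ q' * h1 + aeval θ q * h2
  | inv v _ h1 =>
    obtain ⟨p₁, p₂, q, hq, h1⟩ := h1
    by_cases hv : v = 0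
    · exact ⟨0, 0, 1, one_ne_zero, by simp [hv]⟩
    refine ⟨X * q * p₁, -(X * q * p₂), X * p₁ ^ 2 - quadFactor c g f * p₂ ^ 2, ?_, ?_⟩
    · intro h0
      obtain ⟨rfl, rfl⟩ := eq_zero_of_X_mul_sq_eq hc (sub_eq_zero.1 h0)
      rw [map_zero, zero_mul, add_zero] at h1
      rcases mul_eq_zero.1 h1 with h | h
      · exact hq (transcendental_iff.1 hθ q h)
      · exact hv h
    · simp only [map_sub, map_mul, map_pow, map_neg, ← hD, aeval_X]
      field_simp
      linear_combination -θ * (aeval θ p₁ - aeval θ p₂ * D) * h1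
  | mul v w _ _ h1 h2 =>
    obtain ⟨p₁, p₂, q, hq, h1⟩ := h1
    obtain ⟨p₁', p₂', q', hq', h2⟩ := h2
    refine ⟨X * p₁ * p₁' + quadFactor c g f * p₂ * p₂', X * (p₁ * p₂' + p₂ * p₁'), X * q * q',
      mul_ne_zero (mul_ne_zero X_ne_zero hq) hq', ?_⟩
    simp only [map_mul, map_add, aeval_X, ← hD]
    linear_combination θ * aeval θ q' * w * h1 + θ * (aeval θ p₁ + aeval θ p₂ * D) * h2

/-! ### Parity of the valuation of rational functions -/

section RatFuncParity
variable {L : Type*} [Field L]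

/-- The orders of vanishing of `p` at `a` and at `b`, added up modulo 2. -/
noncomputable def polyParity (a b : L) (p : L[X]) : ZMod 2 :=
  (p.rootMultiplicity a : ZMod 2) + p.rootMultiplicity b

/-- The valuations of a rational function at `a` and at `b`, added up modulo 2. Modulo 2 the
contribution of the denominator may be added instead of subtracted. -/
noncomputable def ratParity (a b : L) (z : RatFunc L) : ZMod 2 :=
  polyParity a b z.num + polyParity a b z.denom

variable {a b : L}

theorem polyParity_mul {p q : L[X]} (hp : p ≠ 0) (hq : q ≠ 0) :
    polyParity a b (p * q) = polyParity a b p + polyParity a b q := by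
  simp only [polyParity, rootMultiplicity_mul (mul_ne_zero hp hq), Nat.cast_add]
  ring

theorem ratParity_algebraMap (p : L[X]) :
    ratParity a b (algebraMap L[X] (RatFunc L) p) = polyParity a b p := by
  have h1 : polyParity a b (1 : L[X]) = 0 := by
    have := rootMultiplicity_C (1 : L)
    simp only [C_1] at this
    simp [polyParity, this]
  rw [ratParity, RatFunc.num_algebraMap, RatFunc.denom_algebraMap, h1, add_zero]

theorem ratParity_mul (z w : RatFunc L) (hz : z ≠ 0) (hw : w ≠ 0) :
    ratParity a b (z * w) = ratParity a b z + ratParity a b w := by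
  have h := congrArg (polyParity a b) (RatFunc.num_denom_mul z w)
  have n0 : ∀ {x : RatFunc L}, x ≠ 0 → x.num ≠ 0 := fun h => RatFunc.num_ne_zero h
  have d0 := fun x : RatFunc L => x.denom_ne_zero
  rw [polyParity_mul (n0 (mul_ne_zero hz hw)) (mul_ne_zero (d0 z) (d0 w)),
    polyParity_mul (d0 z) (d0 w), polyParity_mul (mul_ne_zero (n0 hz) (n0 hw)) (d0 _),
    polyParity_mul (n0 hz) (n0 hw)] at h
  simp only [ratParity]
  have two : (2 : ZMod 2) = 0 := rfl
  linear_combination h - (polyParity a b z.denom + polyParity a b w.denom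
    - polyParity a b (z * w).denom) * two

/-- The endomorphism of the rational function field `L(X)` applying `σ` to the coefficients. -/
noncomputable def ratMap (σ : L →+* L) : RatFunc L →+* RatFunc L :=
  IsFractionRing.map (A := L[X]) (B := L[X]) (j := mapRingHom σ) (map_injective σ σ.injective)

theorem ratMap_algebraMap (σ : L →+* L) (p : L[X]) :
    ratMap σ (algebraMap L[X] (RatFunc L) p) = algebraMap L[X] (RatFunc L) (p.map σ) :=
  IsLocalization.map_eq (M := nonZeroDivisors L[X]) (S := RatFunc L) (g := mapRingHom σ)
    (nonZeroDivisors_le_comap_nonZeroDivisors_of_injective _ (map_injective σ σ.injective)) p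

theorem ratMap_C (σ : L →+* L) (l : L) : ratMap σ (RatFunc.C l) = RatFunc.C (σ l) := by
  rw [← RatFunc.algebraMap_C, ratMap_algebraMap, map_C, RatFunc.algebraMap_C]

theorem ratMap_X (σ : L →+* L) : ratMap σ RatFunc.X = RatFunc.X := by
  rw [← RatFunc.algebraMap_X, ratMap_algebraMap, map_X]

theorem ratMap_ratMap {σ : L →+* L} (hσ : ∀ l, σ (σ l) = l) (z : RatFunc L) :
    ratMap σ (ratMap σ z) = z := by
  have hm : ∀ p : L[X], (p.map σ).map σ = p := fun p => by ext n; simp [hσ]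
  rw [← RatFunc.num_div_denom z]
  simp only [map_div₀, ratMap_algebraMap, hm]

theorem polyParity_map {σ : L →+* L} (ha : σ a = a) (hb : σ b = b) (p : L[X]) :
    polyParity a b (p.map σ) = polyParity a b p := by
  have h1 := eq_rootMultiplicity_map (p := p) σ.injective a
  have h2 := eq_rootMultiplicity_map (p := p) σ.injective b
  rw [ha] at h1
  rw [hb] at h2
  rw [polyParity, ← h1, ← h2, polyParity]

theorem ratParity_ratMap {σ : L →+* L} (ha : σ a = a) (hb : σ b = b) (z : RatFunc L) :
    ratParity a b (ratMap σ z) = ratParity a b z := by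
  by_cases hz : z = 0
  · rw [hz, map_zero]
  have hd : algebraMap L[X] (RatFunc L) (z.denom.map σ) ≠ 0 := by
    simpa using (Polynomial.map_ne_zero z.denom_ne_zero : z.denom.map σ ≠ 0)
  have h0 : ratMap σ z ≠ 0 := by simpa using hz
  have h : ratMap σ z * algebraMap L[X] (RatFunc L) (z.denom.map σ)
      = algebraMap L[X] (RatFunc L) (z.num.map σ) := by
    rw [← ratMap_algebraMap, ← ratMap_algebraMap, ← map_mul]
    congr 1
    rw [← RatFunc.num_div_denom z, RatFunc.num_div_denom z]
    nth_rw 1 [← RatFunc.num_div_denom z]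
    exact div_mul_cancel₀ _ (by simpa using z.denom_ne_zero)
  have h' := congrArg (ratParity a b) h
  rw [ratParity_mul _ _ h0 hd, ratParity_algebraMap, ratParity_algebraMap, polyParity_map ha hb,
    polyParity_map ha hb] at h'
  have hz' : ratParity a b z = polyParity a b z.num + polyParity a b z.denom := rfl
  rw [hz']
  have two : (2 : ZMod 2) = 0 := rfl
  linear_combination h' - polyParity a b z.denom * two

theorem ratParity_C (l : L) : ratParity a b (RatFunc.C l) = 0 := by
  rw [← RatFunc.algebraMap_C, ratParity_algebraMap]
  simp [polyParity]

theorem ratParity_X_sub_C (r : L) [DecidableEq L] :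
    ratParity a b (RatFunc.X - RatFunc.C r) = (if a = r then 1 else 0) + if b = r then 1 else 0 := by
  rw [← RatFunc.algebraMap_C, ← RatFunc.algebraMap_X, ← map_sub, ratParity_algebraMap]
  simp only [polyParity, rootMultiplicity_X_sub_C]
  split_ifs <;> simp

end RatFuncParity

/-! ### Transcendence degree -/

section Transcendence
variable {L M : Type*} [Field L] [Field M] [Algebra L M]

/-- The function field of the surface is not algebraic over a subfield generated by one element. -/
theorem not_isAlgebraic_both (htr : 2 ≤ Algebra.trdeg L M) {A C : L} {x y t : M}
    (hrel : t ^ 2 = x ^ 3 + y ^ 3 + algebraMap L M A * x ^ 2 * y ^ 2 + algebraMap L M C)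
    (hgen : IntermediateField.adjoin L {x, y, t} = ⊤) (z : M)
    (hx : IsAlgebraic (Algebra.adjoin L {z}) x) (hy : IsAlgebraic (Algebra.adjoin L {z}) y) :
    False := by
  set S := Algebra.adjoin L {z} with hS
  have hL : ∀ l : L, IsAlgebraic S (algebraMap L M l) := fun l => by
    rw [IsScalarTower.algebraMap_apply L S M]; exact isAlgebraic_algebraMap _
  have ht : IsAlgebraic S t := by
    have : IsAlgebraic S (t ^ 2) := by
      rw [hrel]
      exact (((hx.pow 3).add (hy.pow 3)).add (((hL A).mul (hx.pow 2)).mul (hy.pow 2))).add (hL C)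
    exact this.of_pow (by norm_num)
  have hall : ∀ m : M, IsAlgebraic S m := fun m => by
    have hm : m ∈ IntermediateField.adjoin L {x, y, t} := by rw [hgen]; trivial
    induction hm using IntermediateField.adjoin_induction with
    | mem v hv => rcases hv with rfl | rfl | rfl <;> assumption
    | algebraMap l => exact hL l
    | add _ _ _ _ h1 h2 => exact h1.add h2
    | inv _ _ h => exact h.inv
    | mul _ _ _ _ h1 h2 => exact h1.mul h2
  have : Algebra.IsAlgebraic S M := ⟨hall⟩
  have h1 := Algebra.IsAlgebraic.trdeg_le_cardinalMk L ({z} : Set M)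
  rw [Cardinal.mk_singleton] at h1
  exact absurd (htr.trans h1) (by norm_num)

theorem two_le_trdeg_of_isFractionRing [Algebra (MvPolynomial (Fin 2) L) M]
    [IsScalarTower L (MvPolynomial (Fin 2) L) M] [IsFractionRing (MvPolynomial (Fin 2) L) M] :
    2 ≤ Algebra.trdeg L M := by
  have hinj : Function.Injective (algebraMap (MvPolynomial (Fin 2) L) M) :=
    IsFractionRing.injective _ _
  have h := (MvPolynomial.algebraicIndependent_X (Fin 2) L).map'
    (f := IsScalarTower.toAlgHom L (MvPolynomial (Fin 2) L) M) hinj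
  simpa using h.lift_cardinalMk_le_trdeg

theorem isAlgebraic_adjoin_of_ratFunc [Algebra (RatFunc L) M] [IsScalarTower L (RatFunc L) M]
    {D : M} (h : IsAlgebraic (RatFunc L) D) :
    IsAlgebraic (Algebra.adjoin L {algebraMap (RatFunc L) M RatFunc.X}) D := by
  let _ : Algebra L[X] M := ((algebraMap (RatFunc L) M).comp (algebraMap L[X] (RatFunc L))).toAlgebra
  have : IsScalarTower L[X] (RatFunc L) M := .of_algebraMap_eq fun _ => rfl
  set S := algebraMap (RatFunc L) M RatFunc.X with hS
  have h1 : IsAlgebraic L[X] D := (IsFractionRing.isAlgebraic_iff L[X] (RatFunc L) M).2 h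
  have hev : ∀ p : L[X], aeval S p = algebraMap (RatFunc L) M (algebraMap L[X] (RatFunc L) p) := by
    intro p
    rw [hS, aeval_algebraMap_apply, ← RatFunc.algebraMap_X, aeval_algebraMap_apply, aeval_X_left_apply]
  have hmem : ∀ p : L[X], aeval S p ∈ Algebra.adjoin L {S} := fun p =>
    aeval_mem_adjoin_singleton _ _
  refine h1.ringHom_of_comp_eq ((aeval S : L[X] →ₐ[L] M).codRestrict _ hmem : L[X] →ₐ[L] Algebra.adjoin L {S})
    (RingHom.id M) ?_ ?_
  · intro p q hpq
    have := congrArg Subtype.val hpq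
    change aeval S p = aeval S q at this
    rw [hev, hev] at this
    exact RatFunc.algebraMap_injective L ((algebraMap (RatFunc L) M).injective this)
  · ext p
    · exact hev _
    · exact hev _
end Transcendence

/-! ### The surface as a conic bundle -/

section Surface
variable {L M : Type*} [Field L] [CharZero L] [Field M] [Algebra L M]

theorem false_of_isAlgebraic_add_sub (htr : 2 ≤ Algebra.trdeg L M) {A C : L} {x y t : M}
    (hrel : t ^ 2 = x ^ 3 + y ^ 3 + algebraMap L M A * x ^ 2 * y ^ 2 + algebraMap L M C)
    (hgen : IntermediateField.adjoin L {x, y, t} = ⊤) (z : M)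
    (h1 : IsAlgebraic (Algebra.adjoin L {z}) (x + y))
    (h2 : IsAlgebraic (Algebra.adjoin L {z}) (x - y)) : False := by
  have hhalf : IsAlgebraic (Algebra.adjoin L {z}) (algebraMap L M (1 / 2)) := by
    rw [IsScalarTower.algebraMap_apply L (Algebra.adjoin L {z}) M]
    exact isAlgebraic_algebraMap _
  have h2' : (2 : M) * algebraMap L M (1 / 2) = 1 := by
    rw [← map_ofNat (algebraMap L M) 2, ← map_mul]; norm_num
  refine not_isAlgebraic_both htr hrel hgen z ?_ ?_
  · have h3 : x = (x + y + (x - y)) * algebraMap L M (1 / 2) := by linear_combination -x * h2'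
    rw [h3]
    exact (h1.add h2).mul hhalf
  · have h3 : y = (x + y - (x - y)) * algebraMap L M (1 / 2) := by linear_combination -y * h2'
    rw [h3]
    exact (h1.sub h2).mul hhalf

theorem transcendental_add (htr : 2 ≤ Algebra.trdeg L M) {A C : L} {x y t : M}
    (hrel : t ^ 2 = x ^ 3 + y ^ 3 + algebraMap L M A * x ^ 2 * y ^ 2 + algebraMap L M C)
    (hgen : IntermediateField.adjoin L {x, y, t} = ⊤) : Transcendental L (x + y) := by
  intro h
  refine false_of_isAlgebraic_add_sub htr hrel hgen (x - y) (h.extendScalars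
    (FaithfulSMul.algebraMap_injective L (Algebra.adjoin L {x - y}))) ?_
  have : x - y = algebraMap (Algebra.adjoin L {x - y}) M
    ⟨x - y, Algebra.subset_adjoin rfl⟩ := rfl
  rw [this]
  exact isAlgebraic_algebraMap _

/-- The function `ω² x + ω y - a` is not a constant times a norm `h · σM h`. The surface is viewed as a
conic bundle over the line with coordinate `S = x + y`: with
`θ = t - α (x y - 3 S / (2 α²))` the equation becomes `θ · σM θ = f(S)`,
`f(S) = (S - a) (S - b) (S - c)`, and
`D = x - y` satisfies `θ D² = (2 / α) (θ² + g θ - f)` for some `g ∈ L(S)`. The norm of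
`ω² x + ω y - a = -S / 2 - a + ((ω² - ω) / 2) D` to `L(S)(θ)` has the shape excluded by
`no_norm_representation`, with `θ₀ = (3 / (2 α)) (S - a)`, odd for the parity at `a` and `b`. -/
theorem no_norm_sub_root (htr : 2 ≤ Algebra.trdeg L M) (σ : L →+* L) (hσ : ∀ l, σ (σ l) = l)
    (σM : M →+* M) (hσM : ∀ l, σM (algebraMap L M l) = algebraMap L M (σ l))
    {ω α a b c : L} (hω : ω ^ 2 + ω + 1 = 0) (hα : α ≠ 0) (hab : a ≠ b) (hac : a ≠ c) (hbc : b ≠ c)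
    (hsum : 4 * α ^ 2 * (a + b + c) = 9) (hsum2 : a * b + b * c + c * a = 0)
    (hσα : σ α = -α) (hσa : σ a = a) (hσb : σ b = b) (hσc : σ c = c)
    {x y t : M} (hx : σM x = x) (hy : σM y = y) (ht : σM t = t)
    (hrel : t ^ 2 = x ^ 3 + y ^ 3 + algebraMap L M (α ^ 2) * x ^ 2 * y ^ 2
      + algebraMap L M (-(a * b * c)))
    (hgen : IntermediateField.adjoin L {x, y, t} = ⊤)
    {u : L} (hu : u ≠ 0) {h : M} (hh : algebraMap L M u * h * σM h
      = algebraMap L M (ω ^ 2) * x + algebraMap L M ω * y - algebraMap L M a) : False := by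
  classical
  have hS := transcendental_add htr hrel hgen
  -- `M` as an extension of the rational function field, the variable going to `x + y`
  let φ : RatFunc L →ₐ[L] M :=
    IsFractionRing.liftAlgHom (g := (aeval (x + y) : L[X] →ₐ[L] M))
      (transcendental_iff_injective.1 hS)
  let _ : Algebra (RatFunc L) M := φ.toRingHom.toAlgebra
  have hφ : ∀ z, algebraMap (RatFunc L) M z = φ z := fun _ => rfl
  have htower : IsScalarTower L (RatFunc L) M :=
    .of_algebraMap_eq fun l => by rw [hφ, AlgHom.commutes]
  have hφp : ∀ p : L[X], algebraMap (RatFunc L) M (algebraMap L[X] (RatFunc L) p)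
      = aeval (x + y) p := fun p => by
    rw [hφ]; exact IsFractionRing.lift_algebraMap (transcendental_iff_injective.1 hS) p
  have hφX : algebraMap (RatFunc L) M RatFunc.X = x + y := by
    rw [← RatFunc.algebraMap_X, hφp, aeval_X]
  have hφC : ∀ l, algebraMap (RatFunc L) M (RatFunc.C l) = algebraMap L M l := fun l => by
    rw [← RatFunc.algebraMap_C, hφp, aeval_C]
  have hσF : ∀ z, σM (algebraMap (RatFunc L) M z) = algebraMap (RatFunc L) M (ratMap σ z) := by
    have hp : ∀ p : L[X], σM (algebraMap (RatFunc L) M (algebraMap L[X] (RatFunc L) p))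
        = algebraMap (RatFunc L) M (ratMap σ (algebraMap L[X] (RatFunc L) p)) := fun p => by
      rw [ratMap_algebraMap, hφp, hφp, aeval_def, aeval_def, hom_eval₂, eval₂_map, map_add, hx, hy]
      congr 1
      ext l; simp [hσM]
    intro z
    rw [← RatFunc.num_div_denom z]
    simp only [map_div₀, hp]
  have hDtr : Transcendental (RatFunc L) (x - y) := fun hD => by
    have h1 := isAlgebraic_adjoin_of_ratFunc hD
    rw [hφX] at h1
    refine false_of_isAlgebraic_add_sub htr hrel hgen (x + y) ?_ h1
    have : x + y = algebraMap (Algebra.adjoin L {x + y}) M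
      ⟨x + y, Algebra.subset_adjoin rfl⟩ := rfl
    rw [this]
    exact isAlgebraic_algebraMap _
  have hXC : ∀ r : L, (RatFunc.X - RatFunc.C r : RatFunc L) ≠ 0 := fun r h0 => by
    rw [← RatFunc.algebraMap_X, ← RatFunc.algebraMap_C, ← map_sub] at h0
    exact X_sub_C_ne_zero r (RatFunc.algebraMap_injective L (by rw [h0, map_zero]))
  set f : RatFunc L := (RatFunc.X - RatFunc.C a) * (RatFunc.X - RatFunc.C b)
    * (RatFunc.X - RatFunc.C c) with hf
  have hf0 : f ≠ 0 := mul_ne_zero (mul_ne_zero (hXC a) (hXC b)) (hXC c)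
  set e := algebraMap L M with he
  set S := x + y with hSdef
  have hφf : algebraMap (RatFunc L) M f = (S - e a) * (S - e b) * (S - e c) := by
    simp only [hf, map_mul, map_sub, hφX, hφC]
  have eα : e α ≠ 0 := by simpa [he] using hα
  have esum : 4 * e α ^ 2 * (e a + e b + e c) = 9 := by
    have := congrArg e hsum; simpa [map_ofNat] using this
  have esum2 : e a * e b + e b * e c + e c * e a = 0 := by
    have := congrArg e hsum2; simpa using this
  have eω : e ω ^ 2 + e ω + 1 = 0 := by
    have := congrArg e hω; simpa using this
  have hM2 : (2 : M) ≠ 0 := by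
    rw [← map_ofNat e 2]; simp [he]
  simp only [map_neg, map_mul, map_pow] at hrel hh
  obtain ⟨p1, hp1⟩ : ∃ p1, p1 = x * y - 3 * S / (2 * e α ^ 2) := ⟨_, rfl⟩
  have hp1' : 2 * e α ^ 2 * p1 = 2 * e α ^ 2 * (x * y) - 3 * S := by
    rw [hp1]; field_simp
  obtain ⟨θ, hθ⟩ : ∃ θ, θ = t - e α * p1 := ⟨_, rfl⟩
  have hprod : θ * (t + e α * p1) = algebraMap (RatFunc L) M f := by
    have hα4 : 4 * e α ^ 2 ≠ 0 := mul_ne_zero (by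
      rw [show (4 : M) = 2 * 2 by norm_num]; exact mul_ne_zero hM2 hM2) (pow_ne_zero _ eα)
    rw [hφf, hθ]
    apply mul_left_cancel₀ hα4
    linear_combination 4 * e α ^ 2 * hrel
      - (2 * e α ^ 2 * p1 + 2 * e α ^ 2 * (x * y) - 3 * S) * hp1' + S ^ 2 * esum
      - 4 * e α ^ 2 * S * esum2
  have hθ0 : θ ≠ 0 := by
    rintro h0
    rw [h0, zero_mul] at hprod
    exact hf0 ((algebraMap (RatFunc L) M).injective (by rw [← hprod, map_zero]))
  have hσp1 : σM p1 = p1 := by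
    rw [hp1]
    simp only [map_sub, map_mul, map_div₀, map_pow, map_ofNat, hx, hy, hSdef, hσM, hσα, map_add,
      map_neg, neg_sq]
  have hσθ : σM θ = algebraMap (RatFunc L) M f / θ := by
    rw [eq_div_iff hθ0, ← hprod, hθ]
    simp only [map_sub, map_mul, hσp1, hσM, hσα, map_neg, ht]
    ring
  set gg : RatFunc L := RatFunc.C (α / 2) * (RatFunc.X ^ 2 - RatFunc.C (6 / α ^ 2) * RatFunc.X)
    with hgg
  have hcc : (RatFunc.C (2 / α) : RatFunc L) ≠ 0 := by
    simpa using hα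
  have hev : ∀ z : M, aeval z (quadFactor (RatFunc.C (2 / α)) gg f)
      = algebraMap (RatFunc L) M (RatFunc.C (2 / α)) * (z ^ 2 + algebraMap (RatFunc L) M gg * z
        - algebraMap (RatFunc L) M f) := fun z => by
    simp only [quadFactor, map_mul, map_sub, map_add, map_pow, aeval_X, aeval_C]
  have hD : θ * (x - y) ^ 2 = aeval θ (quadFactor (RatFunc.C (2 / α)) gg f) := by
    rw [hev, ← hprod]
    simp only [hgg, map_mul, map_sub, map_pow, map_div₀, map_ofNat, hφC, hφX]
    have : t = θ + e α * p1 := by rw [hθ]; ring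
    rw [this, hp1]
    field_simp
    rw [hSdef]
    ring
  have hθtr : Transcendental (RatFunc L) θ := by
    intro hal
    have hF : ∀ z : RatFunc L, IsAlgebraic (RatFunc L) (algebraMap (RatFunc L) M z) :=
      fun z => isAlgebraic_algebraMap z
    have h1 : IsAlgebraic (RatFunc L) ((x - y) ^ 2) := by
      rw [← mul_div_cancel_left₀ ((x - y) ^ 2) hθ0, hD, hev, div_eq_mul_inv]
      exact ((hF _).mul (((hal.pow 2).add ((hF _).mul hal)).sub (hF _))).mul hal.inv
    exact hDtr (h1.of_pow (by norm_num))
  have hspan := exists_span_of_adjoin_eq_top hcc hθtr hD (s := {x, y, t}) (by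
    rintro z (rfl | rfl | rfl)
    · refine ⟨C (RatFunc.X), 1, C (RatFunc.C 2), by simp, ?_⟩
      simp only [aeval_C, hφX, map_one, map_ofNat, hSdef]
      ring
    · refine ⟨C (RatFunc.X), -1, C (RatFunc.C 2), by simp, ?_⟩
      simp only [aeval_C, hφX, map_one, map_ofNat, hSdef, map_neg]
      ring
    · refine ⟨X ^ 2 + C f, 0, C (RatFunc.C 2) * X, by simp, ?_⟩
      simp only [aeval_C, map_ofNat, map_mul, map_add, map_pow, aeval_X, map_zero, ← hprod]
      rw [hθ]; ring) hgen
  have hsq3 : (ω ^ 2 - ω) ^ 2 = -3 := by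
    linear_combination (ω ^ 2 - 3 * ω + 3) * hω
  refine no_norm_representation (F := RatFunc L) (σ := ratMap σ) (f := f) (χ := ratParity a b)
    (ratMap_ratMap hσ) ratParity_mul (ratParity_ratMap hσa hσb) ?_ hf0 ?_ ?_
    (RatFunc.C (2 / α)) gg hcc (ratParity_C _) σM hσF θ (x - y) hθtr hσθ (by rw [map_sub, hx, hy])
    hD hspan (RatFunc.C (3 / (2 * α)) * (RatFunc.X - RatFunc.C a))
    (-(RatFunc.C (1 / 2) * RatFunc.X) - RatFunc.C a) (RatFunc.C ((ω ^ 2 - ω) / 2))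
    (RatFunc.X - RatFunc.C a)⁻¹ (RatFunc.C u) (mul_ne_zero (by simpa using hα) (hXC a)) ?_ ?_
    (inv_ne_zero (hXC a)) (by simpa using hu) ?_ h ?_
  · rw [show (-1 : RatFunc L) = RatFunc.C (-1) by simp, ratParity_C]
  · simp only [hf, map_mul, map_sub, ratMap_X, ratMap_C, hσa, hσb, hσc]
  · rw [hf, ratParity_mul _ _ (mul_ne_zero (hXC a) (hXC b)) (hXC c),
      ratParity_mul _ _ (hXC a) (hXC b), ratParity_X_sub_C, ratParity_X_sub_C, ratParity_X_sub_C]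
    simp [hab, hac, hbc, hab.symm]
    rfl
  · rw [map_mul, map_sub, ratMap_X, ratMap_C, ratMap_C, hσa]
    simp only [map_div₀, map_mul, map_ofNat, hσα, map_neg]
    ring
  · rw [ratParity_mul _ _ (by simpa using hα) (hXC a), ratParity_C, ratParity_X_sub_C]
    simp [hab.symm]
  · -- comparison of the coefficients of the two quadratic polynomials in the variable `θ`
    have rα : (RatFunc.C α : RatFunc L) ≠ 0 := by simpa using hα
    have rsum : 4 * RatFunc.C α ^ 2 * (RatFunc.C a + RatFunc.C b + RatFunc.C c)
        = (9 : RatFunc L) := by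
      simpa only [map_mul, map_add, map_pow, map_ofNat] using congrArg (RatFunc.C (K := L)) hsum
    have rsum2 : RatFunc.C a * RatFunc.C b + RatFunc.C b * RatFunc.C c + RatFunc.C c * RatFunc.C a
        = (0 : RatFunc L) := by
      simpa only [map_mul, map_add, map_zero] using congrArg (RatFunc.C (K := L)) hsum2
    have rsq : (RatFunc.C ((ω ^ 2 - ω) / 2) : RatFunc L) ^ 2 = -3 / 4 := by
      rw [← map_pow, show ((ω ^ 2 - ω) / 2) ^ 2 = -3 / 4 by linear_combination hsq3 / 4]
      simp only [map_div₀, map_neg, map_ofNat]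
    have rXa := hXC a
    have r2 : -(RatFunc.C (2 / α) * RatFunc.C ((ω ^ 2 - ω) / 2) ^ 2) = (RatFunc.X - RatFunc.C a)⁻¹
        * (RatFunc.C (3 / (2 * α)) * (RatFunc.X - RatFunc.C a)) := by
      rw [rsq]
      simp only [map_div₀, map_mul, map_ofNat]
      field_simp
      norm_num
    have r1 : (-(RatFunc.C (1 / 2) * RatFunc.X) - RatFunc.C a) ^ 2
          - RatFunc.C (2 / α) * gg * RatFunc.C ((ω ^ 2 - ω) / 2) ^ 2
        = (RatFunc.X - RatFunc.C a)⁻¹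
          * (f - (RatFunc.C (3 / (2 * α)) * (RatFunc.X - RatFunc.C a)) ^ 2) := by
      rw [rsq, eq_inv_mul_iff_mul_eq₀ rXa, hf, hgg]
      simp only [map_div₀, map_mul, map_ofNat, map_one, map_pow]
      field_simp
      linear_combination (4 * RatFunc.X + 4 * RatFunc.C a) * rsum - 16 * RatFunc.C α ^ 2 * rsum2
    have q2 := congrArg C r2
    have q1 := congrArg C r1
    simp only [map_mul, map_sub, map_neg, map_pow] at q1 q2
    simp only [quadFactor, map_mul, map_sub, map_neg]
    linear_combination X ^ 2 * q2 + X * q1 - C f * q2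
  · simp only [map_sub, map_neg, map_mul, hφC, hφX, hh, map_div₀, map_one, map_ofNat, map_pow]
    field_simp
    rw [hSdef]
    linear_combination (x + y) * eω

end Surface

/-- `L(s₁, s₂)`, with `σ` acting on coefficients, is not generated over `L` by `σ`-invariant
`x, y, t` satisfying the equation of the surface. Factorization in `L[s₁, s₂]` makes `x + y - a` a
constant times a norm; this contradicts `no_norm_sub_root` in the coordinates `ω x`, `ω² y`. -/
theorem no_invariant_generators {L M : Type*} [Field L] [CharZero L] [Field M] [Algebra L M]
    [Algebra (MvPolynomial (Fin 2) L) M]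
    [IsScalarTower L (MvPolynomial (Fin 2) L) M] [IsFractionRing (MvPolynomial (Fin 2) L) M]
    (σ : L →+* L) (hσ : ∀ l, σ (σ l) = l) (σM : M →+* M)
    (hσM : ∀ r, σM (algebraMap (MvPolynomial (Fin 2) L) M r)
      = algebraMap (MvPolynomial (Fin 2) L) M (MvPolynomial.map σ r))
    {ω α a b c : L} (hω : ω ^ 2 + ω + 1 = 0) (hα : α ≠ 0) (hab : a ≠ b) (hac : a ≠ c) (hbc : b ≠ c)
    (hsum : 4 * α ^ 2 * (a + b + c) = 9) (hsum2 : a * b + b * c + c * a = 0)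
    (hσω : σ ω = ω) (hσα : σ α = -α) (hσa : σ a = a) (hσb : σ b = b) (hσc : σ c = c)
    {x y t : M} (hx : σM x = x) (hy : σM y = y) (ht : σM t = t)
    (hrel : t ^ 2 = x ^ 3 + y ^ 3 + algebraMap L M (α ^ 2) * x ^ 2 * y ^ 2
      + algebraMap L M (-(a * b * c)))
    (hgen : IntermediateField.adjoin L {x, y, t} = ⊤) : False := by
  have htr : 2 ≤ Algebra.trdeg L M := two_le_trdeg_of_isFractionRing
  have hC : ∀ l : L, algebraMap (MvPolynomial (Fin 2) L) M (MvPolynomial.C l)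
      = algebraMap L M l := fun l => by
    rw [IsScalarTower.algebraMap_apply L (MvPolynomial (Fin 2) L) M, MvPolynomial.algebraMap_eq]
  have hσL : ∀ l, σM (algebraMap L M l) = algebraMap L M (σ l) := fun l => by
    rw [← hC, hσM, MvPolynomial.map_C, hC]
  have hS := transcendental_add htr hrel hgen
  have hrel' := hrel
  set e := algebraMap L M with he
  have eα : e α ≠ 0 := by simpa [he] using hα
  have esum : 4 * e α ^ 2 * (e a + e b + e c) = 9 := by
    simpa only [map_mul, map_add, map_pow, map_ofNat] using congrArg e hsum
  have esum2 : e a * e b + e b * e c + e c * e a = 0 := by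
    simpa only [map_mul, map_add, map_zero] using congrArg e hsum2
  have eω : e ω ^ 2 + e ω + 1 = 0 := by
    simpa only [map_one, map_add, map_pow, map_zero] using congrArg e hω
  have eω3 : e ω ^ 3 = 1 := by linear_combination (e ω - 1) * eω
  have hM2 : (2 : M) ≠ 0 := by
    rw [← map_ofNat e 2]; simp [he]
  simp only [map_neg, map_mul, map_pow] at hrel'
  obtain ⟨p, hp⟩ : ∃ p, p = x * y - 3 * (x + y) / (2 * e α ^ 2) := ⟨_, rfl⟩
  have hp' : 2 * e α ^ 2 * p = 2 * e α ^ 2 * (x * y) - 3 * (x + y) := by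
    rw [hp]; field_simp
  have hσp : σM p = p := by
    rw [hp]
    simp only [map_sub, map_mul, map_div₀, map_pow, map_ofNat, hx, hy, hσL, hσα, map_add,
      map_neg, neg_sq]
  have hprod : (t - e α * p) * σM (t - e α * p)
      = (x + y - e a) * (x + y - e b) * (x + y - e c) := by
    have hα4 : 4 * e α ^ 2 ≠ 0 := mul_ne_zero (by
      rw [show (4 : M) = 2 * 2 by norm_num]; exact mul_ne_zero hM2 hM2) (pow_ne_zero _ eα)
    rw [map_sub, map_mul, ht, hσp, hσL, hσα, map_neg]
    apply mul_left_cancel₀ hα4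
    linear_combination 4 * e α ^ 2 * hrel'
      - (2 * e α ^ 2 * p + 2 * e α ^ 2 * (x * y) - 3 * (x + y)) * hp' + (x + y) ^ 2 * esum
      - 4 * e α ^ 2 * (x + y) * esum2
  have hne : ∀ l, x + y - e l ≠ 0 := fun l h0 => hS (by
    rw [sub_eq_zero.1 h0]; exact isAlgebraic_algebraMap l)
  have hz0 : t - e α * p ≠ 0 := fun h0 => by
    rw [h0, zero_mul] at hprod
    exact mul_ne_zero (mul_ne_zero (hne a) (hne b)) (hne c) hprod.symm
  have hunit : ∀ {l l' : L}, l ≠ l' →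
      IsUnit (MvPolynomial.C l - MvPolynomial.C l' : MvPolynomial (Fin 2) L) := fun h => by
    rw [← map_sub]
    exact (IsUnit.mk0 _ (sub_ne_zero.2 h)).map _
  obtain ⟨v, h, hh⟩ := sub_root_eq_unit_mul_norm (MvPolynomial.map σ)
    (fun r => by rw [MvPolynomial.map_map]; convert MvPolynomial.map_id r; ext l; exact hσ l)
    σM hσM (a := MvPolynomial.C a) (b := MvPolynomial.C b) (c := MvPolynomial.C c)
    (by rw [MvPolynomial.map_C, hσa]) (hunit hab) (hunit hac) (s := x + y)
    (z := t - e α * p) (by rw [map_add, hx, hy]) (by rw [hprod, hC, hC, hC]) hz0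
  obtain ⟨l, hl, hvl⟩ := MvPolynomial.isUnit_iff_eq_C_of_isReduced.1 v.isUnit
  rw [hvl, hC, hC] at hh
  refine no_norm_sub_root htr σ hσ σM hσL hω hα hab hac hbc hsum hsum2 hσα hσa hσb hσc
    (x := e ω * x) (y := e ω ^ 2 * y) (t := t) (h := h) (u := l)
    (by rw [map_mul, hσL, hσω, hx]) (by rw [map_mul, map_pow, hσL, hσω, hy]) ht ?_ ?_ hl.ne_zero ?_
  · rw [hrel, he]
    linear_combination (-x ^ 3 - y ^ 3 * (e ω ^ 3 + 1)
      - e (α ^ 2) * x ^ 2 * y ^ 2 * (e ω ^ 3 + 1)) * eω3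
  · rw [eq_top_iff, ← hgen, IntermediateField.adjoin_le_iff]
    set E := IntermediateField.adjoin L {e ω * x, e ω ^ 2 * y, t} with hE
    have m1 : e ω * x ∈ E := IntermediateField.subset_adjoin _ _ (by simp)
    have m2 : e ω ^ 2 * y ∈ E := IntermediateField.subset_adjoin _ _ (by simp)
    have m3 : t ∈ E := IntermediateField.subset_adjoin _ _ (by simp)
    have m4 : e ω ∈ E := E.algebraMap_mem ω
    rintro z (rfl | rfl | rfl)
    · have : z = e ω ^ 2 * (e ω * z) := by linear_combination -z * eω3
      rw [this]
      exact mul_mem (pow_mem m4 2) m1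
    · have : z = e ω * (e ω ^ 2 * z) := by linear_combination -z * eω3
      rw [this]
      exact mul_mem m4 m2
    · exact m3
  · rw [hh, map_pow]
    linear_combination -(x + y) * eω3

/-! ### The involution of the splitting field -/

/-- An automorphism permuting `a, b, c` and fixing the square root of their discriminant acts by an
even permutation, so its cube fixes them. -/
theorem cube_fixes_of_disc_fixed {L : Type*} [Field L] [CharZero L] (σ : L →+* L) {a b c : L}
    (hab : a ≠ b) (hbc : b ≠ c) (hca : c ≠ a)
    (hperm : ∀ r, r = a ∨ r = b ∨ r = c → σ r = a ∨ σ r = b ∨ σ r = c)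
    (hdisc : σ ((a - b) * (b - c) * (c - a)) = (a - b) * (b - c) * (c - a)) :
    σ (σ (σ a)) = a ∧ σ (σ (σ b)) = b ∧ σ (σ (σ c)) = c := by
  have h0 : (a - b) * (b - c) * (c - a) ≠ 0 :=
    mul_ne_zero (mul_ne_zero (sub_ne_zero.2 hab) (sub_ne_zero.2 hbc)) (sub_ne_zero.2 hca)
  have hi1 : σ a ≠ σ b := fun h => hab (σ.injective h)
  have hi2 : σ b ≠ σ c := fun h => hbc (σ.injective h)
  have hi3 : σ c ≠ σ a := fun h => hca (σ.injective h)
  have hodd : ¬ σ ((a - b) * (b - c) * (c - a)) = -((a - b) * (b - c) * (c - a)) := fun h => by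
    rw [hdisc] at h
    exact h0 (self_eq_neg.1 h)
  rw [map_mul, map_mul, map_sub, map_sub, map_sub] at hodd
  rcases hperm a (by simp) with ha | ha | ha <;> rcases hperm b (by simp) with hb | hb | hb <;>
    rcases hperm c (by simp) with hc | hc | hc <;> rw [ha, hb, hc] at hodd <;>
    first
    | exact absurd (ha.trans hb.symm) hi1
    | exact absurd (hb.trans hc.symm) hi2
    | exact absurd (hc.trans ha.symm) hi3
    | exact absurd (by ring1) hodd
    | simp [ha, hb, hc]

/-- Over the splitting field `L` of `(s³ - (9 / (4 A)) s² + C) (X² - A)` there is an involution fixing the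
three roots `a, b, c` of the cubic and sending `α = √A` to `-α`. It is the cube of any automorphism
moving `α`: the discriminant of the cubic is the square of `3 (2 ω + 1) u w / (4 A²) ≠ 0`. -/
theorem exists_involution {k : Type v} [Field k] [CharZero k] {ω A C u w : k}
    (hω : ω ^ 2 + ω + 1 = 0) (hA : ¬ IsSquare A) (hu : u ≠ 0) (hw : w ≠ 0)
    (huw : 16 * A * u ^ 2 - 27 = A * w ^ 2) (hC : C = u ^ 2 / A ^ 2) :
    ∃ (L : Type v) (_ : Field L) (_ : Algebra k L) (σ : L →ₐ[k] L) (α a b c : L),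
      (∀ l, σ (σ l) = l) ∧ σ α = -α ∧ σ a = a ∧ σ b = b ∧ σ c = c ∧ a ≠ b ∧ a ≠ c ∧ b ≠ c ∧
      α ^ 2 = algebraMap k L A ∧ 4 * α ^ 2 * (a + b + c) = 9 ∧ a * b + b * c + c * a = 0 ∧
      -(a * b * c) = algebraMap k L C := by
  have hA0 : A ≠ 0 := by rintro rfl; exact hA IsSquare.zero
  set f : k[X] := X ^ 3 - Polynomial.C (9 / (4 * A)) * X ^ 2 + Polynomial.C C with hf
  set P : k[X] := f * (X ^ 2 - Polynomial.C A) with hP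
  have hfm : f.Monic := by rw [hf]; monicity!
  have hfd : f.natDegree = 3 := by rw [hf]; compute_degree!
  have hqm : (X ^ 2 - Polynomial.C A : k[X]).Monic := by monicity!
  have hqd : (X ^ 2 - Polynomial.C A : k[X]).natDegree = 2 := by compute_degree!
  have hPm : ∀ {N : Type v} [Field N] (j : k →+* N),
      P.map j = f.map j * (X ^ 2 - Polynomial.C A : k[X]).map j := fun j => Polynomial.map_mul j
  let L := P.SplittingField
  have hchar : CharZero L := charZero_of_injective_algebraMap (algebraMap k L).injective
  set e := algebraMap k L with he
  have hsplit : (P.map e).Splits := SplittingField.splits P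
  rw [hPm] at hsplit
  have hf0' : f.map e ≠ 0 := (hfm.map e).ne_zero
  have hq0' : (X ^ 2 - Polynomial.C A : k[X]).map e ≠ 0 := (hqm.map e).ne_zero
  have hfs : (f.map e).Splits := (splits_mul hf0' hq0').1 hsplit |>.1
  have hqs : ((X ^ 2 - Polynomial.C A : k[X]).map e).Splits := (splits_mul hf0' hq0').1 hsplit |>.2
  obtain ⟨α, hα⟩ : ∃ α : L, α ^ 2 = e A := by
    obtain ⟨α, hα⟩ := hqs.exists_eval_eq_zero (by rw [degree_map, degree_eq_natDegree hqm.ne_zero, hqd]; norm_num)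
    refine ⟨α, ?_⟩
    simpa [sub_eq_zero] using hα
  obtain ⟨a, b, c, hroots⟩ : ∃ a b c : L, (f.map e).roots = {a, b, c} := by
    apply Multiset.card_eq_three.1
    rw [← hfs.natDegree_eq_card_roots, natDegree_map, hfd]
  have hprod : f.map e = (X - Polynomial.C a) * (X - Polynomial.C b) * (X - Polynomial.C c) := by
    have := hfs.eq_prod_roots_of_monic (hfm.map e)
    rw [hroots] at this
    rw [this]; simp [mul_assoc]
  have hexp : X ^ 3 - Polynomial.C (e (9 / (4 * A))) * X ^ 2 + Polynomial.C (e C)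
      = (X - Polynomial.C a) * (X - Polynomial.C b) * (X - Polynomial.C c) := by
    rw [← hprod, hf]; simp
  have hexp' : (X - Polynomial.C a) * (X - Polynomial.C b) * (X - Polynomial.C c)
      = X ^ 3 - Polynomial.C (a + b + c) * X ^ 2 + Polynomial.C (a * b + b * c + c * a) * X
        - Polynomial.C (a * b * c) := by
    simp only [map_add, map_mul]; ring
  rw [hexp'] at hexp
  obtain ⟨h2, h1, h0⟩ : e (9 / (4 * A)) = a + b + c ∧ a * b + b * c + c * a = 0 ∧
      -(a * b * c) = e C := by
    generalize e (9 / (4 * A)) = r, a + b + c = s₁, a * b + b * c + c * a = s₂, a * b * c = s₃,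
      e C = r₀ at hexp
    have h2 := congrArg (fun p => coeff p 2) hexp
    have h1 := congrArg (fun p => coeff p 1) hexp
    have h0 := congrArg (fun p => coeff p 0) hexp
    simp [coeff_X, coeff_C] at h0 h1 h2
    exact ⟨neg_injective h2, h1.symm, h0.symm⟩
  have eA : e A ≠ 0 := by simpa [he] using hA0
  have hα0 : α ≠ 0 := by rintro rfl; exact eA (by rw [← hα]; ring)
  have hsum : 4 * α ^ 2 * (a + b + c) = 9 := by
    rw [← h2, hα, ← map_ofNat e 4, ← map_ofNat e 9, ← map_mul, ← map_mul]
    congr 1; field_simp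
  -- the discriminant of `f` is a nonzero square in `k`
  have hdisc : ((a - b) * (b - c) * (c - a)) ^ 2
      = e (3 * (2 * ω + 1) * u * w / (4 * A ^ 2)) ^ 2 := by
    have hk : (3 * (2 * ω + 1) * u * w / (4 * A ^ 2)) ^ 2 = 4 * (9 / (4 * A)) ^ 3 * C - 27 * C ^ 2 := by
      rw [hC]
      field_simp
      linear_combination 36 * A * w ^ 2 * hω + 27 * huw
    rw [← map_pow, hk]
    simp only [map_sub, map_mul, map_pow, map_ofNat, h2, ← h0]
    linear_combination ((a + b + c) ^ 2 * (a * b + b * c + c * a)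
      - 4 * (a * b + b * c + c * a) ^ 2 + 18 * (a + b + c) * (a * b * c)) * h1
  have hω' : 2 * ω + 1 ≠ 0 := fun h => by
    have : (4 : k) * (ω ^ 2 + ω + 1) = (2 * ω + 1) ^ 2 + 3 := by ring
    rw [hω, h] at this
    norm_num at this
  have hd0 : (a - b) * (b - c) * (c - a) ≠ 0 := fun h => by
    rw [h] at hdisc
    have : e (3 * (2 * ω + 1) * u * w / (4 * A ^ 2)) = 0 := by
      simpa using hdisc.symm
    rw [map_eq_zero] at this
    simp [hω', hu, hw, hA0] at this
  have hab : a ≠ b := fun h => hd0 (by rw [h]; ring)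
  have hbc : b ≠ c := fun h => hd0 (by rw [h]; ring)
  have hca : c ≠ a := fun h => hd0 (by rw [h]; ring)
  have hroot : ∀ r : L, aeval r f = (r - a) * (r - b) * (r - c) := fun r => by
    rw [aeval_def, ← eval_map, hprod]; simp
  have hmem : ∀ r : L, aeval r f = 0 ↔ r = a ∨ r = b ∨ r = c := fun r => by
    rw [hroot, mul_eq_zero, mul_eq_zero, sub_eq_zero, sub_eq_zero, sub_eq_zero, or_assoc]
  have hgal : IsGalois k L := {}
  obtain ⟨σ, hσα⟩ : ∃ σ : L ≃ₐ[k] L, σ α = -α := by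
    have : ∃ σ : L ≃ₐ[k] L, σ α ≠ α := by
      by_contra! hfix
      obtain ⟨l, hl⟩ := IntermediateField.mem_bot.1 ((IsGalois.mem_bot_iff_fixed α).2 hfix)
      refine hA ⟨l, e.injective ?_⟩
      rw [← hα, ← hl, map_mul, pow_two]
    obtain ⟨σ, hσ⟩ := this
    refine ⟨σ, ?_⟩
    have h : σ α ^ 2 = α ^ 2 := by rw [← map_pow, hα, AlgEquiv.commutes]
    exact (sq_eq_sq_iff_eq_or_eq_neg.1 h).resolve_left hσ
  obtain ⟨ha, hb, hc⟩ := cube_fixes_of_disc_fixed (σ : L →+* L) hab hbc hca (fun r hr => by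
      rw [← hmem] at hr ⊢
      have := congrArg σ hr
      rwa [map_zero, ← aeval_algHom_apply] at this) (by
    have hk : ∃ d : k, (a - b) * (b - c) * (c - a) = e d := by
      rcases sq_eq_sq_iff_eq_or_eq_neg.1 hdisc with h | h
      · exact ⟨_, h⟩
      · exact ⟨_, by rw [h, ← map_neg]⟩
    obtain ⟨d, hd⟩ := hk
    rw [hd]; exact σ.commutes d)
  let τ : L →ₐ[k] L := (σ : L →ₐ[k] L).comp ((σ : L →ₐ[k] L).comp (σ : L →ₐ[k] L))
  have hτα : τ α = -α := by
    change σ (σ (σ α)) = -α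
    rw [hσα, map_neg, hσα, map_neg, map_neg, hσα, neg_neg]
  have hτa : τ a = a := ha
  have hτb : τ b = b := hb
  have hτc : τ c = c := hc
  have hττ : τ.comp τ = AlgHom.id k L := by
    refine AlgHom.ext_of_adjoin_eq_top (SplittingField.adjoin_rootSet P) ?_
    intro r hr
    rw [mem_rootSet] at hr
    have h := hr.2
    have hPr : aeval r P = aeval r f * aeval r (X ^ 2 - Polynomial.C A : k[X]) := map_mul _ _ _
    rw [hPr, mul_eq_zero, hmem] at h
    change τ (τ r) = r
    rcases h with (h | h | h) | h
    · rw [h, hτa, hτa]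
    · rw [h, hτb, hτb]
    · rw [h, hτc, hτc]
    · have : r ^ 2 = α ^ 2 := by
        rw [hα]; simpa [sub_eq_zero] using h
      rcases sq_eq_sq_iff_eq_or_eq_neg.1 this with h | h
      · rw [h, hτα, map_neg, hτα, neg_neg]
      · rw [h, map_neg, hτα, neg_neg, hτα]
  exact ⟨L, inferInstance, inferInstance, τ, α, a, b, c, fun l => DFunLike.congr_fun hττ l, hτα,
    hτa, hτb, hτc, hab, hca.symm, hbc, hα, hsum, h1, h0⟩

end NonRationality

/-- Suppose `A` is not a square in `k`, `u, w` are nonzero with `16Au² − 27 = Aw²`, `B = 0`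
and `C = u²/A²`.  Then the function field of the del Pezzo surface
`(x³+y³)z + A x²y² + 2B xyz² + C z⁴ = t²` of degree 2 is not `k`-rational. -/
theorem delPezzo2_not_rational_example
    (k : Type*) [Field k] [CharZero k]
    (ω : k) (hω : IsPrimitiveRoot ω 3)
    (A B C : k)
    (hA : ¬ IsSquare A)
    (u w : k) (hu : u ≠ 0) (hw : w ≠ 0)
    (huw : 16 * A * u ^ 2 - 27 = A * w ^ 2)
    (hB : B = 0) (hC : C = u ^ 2 / A ^ 2)
    -- smoothness of the plane quartic (x³+y³)z + A x²y² + 2B xyz² + C z⁴ = 0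
    (hsm : ∀ x y z : AlgebraicClosure k,
      ((x ^ 3 + y ^ 3) * z + algebraMap k (AlgebraicClosure k) A * x ^ 2 * y ^ 2
          + 2 * algebraMap k (AlgebraicClosure k) B * x * y * z ^ 2
          + algebraMap k (AlgebraicClosure k) C * z ^ 4 = 0 ∧
        3 * x ^ 2 * z + 2 * algebraMap k (AlgebraicClosure k) A * x * y ^ 2
          + 2 * algebraMap k (AlgebraicClosure k) B * y * z ^ 2 = 0 ∧
        3 * y ^ 2 * z + 2 * algebraMap k (AlgebraicClosure k) A * x ^ 2 * y
          + 2 * algebraMap k (AlgebraicClosure k) B * x * z ^ 2 = 0 ∧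
        x ^ 3 + y ^ 3 + 4 * algebraMap k (AlgebraicClosure k) B * x * y * z
          + 4 * algebraMap k (AlgebraicClosure k) C * z ^ 3 = 0) →
      x = 0 ∧ y = 0 ∧ z = 0)
    -- K is the function field of the surface: K = k(x, y, t) with t² = q(x, y)
    (K : Type*) [Field K] [Algebra k K]
    (x y t : K)
    (hind : AlgebraicIndependent k ![x, y])
    (hrel : t ^ 2 = x ^ 3 + y ^ 3 + algebraMap k K A * x ^ 2 * y ^ 2
        + 2 * algebraMap k K B * x * y + algebraMap k K C)
    (hgen : IntermediateField.adjoin k {x, y, t} = ⊤)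
    (ht : t ∉ IntermediateField.adjoin k ({x, y} : Set K)) :
    ¬ IsKRational k K := by
  rintro ⟨φ⟩
  have hω' : ω ^ 2 + ω + 1 = 0 := by
    have h1 : ω - 1 ≠ 0 := sub_ne_zero.2 (hω.ne_one (by norm_num))
    refine mul_left_cancel₀ h1 ?_
    linear_combination hω.pow_eq_one
  obtain ⟨L, _, _, σ, α, a, b, c, hσσ, hσα, hσa, hσb, hσc, hab, hac, hbc, hαA, hsum, hsum2, habc⟩ :=
    exists_involution hω' hA hu hw huw hC
  have hchar : CharZero L := charZero_of_injective_algebraMap (algebraMap k L).injective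
  have hα : α ≠ 0 := by
    rintro rfl
    norm_num at hsum
  -- the isomorphism is base changed to `L`, with the involution acting on coefficients
  let M := FractionRing (MvPolynomial (Fin 2) L)
  have hjinj : Function.Injective (MvPolynomial.map (σ := Fin 2) (algebraMap k L)) :=
    MvPolynomial.map_injective _ (algebraMap k L).injective
  have hσinj : Function.Injective (MvPolynomial.map (σ := Fin 2) (σ : L →+* L)) :=
    MvPolynomial.map_injective _ (σ : L →+* L).injective
  let ι : FractionRing (MvPolynomial (Fin 2) k) →+* M := IsFractionRing.map hjinj
  let σM : M →+* M := IsFractionRing.map hσinj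
  have hι : ∀ p, ι (algebraMap _ _ p) = algebraMap (MvPolynomial (Fin 2) L) M
      (MvPolynomial.map (algebraMap k L) p) := fun p =>
    IsLocalization.map_eq (M := nonZeroDivisors (MvPolynomial (Fin 2) k))
      (nonZeroDivisors_le_comap_nonZeroDivisors_of_injective _ hjinj) p
  have hσM : ∀ p, σM (algebraMap (MvPolynomial (Fin 2) L) M p)
      = algebraMap (MvPolynomial (Fin 2) L) M (MvPolynomial.map (σ : L →+* L) p) := fun p =>
    IsLocalization.map_eq (M := nonZeroDivisors (MvPolynomial (Fin 2) L))
      (nonZeroDivisors_le_comap_nonZeroDivisors_of_injective _ hσinj) p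
  have hσι : ∀ z, σM (ι z) = ι z := fun z => by
    obtain ⟨p, q, -, rfl⟩ := IsFractionRing.div_surjective (A := MvPolynomial (Fin 2) k) z
    have hp : ∀ p : MvPolynomial (Fin 2) k, MvPolynomial.map (σ : L →+* L)
        (MvPolynomial.map (algebraMap k L) p) = MvPolynomial.map (algebraMap k L) p := fun p => by
      rw [MvPolynomial.map_map]
      congr 1
      exact congrArg _ (by ext l; exact σ.commutes l)
    simp only [map_div₀, hι, hσM, hp]
  let ψ : K →+* M := ι.comp (φ : K →+* FractionRing (MvPolynomial (Fin 2) k))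
  have hψ : ∀ z, ψ z = ι (φ z) := fun _ => rfl
  have hψk : ∀ l : k, ψ (algebraMap k K l) = algebraMap L M (algebraMap k L l) := fun l => by
    rw [hψ, AlgEquiv.commutes, IsScalarTower.algebraMap_apply k (MvPolynomial (Fin 2) k), hι,
      IsScalarTower.algebraMap_apply L (MvPolynomial (Fin 2) L) M, MvPolynomial.algebraMap_eq,
      MvPolynomial.algebraMap_eq, MvPolynomial.map_C]
  refine no_invariant_generators (L := L) (M := M) (σ : L →+* L) hσσ σM hσM
    (ω := algebraMap k L ω) ?_ hα hab hac hbc hsum hsum2 (σ.commutes ω) hσα hσa hσb hσc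
    (x := ψ x) (y := ψ y) (t := ψ t) (hσι _) (hσι _) (hσι _) ?_ ?_
  · simpa only [map_add, map_pow, map_one, map_zero] using congrArg (algebraMap k L) hω'
  · rw [hαA, habc, ← hψk, ← hψk]
    have := congrArg ψ hrel
    simpa only [hB, map_add, map_mul, map_pow, map_zero, mul_zero, zero_mul, add_zero] using this
  · set E := IntermediateField.adjoin L {ψ x, ψ y, ψ t} with hE
    have hK : ∀ z, ψ z ∈ E := fun z => by
      have hz : z ∈ IntermediateField.adjoin k {x, y, t} := by rw [hgen]; trivial
      induction hz using IntermediateField.adjoin_induction with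
      | mem v hv =>
        apply IntermediateField.subset_adjoin
        rcases hv with rfl | rfl | rfl <;> simp
      | algebraMap l => rw [hψk]; exact E.algebraMap_mem _
      | add _ _ _ _ h1 h2 => rw [map_add]; exact add_mem h1 h2
      | inv _ _ h => rw [map_inv₀]; exact inv_mem h
      | mul _ _ _ _ h1 h2 => rw [map_mul]; exact mul_mem h1 h2
    have hR : ∀ p : MvPolynomial (Fin 2) L, algebraMap (MvPolynomial (Fin 2) L) M p ∈ E := fun p => by
      induction p using MvPolynomial.induction_on with
      | C l =>
        rw [← MvPolynomial.algebraMap_eq, ← IsScalarTower.algebraMap_apply]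
        exact E.algebraMap_mem l
      | add p q hp hq => rw [map_add]; exact add_mem hp hq
      | mul_X p i hp =>
        rw [map_mul]
        refine mul_mem hp ?_
        have := hK (φ.symm (algebraMap (MvPolynomial (Fin 2) k)
          (FractionRing (MvPolynomial (Fin 2) k)) (MvPolynomial.X i)))
        rwa [hψ, AlgEquiv.apply_symm_apply, hι, MvPolynomial.map_X] at this
    rw [eq_top_iff]
    rintro z -
    obtain ⟨p, q, -, rfl⟩ := IsFractionRing.div_surjective (A := MvPolynomial (Fin 2) L) z
    exact div_mem (hR p) (hR q)
end

section
/- Assume in addition that −13 is a square in k, that 13 is not a square in k, and that the cubic polynomial 13X³ − 13X² + 1 has no root in k; set A = −1, B = 0, C = −13/4. Then the field K_{A,B,C} is k-rational (i.e., the del Pezzo surface X_{A,B,C} of degree 2 is k-rational). -/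
namespace DelPezzo2

open MvPolynomial

/-- Two fields `k(x, y, t)` with `x`, `y` algebraically independent and `t² = q(x, y)` for the same
polynomial `q` are isomorphic, provided that in the first one `t` has degree two over `k(x, y)`:
the isomorphism of the rational function fields extends by matching the two square roots of `q`. -/
theorem nonempty_algEquiv {k K F : Type*} [Field k] [Field K] [Field F] [Algebra k K] [Algebra k F]
    (q : MvPolynomial (Fin 2) k) {x y t : K} {x' y' t' : F}
    (hind : AlgebraicIndependent k ![x, y]) (hrel : t ^ 2 = aeval ![x, y] q)
    (hgen : IntermediateField.adjoin k {x, y, t} = ⊤)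
    (ht : t ∉ IntermediateField.adjoin k ({x, y} : Set K))
    (hind' : AlgebraicIndependent k ![x', y'])
    (hrel' : t' ^ 2 = aeval ![x', y'] q)
    (hgen' : IntermediateField.adjoin k {x', y', t'} = ⊤) :
    Nonempty (K ≃ₐ[k] F) := by
  have hrange : Set.range ![x, y] = {x, y} := by simp [Set.pair_comm]
  rw [← hrange] at ht
  set L := IntermediateField.adjoin k (Set.range ![x, y]) with hL
  let φ : L →ₐ[k] F := (IntermediateField.val _).comp
    (hind.aevalEquivField.symm.trans hind'.aevalEquivField).toAlgHom
  have hφ (p : MvPolynomial (Fin 2) k) (l : L) (hl : (l : K) = aeval ![x, y] p) :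
      φ l = aeval ![x', y'] p := by
    have : l = hind.aevalEquivField (algebraMap _ _ p) := by
      apply Subtype.ext
      rw [hind.aevalEquivField_algebraMap_apply_coe, hl]
    simp [φ, this]
  let := φ.toRingHom.toAlgebra
  have : IsScalarTower k L F := .of_algebraMap_eq fun c ↦ (φ.commutes c).symm
  have hmem (p : MvPolynomial (Fin 2) k) : aeval ![x, y] p ∈ L := by
    have h := (hind.aevalEquivField (algebraMap _ _ p)).2
    rwa [hind.aevalEquivField_algebraMap_apply_coe] at h
  let Q : L := ⟨aeval ![x, y] q, hmem q⟩
  -- `X² - q(x, y)` is irreducible over `k(x, y)` because its roots in `K` are `t` and `-t`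
  have hirr : Irreducible (Polynomial.X ^ 2 - Polynomial.C Q) := by
    refine X_pow_sub_C_irreducible_of_prime Nat.prime_two fun b hb ↦ ht ?_
    have hb' : (b : K) ^ 2 = t ^ 2 := by rw [hrel]; exact congrArg Subtype.val hb
    rcases sq_eq_sq_iff_eq_or_eq_neg.mp hb' with h | h
    · exact h ▸ b.2
    · rw [← neg_eq_iff_eq_neg] at h
      exact h ▸ neg_mem b.2
  have hmin : Polynomial.X ^ 2 - Polynomial.C Q = minpoly L t := by
    refine minpoly.eq_of_irreducible_of_monic hirr ?_ (Polynomial.monic_X_pow_sub_C _ two_ne_zero)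
    simp [hrel, Q, IntermediateField.algebraMap_apply]
  have hint : IsIntegral L t := by
    refine minpoly.ne_zero_iff.mp (hmin ▸ hirr.ne_zero)
  have htop : IntermediateField.adjoin L {t} = ⊤ := by
    apply IntermediateField.restrictScalars_injective k
    rw [IntermediateField.adjoin_adjoin_left, IntermediateField.restrictScalars_top, ← hgen, hrange]
    congr 1
    ext; simp; tauto
  have hroot : t' ∈ (minpoly L t).aroots F := by
    rw [Polynomial.mem_aroots]
    refine ⟨hmin ▸ hirr.ne_zero, ?_⟩
    rw [← hmin]
    simp only [map_sub, map_pow, Polynomial.aeval_X, Polynomial.aeval_C]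
    rw [hrel', sub_eq_zero]
    exact (hφ q Q rfl).symm
  let f₀ : IntermediateField.adjoin L {t} →ₐ[L] F :=
    (IntermediateField.algHomAdjoinIntegralEquiv L hint).symm ⟨t', hroot⟩
  let f : K →ₐ[L] F := f₀.comp
    ((IntermediateField.equivOfEq htop).trans IntermediateField.topEquiv).symm.toAlgHom
  have hft : f t = t' :=
    IntermediateField.algHomAdjoinIntegralEquiv_symm_apply_gen L hint ⟨t', hroot⟩
  have hfL (p : MvPolynomial (Fin 2) k) : f (aeval ![x, y] p) = aeval ![x', y'] p := by
    rw [← hφ p ⟨_, hmem p⟩ rfl]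
    exact f.commutes ⟨_, hmem p⟩
  have hfx : f x = x' := by simpa using hfL (X 0)
  have hfy : f y = y' := by simpa using hfL (X 1)
  let g : K →ₐ[k] F := f.restrictScalars k
  have hg : g.fieldRange = ⊤ := by
    rw [← top_le_iff, ← hgen', IntermediateField.adjoin_le_iff]
    rintro z (rfl | rfl | rfl)
    · exact ⟨x, hfx⟩
    · exact ⟨y, hfy⟩
    · exact ⟨t, hft⟩
  exact ⟨AlgEquiv.ofBijective g ⟨g.injective, AlgHom.fieldRange_eq_top.mp hg⟩⟩

/-- If the rational function field in two variables is generated by `x`, `y` and a square root of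
a polynomial in `x` and `y`, then it is algebraic over `k(x, y)`, so `x` and `y` form a
transcendence basis because the transcendence degree is two. -/
theorem algebraicIndependent_of_sq_eq {k : Type*} [Field k] {F : Type*} [Field F] [Algebra k F]
    [Algebra (MvPolynomial (Fin 2) k) F] [IsScalarTower k (MvPolynomial (Fin 2) k) F]
    [IsFractionRing (MvPolynomial (Fin 2) k) F]
    (q : MvPolynomial (Fin 2) k) {x y t : F}
    (hrel : t ^ 2 = aeval ![x, y] q)
    (hgen : IntermediateField.adjoin k {x, y, t} = ⊤) :
    AlgebraicIndependent k ![x, y] := by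
  have hrange : Set.range ![x, y] = {x, y} := by simp [Set.pair_comm]
  set L := IntermediateField.adjoin k (Set.range ![x, y]) with hL
  have htop : IntermediateField.adjoin L {t} = ⊤ := by
    apply IntermediateField.restrictScalars_injective k
    rw [IntermediateField.adjoin_adjoin_left, IntermediateField.restrictScalars_top, ← hgen, hrange]
    congr 1
    ext; simp; tauto
  have hQ : aeval ![x, y] q ∈ L :=
    IntermediateField.algebra_adjoin_le_adjoin _ _ (by
      rw [Algebra.adjoin_range_eq_range_aeval]; exact ⟨q, rfl⟩)
  have hint : IsIntegral L t := by
    refine ⟨Polynomial.X ^ 2 - Polynomial.C ⟨_, hQ⟩, Polynomial.monic_X_pow_sub_C _ two_ne_zero, ?_⟩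
    simp [hrel, IntermediateField.algebraMap_apply]
  have halg : Algebra.IsAlgebraic L F := by
    have := IntermediateField.isAlgebraic_adjoin_simple hint
    rw [htop] at this
    exact (IntermediateField.topEquiv (F := L) (E := F)).isAlgebraic
  have := IntermediateField.isAlgebraic_adjoin_iff_top.mp halg
  have hX : AlgebraicIndependent k (fun i : Fin 2 ↦ algebraMap (MvPolynomial (Fin 2) k) F (X i)) :=
    (algebraicIndependent_X (Fin 2) k).map' (f := IsScalarTower.toAlgHom k _ F)
      (IsFractionRing.injective _ _)
  exact (Algebra.IsAlgebraic.isTranscendenceBasis_of_lift_le_trdeg_of_finite k ![x, y]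
    hX.lift_cardinalMk_le_trdeg).1

/-- The relation between `A = 1 + u² + v²`, `u`, `v` and `β` needed in `surface_identity`. After
clearing the determinant `D` of the linear system that defines `u` and `v` it is a polynomial
identity in `a`, `b`, `θ`, `r` modulo `θ² + 3` and `r² - 39`. -/
theorem conic_identity {F : Type*} [Field F] [CharZero F] {θ r a b β R S D u v : F}
    (hθ : θ ^ 2 = -3) (hr : r ^ 2 = 39)
    (hβ : β = -(3 / 4) * ((a + 1) ^ 2 + b ^ 2 + 1))
    (hR : R = r / 12 + 3 / 2 * b)
    (hS : S = 3 / 2 * (a + 1) + θ * (2 / 3 * β + 5 / 12))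
    (hD : D = a * (a + 1 + θ / 3) + b ^ 2) (hD0 : D ≠ 0)
    (hu : D * u = (a + 1 + θ / 3) * R - b * S)
    (hv : D * v = a * S + b * R) :
    (1 + u ^ 2 + v ^ 2) * (β + 3 / 2) = (v + β) ^ 2 - u * r / 8 + 13 * v / 8 := by
  apply mul_left_cancel₀ (pow_ne_zero 2 hD0)
  have e : (D ^ 2 + ((a + 1 + θ / 3) * R - b * S) ^ 2 + (a * S + b * R) ^ 2) * (β + 3 / 2)
      = (a * S + b * R + D * β) ^ 2 - D * ((a + 1 + θ / 3) * R - b * S) * r / 8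
        + 13 * D * (a * S + b * R) / 8 := by
    subst hD hS hR hβ
    linear_combination ((-1 / 1728) * θ ^ 2 * a ^ 2 + (-1 / 1728) * θ ^ 2 * b ^ 2 + (-1 / 288) *
      θ * a ^ 3 + (-1 / 288) * θ * a ^ 2 + (-1 / 288) * θ * a * b ^ 2 + (-1 / 192) * a ^ 4 + (-1 /
      96) * a ^ 3 + (-1 / 96) * a ^ 2 * b ^ 2 + (-1 / 192) * a ^ 2 + (-1 / 96) * a * b ^ 2 + (-1 /
      192) * b ^ 4 + (-1 / 576) * b ^ 2) * hr + ((-1 / 48) * r * a ^ 4 * b + (-1 / 16) * r * a ^ 3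
      * b + (-1 / 24) * r * a ^ 2 * b ^ 3 + (-25 / 288) * r * a ^ 2 * b + (-1 / 16) * r * a * b ^
      3 + (-13 / 288) * r * a * b + (-1 / 48) * r * b ^ 5 + (-13 / 288) * r * b ^ 3 + (-3 / 16) *
      a ^ 8 + (-9 / 8) * a ^ 7 + (-3 / 4) * a ^ 6 * b ^ 2 + (-13 / 4) * a ^ 6 + (-27 / 8) * a ^ 5
      * b ^ 2 + (-11 / 2) * a ^ 5 + (-9 / 8) * a ^ 4 * b ^ 4 + (-117 / 16) * a ^ 4 * b ^ 2 +
      (-1093 / 192) * a ^ 4 + (-27 / 8) * a ^ 3 * b ^ 4 + (-35 / 4) * a ^ 3 * b ^ 2 + (-325 / 96)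
      * a ^ 3 + (-3 / 4) * a ^ 2 * b ^ 6 + (-39 / 8) * a ^ 2 * b ^ 4 + (-559 / 96) * a ^ 2 * b ^ 2
      + (-169 / 192) * a ^ 2 + (-9 / 8) * a * b ^ 6 + (-13 / 4) * a * b ^ 4 + (-169 / 96) * a * b
      ^ 2 + (-3 / 16) * b ^ 8 + (-13 / 16) * b ^ 6 + (-169 / 192) * b ^ 4 + (-13 / 576) * b ^ 2) *
      hθ
  rw [← hu, ← hv] at e
  linear_combination e

/-- Given the conic relation `hc`, the elements `x = a - (v + β)`, `y = v + β` and
`t = u (a + 13/8) + v r/8` satisfy the equation of the surface: `hc` says that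
`xy + (3/2) a = v (a + 13/8) - u r/8`, and the product of the norms `u² + v² = a - 1` and
`(a + 13/8)² + (r/8)²` is `t² + (xy + (3/2) a)²`. -/
theorem surface_identity {F : Type*} [Field F] [CharZero F] {r β u v a : F} (hr : r ^ 2 = 39)
    (ha : a = 1 + u ^ 2 + v ^ 2)
    (hc : a * (β + 3 / 2) = (v + β) ^ 2 - u * r / 8 + 13 * v / 8) :
    (u * (a + 13 / 8) + v * r / 8) ^ 2 =
      (a - (v + β)) ^ 3 + (v + β) ^ 3 - (a - (v + β)) ^ 2 * (v + β) ^ 2 - 13 / 4 := by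
  have hP : (a - (v + β)) * (v + β) + 3 / 2 * a = v * (a + 13 / 8) - u * r / 8 := by
    linear_combination hc
  have h1 : (u * (a + 13 / 8) + v * r / 8) ^ 2 + ((a - (v + β)) * (v + β) + 3 / 2 * a) ^ 2
      = (a - 1) * ((a + 13 / 8) ^ 2 + 39 / 64) := by
    rw [hP, show a - 1 = u ^ 2 + v ^ 2 by rw [ha]; ring, ← hr]; ring
  linear_combination h1

/-- A polynomial that some ring homomorphism to `k`, such as evaluation at a point, does not kill is
nonzero in the function field. -/
theorem algebraMap_ne_zero_of_map_ne_zero {k F : Type*} [Field k] [Field F]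
    [Algebra (MvPolynomial (Fin 2) k) F] [IsFractionRing (MvPolynomial (Fin 2) k) F]
    (p : MvPolynomial (Fin 2) k) (φ : MvPolynomial (Fin 2) k →+* k) (h : φ p ≠ 0) :
    algebraMap (MvPolynomial (Fin 2) k) F p ≠ 0 := by
  rw [Ne, FaithfulSMul.algebraMap_eq_zero_iff]
  rintro rfl
  exact h (map_zero _)

/-- The field of rational functions in two variables is generated by three elements satisfying the
equation of the surface, as soon as `-3` and `39` are squares in `k`. -/
theorem exists_parametrization (k : Type*) [Field k] [CharZero k]
    {F : Type*} [Field F] [Algebra k F]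
    [Algebra (MvPolynomial (Fin 2) k) F] [IsScalarTower k (MvPolynomial (Fin 2) k) F]
    [IsFractionRing (MvPolynomial (Fin 2) k) F]
    (θ₀ r₀ : k)
    (hθ₀ : θ₀ ^ 2 = -3) (hr₀ : r₀ ^ 2 = 39) :
    ∃ x y t : F,
      t ^ 2 = x ^ 3 + y ^ 3 - x ^ 2 * y ^ 2 - 13 / 4 ∧
      IntermediateField.adjoin k {x, y, t} = ⊤ := by
  have : CharZero F := charZero_of_injective_algebraMap (algebraMap k F).injective
  have hC (c : k) : algebraMap (MvPolynomial (Fin 2) k) F (C c) = algebraMap k F c :=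
    (IsScalarTower.algebraMap_apply k (MvPolynomial (Fin 2) k) F c).symm
  have hnum (n : ℕ) [n.AtLeastTwo] : algebraMap k F (OfNat.ofNat n) = OfNat.ofNat n :=
    map_ofNat _ n
  set θ := algebraMap k F θ₀ with hθdef
  set r := algebraMap k F r₀ with hrdef
  have hθ : θ ^ 2 = -3 := by rw [← map_pow, hθ₀, map_neg, hnum]
  have hr : r ^ 2 = 39 := by rw [← map_pow, hr₀, hnum]
  set a : F := algebraMap (MvPolynomial (Fin 2) k) F (X 0) with hadef
  set b : F := algebraMap (MvPolynomial (Fin 2) k) F (X 1) with hbdef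
  obtain ⟨β, hβ⟩ : ∃ β, β = -(3 / 4) * ((a + 1) ^ 2 + b ^ 2 + 1) := ⟨_, rfl⟩
  obtain ⟨R, hR⟩ : ∃ R, R = r / 12 + 3 / 2 * b := ⟨_, rfl⟩
  obtain ⟨S, hS⟩ : ∃ S, S = 3 / 2 * (a + 1) + θ * (2 / 3 * β + 5 / 12) := ⟨_, rfl⟩
  obtain ⟨D, hD⟩ : ∃ D, D = a * (a + 1 + θ / 3) + b ^ 2 := ⟨_, rfl⟩
  -- polynomials representing `D`, `R`, `S`, `D u`, `D v`, with the values used to see that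
  -- various denominators are nonzero
  obtain ⟨pD, hpD, hpD0, hpD1⟩ : ∃ p : MvPolynomial (Fin 2) k, algebraMap _ F p = D ∧
      constantCoeff p = 0 ∧ eval ![0, 1] p = 1 :=
    ⟨X 0 * (X 0 + 1 + C (θ₀ / 3)) + X 1 ^ 2, by simp [hC, hnum, hD, hadef, hbdef, hθdef],
      by simp, by simp⟩
  obtain ⟨pR, hpR, hpR0⟩ : ∃ p : MvPolynomial (Fin 2) k, algebraMap _ F p = R ∧
      constantCoeff p = r₀ / 12 :=
    ⟨C (r₀ / 12) + C (3 / 2) * X 1, by simp [hC, hnum, hR, hbdef, hrdef], by simp⟩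
  obtain ⟨pS, hpS⟩ : ∃ p : MvPolynomial (Fin 2) k, algebraMap _ F p = S :=
    ⟨C (3 / 2) * (X 0 + 1) + C θ₀ * (C (2 / 3) * (-C (3 / 4) * ((X 0 + 1) ^ 2 + X 1 ^ 2 + 1))
      + C (5 / 12)), by simp [hC, hnum, hS, hβ, hadef, hbdef, hθdef]⟩
  have hD0 : D ≠ 0 := by
    rw [← hpD]
    exact algebraMap_ne_zero_of_map_ne_zero (F := F) _ (eval ![0, 1]) (by simp [hpD1])
  obtain ⟨u, hu⟩ : ∃ u, D * u = (a + 1 + θ / 3) * R - b * S := ⟨_, mul_div_cancel₀ _ hD0⟩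
  obtain ⟨v, hv⟩ : ∃ v, D * v = a * S + b * R := ⟨_, mul_div_cancel₀ _ hD0⟩
  obtain ⟨pU, hpU, hpU0⟩ : ∃ p : MvPolynomial (Fin 2) k, algebraMap _ F p = D * u ∧
      constantCoeff p ≠ 0 := by
    refine ⟨(X 0 + 1 + C (θ₀ / 3)) * pR - X 1 * pS,
      by simp [hC, hnum, hu, hadef, hbdef, hθdef, hpR, hpS], ?_⟩
    have h1 : 1 + θ₀ / 3 ≠ 0 := fun h ↦ by
      have : θ₀ = -3 := by linear_combination 3 * h
      rw [this] at hθ₀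
      norm_num at hθ₀
    have h2 : r₀ ≠ 0 := by rintro rfl; norm_num at hr₀
    simp [hpR0, h1, h2]
  obtain ⟨pV, hpV, hpV0⟩ : ∃ p : MvPolynomial (Fin 2) k, algebraMap _ F p = D * v ∧
      constantCoeff p = 0 :=
    ⟨X 0 * pS + X 1 * pR, by simp [hv, hadef, hbdef, hpR, hpS], by simp⟩
  obtain ⟨A, hA⟩ : ∃ A, A = 1 + u ^ 2 + v ^ 2 := ⟨_, rfl⟩
  have hc := conic_identity hθ hr hβ hR hS hD hD0 hu hv
  rw [← hA] at hc
  -- both quantities below are nonzero because, after clearing `D`, they are polynomials in `a, b`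
  -- that do not vanish at the origin
  have hN : u ^ 2 + (v - 3 / 2) ^ 2 ≠ 0 := by
    intro h
    refine algebraMap_ne_zero_of_map_ne_zero (F := F) (pU ^ 2 + (pV - C (3 / 2) * pD) ^ 2)
      constantCoeff (by simp [hpV0, hpD0, hpU0]) ?_
    simp only [map_add, map_sub, map_mul, map_pow, hpU, hpV, hpD, hC, map_div₀, hnum]
    linear_combination D ^ 2 * h
  have hh : (A + 13 / 8) ^ 2 + 39 / 64 ≠ 0 := by
    intro h
    refine algebraMap_ne_zero_of_map_ne_zero (F := F)
      ((pD ^ 2 + pU ^ 2 + pV ^ 2 + C (13 / 8) * pD ^ 2) ^ 2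
      + C (39 / 64) * pD ^ 4) constantCoeff (by simp [hpV0, hpD0, hpU0]) ?_
    simp only [map_add, map_mul, map_pow, hpU, hpV, hpD, hC, map_div₀, hnum]
    rw [hA] at h
    linear_combination D ^ 4 * h
  refine ⟨A - (v + β), v + β, u * (A + 13 / 8) + v * r / 8, surface_identity hr hA hc, ?_⟩
  set M := IntermediateField.adjoin k
    ({A - (v + β), v + β, u * (A + 13 / 8) + v * r / 8} : Set F) with hM
  have hxM : A - (v + β) ∈ M := IntermediateField.subset_adjoin _ _ (by simp)
  have hyM : v + β ∈ M := IntermediateField.subset_adjoin _ _ (by simp)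
  have htM : u * (A + 13 / 8) + v * r / 8 ∈ M := IntermediateField.subset_adjoin _ _ (by simp)
  have hrM : r ∈ M := M.algebraMap_mem _
  have hθM : θ ∈ M := M.algebraMap_mem _
  have hQM (c : ℚ) : (c : F) ∈ M := by
    rw [← map_ratCast (algebraMap k F)]; exact M.algebraMap_mem _
  generalize hx : A - (v + β) = x at *
  generalize hy : v + β = y at *
  generalize ht : u * (A + 13 / 8) + v * r / 8 = t at *
  have hAM : A ∈ M := by
    have : A = x + y := by rw [← hx]; ring
    rw [this]; exact add_mem hxM hyM
  have h13 : (13 / 8 : F) ∈ M := by simpa using hQM (13 / 8)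
  have h12 : (3 / 2 : F) ∈ M := by simpa using hQM (3 / 2)
  have h8 : (1 / 8 : F) ∈ M := by simp
  have hPe : x * y + 3 / 2 * A = v * (A + 13 / 8) - u * r / 8 := by
    rw [← hx]; linear_combination hc - A * hy
  have hPM : x * y + 3 / 2 * A ∈ M := add_mem (mul_mem hxM hyM) (mul_mem h12 hAM)
  have hhM : (A + 13 / 8) ^ 2 + 39 / 64 ∈ M :=
    add_mem (pow_mem (add_mem hAM h13) 2) (by simpa using hQM (39 / 64))
  -- `u` and `v` are recovered as the coordinates of `(t + i P) / (A + 13/8 - i r/8)`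
  have huM : u ∈ M := by
    have : u = ((A + 13 / 8) * t - r * (1 / 8) * (x * y + 3 / 2 * A))
        / ((A + 13 / 8) ^ 2 + 39 / 64) := by
      rw [eq_div_iff hh, hPe, ← ht]
      linear_combination (-u / 64) * hr
    rw [this]
    exact div_mem (sub_mem (mul_mem (add_mem hAM h13) htM) (mul_mem (mul_mem hrM h8) hPM)) hhM
  have hvM : v ∈ M := by
    have : v = (r * (1 / 8) * t + (A + 13 / 8) * (x * y + 3 / 2 * A))
        / ((A + 13 / 8) ^ 2 + 39 / 64) := by
      rw [eq_div_iff hh, hPe, ← ht]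
      linear_combination (-v / 64) * hr
    rw [this]
    exact div_mem (add_mem (mul_mem (mul_mem hrM h8) htM) (mul_mem (add_mem hAM h13) hPM)) hhM
  have hv' : v - 3 / 2 ∈ M := sub_mem hvM h12
  have hNM : u ^ 2 + (v - 3 / 2) ^ 2 ∈ M := add_mem (pow_mem huM 2) (pow_mem hv' 2)
  -- the two linear equations for `u`, `v`, rearranged as linear equations for `a`, `b` whose
  -- determinant is `-(u² + (v - 3/2)²)`
  have e1 : a * u + b * v = R := mul_left_cancel₀ hD0 (by
    linear_combination a * hu + b * hv - R * hD)
  have e2 : -b * u + (a + 1 + θ / 3) * v = S := mul_left_cancel₀ hD0 (by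
    linear_combination -b * hu + (a + 1 + θ / 3) * hv - S * hD)
  obtain ⟨T, hT⟩ : ∃ T, T = 3 / 2 + θ * (2 / 3 * (y - v) + 5 / 12) - (1 + θ * (1 / 3)) * v :=
    ⟨_, rfl⟩
  have h23 : (2 / 3 : F) ∈ M := by simpa using hQM (2 / 3)
  have hTM : T ∈ M := by
    rw [hT]
    exact sub_mem (add_mem h12 (mul_mem hθM (add_mem (mul_mem h23
      (sub_mem hyM hvM)) (by simpa using hQM (5 / 12)))))
      (mul_mem (add_mem (one_mem _) (mul_mem hθM (by simp))) hvM)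
  have hr12 : r * (1 / 12) ∈ M := mul_mem hrM (by simp)
  have f1 : u * a + (v - 3 / 2) * b = r * (1 / 12) := by linear_combination e1 + hR
  have f2 : (v - 3 / 2) * a - u * b = T := by
    linear_combination e2 + hS - hT + 2 / 3 * θ * hy
  have haM : a ∈ M := by
    have : a = (u * (r * (1 / 12)) + (v - 3 / 2) * T) / (u ^ 2 + (v - 3 / 2) ^ 2) := by
      rw [eq_div_iff hN]
      linear_combination u * f1 + (v - 3 / 2) * f2
    rw [this]
    exact div_mem (add_mem (mul_mem huM hr12) (mul_mem hv' hTM)) hNM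
  have hbM : b ∈ M := by
    have : b = ((v - 3 / 2) * (r * (1 / 12)) - u * T) / (u ^ 2 + (v - 3 / 2) ^ 2) := by
      rw [eq_div_iff hN]
      linear_combination (v - 3 / 2) * f1 - u * f2
    rw [this]
    exact div_mem (sub_mem (mul_mem hv' hr12) (mul_mem huM hTM)) hNM
  have hpM (p : MvPolynomial (Fin 2) k) : algebraMap _ F p ∈ M := by
    induction p using MvPolynomial.induction_on with
    | C c => rw [hC]; exact M.algebraMap_mem c
    | add p q hp hq => rw [map_add]; exact add_mem hp hq
    | mul_X p i hp =>
      rw [map_mul]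
      refine mul_mem hp ?_
      fin_cases i
      · exact haM
      · exact hbM
  rw [eq_top_iff]
  rintro z -
  obtain ⟨p, q, -, rfl⟩ := IsFractionRing.div_surjective (A := MvPolynomial (Fin 2) k) z
  exact div_mem (hpM p) (hpM q)

end DelPezzo2

/-- Suppose `−13` is a square in `k`, `13` is not a square in `k`, the cubic
`13X³ − 13X² + 1` has no root in `k`, and `A = −1`, `B = 0`, `C = −13/4`.  Then the function
field of the del Pezzo surface `(x³+y³)z + A x²y² + 2B xyz² + C z⁴ = t²` of degree 2 is
`k`-rational. -/
theorem delPezzo2_rational_example_A_neg_one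
    (k : Type*) [Field k] [CharZero k]
    (ω : k) (hω : IsPrimitiveRoot ω 3)
    (A B C : k)
    (hm13 : IsSquare (-13 : k)) (h13 : ¬ IsSquare (13 : k))
    (hcubic : ∀ r : k, 13 * r ^ 3 - 13 * r ^ 2 + 1 ≠ 0)
    (hA : A = -1) (hB : B = 0) (hC : C = -13 / 4)
    -- smoothness of the plane quartic (x³+y³)z + A x²y² + 2B xyz² + C z⁴ = 0
    (hsm : ∀ x y z : AlgebraicClosure k,
      ((x ^ 3 + y ^ 3) * z + algebraMap k (AlgebraicClosure k) A * x ^ 2 * y ^ 2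
          + 2 * algebraMap k (AlgebraicClosure k) B * x * y * z ^ 2
          + algebraMap k (AlgebraicClosure k) C * z ^ 4 = 0 ∧
        3 * x ^ 2 * z + 2 * algebraMap k (AlgebraicClosure k) A * x * y ^ 2
          + 2 * algebraMap k (AlgebraicClosure k) B * y * z ^ 2 = 0 ∧
        3 * y ^ 2 * z + 2 * algebraMap k (AlgebraicClosure k) A * x ^ 2 * y
          + 2 * algebraMap k (AlgebraicClosure k) B * x * z ^ 2 = 0 ∧
        x ^ 3 + y ^ 3 + 4 * algebraMap k (AlgebraicClosure k) B * x * y * z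
          + 4 * algebraMap k (AlgebraicClosure k) C * z ^ 3 = 0) →
      x = 0 ∧ y = 0 ∧ z = 0)
    -- K is the function field of the surface: K = k(x, y, t) with t² = q(x, y)
    (K : Type*) [Field K] [Algebra k K]
    (x y t : K)
    (hind : AlgebraicIndependent k ![x, y])
    (hrel : t ^ 2 = x ^ 3 + y ^ 3 + algebraMap k K A * x ^ 2 * y ^ 2
        + 2 * algebraMap k K B * x * y + algebraMap k K C)
    (hgen : IntermediateField.adjoin k {x, y, t} = ⊤)
    (ht : t ∉ IntermediateField.adjoin k ({x, y} : Set K)) :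
    IsKRational k K := by
  subst hA hB hC
  -- `θ = 1 + 2ω` is a square root of `-3`, hence `sθ` is one of `39` when `s ^ 2 = -13`
  have hω1 : 1 + ω + ω ^ 2 = 0 := by
    simpa [Finset.sum_range_succ] using hω.geom_sum_eq_zero (by norm_num)
  obtain ⟨s, hs⟩ := hm13
  have hθ : (1 + 2 * ω) ^ 2 = -3 := by linear_combination 4 * hω1
  have hr : (s * (1 + 2 * ω)) ^ 2 = 39 := by
    linear_combination s ^ 2 * hθ + 3 * hs
  obtain ⟨x', y', t', hrel', hgen'⟩ := DelPezzo2.exists_parametrization k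
    (F := FractionRing (MvPolynomial (Fin 2) k)) _ _ hθ hr
  let q : MvPolynomial (Fin 2) k := MvPolynomial.X 0 ^ 3 + MvPolynomial.X 1 ^ 3
    - MvPolynomial.X 0 ^ 2 * MvPolynomial.X 1 ^ 2 - MvPolynomial.C (13 / 4)
  have hq : t ^ 2 = MvPolynomial.aeval ![x, y] q := by
    rw [hrel]
    simp [q]
    ring
  have hq' : t' ^ 2 = MvPolynomial.aeval ![x', y'] q := by
    rw [hrel']
    have hnum (n : ℕ) [n.AtLeastTwo] :
        algebraMap k (FractionRing (MvPolynomial (Fin 2) k)) (OfNat.ofNat n) = OfNat.ofNat n :=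
      map_ofNat _ n
    simp [q, hnum]
  exact DelPezzo2.nonempty_algEquiv q hind hq hgen ht
    (DelPezzo2.algebraicIndependent_of_sq_eq q hq' hgen') hq' hgen'
end

section
/- Assume in addition that −22 is a square in k, that 2 is not a square in k, and that the cubic polynomial X³ + 2X² − 2 has no root in k; set A = 2, B = 0, C = 1/8. Then the field K_{A,B,C} is k-rational (i.e., the del Pezzo surface X_{A,B,C} of degree 2 is k-rational). -/
/-! ### Relations on the sextic del Pezzo surface -/

/-- The elements `p₁ + √2 q₁` and `p₂ + √2 q₂` are the quotients
`(t + √2(xy - 3σ/4)) / l₂(σ)` and `(t + √2(xy - 3s/4)) / l₁(s)`; the hypotheses `hp₁`, ..., `hq₂`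
say so after the denominators `l₂(σ) = L₂ + ω²e√2/16` and `l₁(s) = L₁ - e√2/16` have been replaced
by their norms. The first two conclusions are the two parts of `f₂ f̄₁ = l₃(s)`. -/
theorem degreeSix_relations {K : Type*} [Field K] [CharZero K]
    (w e x y t L₁ L₂ Z p₁ q₁ p₂ q₂ : K) (hw : w^2+w+1=0) (he : e^2 = 33/2)
    (hrel : t^2 = x^3+y^3+2*x^2*y^2+1/8)
    (hL₁ : L₁ = x+y-1/16) (hL₂ : L₂ = x+w*y-w^2/16) (hZ : Z = x*y-3/64)
    (hD₁ : L₁^2-33/256 ≠ 0) (hD₂ : L₂^2-33/256*w ≠ 0)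
    (hp₁ : p₁*(L₂^2-33/256*w) = (t+3/32*e)*L₂ - w^2*e/8*Z)
    (hq₁ : q₁*(L₂^2-33/256*w) = Z*L₂ - (t+3/32*e)*(w^2*e/16))
    (hp₂ : p₂*(L₁^2-33/256) = (t-3/32*e)*L₁ + e/8*Z)
    (hq₂ : q₂*(L₁^2-33/256) = Z*L₁ + (t-3/32*e)*(e/16)) :
    p₁*q₂-p₂*q₁ = -w*e/16 ∧ p₁*p₂-2*q₁*q₂ = x+w^2*y-w/16 ∧
    p₂^2-2*q₂^2+3*q₂ = x+y+1/8 ∧ p₁^2-2*q₁^2+3*w*q₁ = x+w*y+w^2/8 ∧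
    p₂*L₁ - e/8*q₂ = t-3/32*e := by
  refine ⟨?_,?_,?_,?_,?_⟩
  · apply mul_right_cancel₀ hD₁
    apply mul_right_cancel₀ hD₂
    trans ((t+3/32*e)*L₂ - w^2*e/8*Z) * (Z*L₁ + (t-3/32*e)*(e/16))
      - ((t-3/32*e)*L₁ + e/8*Z)*(Z*L₂ - (t+3/32*e)*(w^2*e/16))
    · rw [← hp₁, ← hp₂, ← hq₁, ← hq₂]; ring
    · subst hL₁ hL₂ hZ
      clear hp₁ hp₂ hq₁ hq₂ hD₁ hD₂
      grind
  · apply mul_right_cancel₀ hD₁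
    apply mul_right_cancel₀ hD₂
    trans ((t+3/32*e)*L₂ - w^2*e/8*Z) * ((t-3/32*e)*L₁ + e/8*Z)
      - 2*(Z*L₂ - (t+3/32*e)*(w^2*e/16))*(Z*L₁ + (t-3/32*e)*(e/16))
    · rw [← hp₁, ← hp₂, ← hq₁, ← hq₂]; ring
    · subst hL₁ hL₂ hZ
      clear hp₁ hp₂ hq₁ hq₂ hD₁ hD₂
      grind
  · apply mul_right_cancel₀ hD₁
    apply mul_right_cancel₀ hD₁
    trans ((t-3/32*e)*L₁ + e/8*Z)^2
      - 2*(Z*L₁ + (t-3/32*e)*(e/16))^2+3*(Z*L₁ + (t-3/32*e)*(e/16))*(L₁^2-33/256)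
    · rw [← hp₂, ← hq₂]; ring
    · subst hL₁ hL₂ hZ
      clear hp₁ hp₂ hq₁ hq₂ hD₁ hD₂
      grind
  · apply mul_right_cancel₀ hD₂
    apply mul_right_cancel₀ hD₂
    trans ((t+3/32*e)*L₂ - w^2*e/8*Z)^2
      - 2*(Z*L₂ - (t+3/32*e)*(w^2*e/16))^2+3*w*(Z*L₂ - (t+3/32*e)*(w^2*e/16))*(L₂^2-33/256*w)
    · rw [← hp₁, ← hq₁]; ring
    · subst hL₁ hL₂ hZ
      clear hp₁ hp₂ hq₁ hq₂ hD₁ hD₂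
      grind
  · apply mul_right_cancel₀ hD₁
    linear_combination L₁*hp₂ - e/8*hq₂ - (t-3/32*e)/128*he

/-! ### Transcendence degree and nondegeneracy -/

open IntermediateField in
theorem not_isAlgebraic_adjoin_simple {k K : Type*} [Field k] [Field K] [Algebra k K]
    (h2 : 2 ≤ Algebra.trdeg k K) (c : K)
    (h : Algebra.IsAlgebraic k⟮c⟯ K) : False := by
  have := isAlgebraic_adjoin_iff_top.mp h
  have h1 := Algebra.IsAlgebraic.trdeg_le_cardinalMk k ({c} : Set K)
  have h3 := h2.trans h1
  rw [Cardinal.mk_singleton] at h3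
  norm_num at h3

theorem nonempty_algEquiv_of_adjoin_pair {k K : Type*} [Field k] [Field K] [Algebra k K]
    (h2 : 2 ≤ Algebra.trdeg k K) (a b : K)
    (h : IntermediateField.adjoin k {a, b} = ⊤) :
    Nonempty (K ≃ₐ[k] FractionRing (MvPolynomial (Fin 2) k)) := by
  have hr : Set.range ![a,b] = {a,b} := by simp [Set.pair_comm]
  rw [← hr] at h
  have h1 : Algebra.IsAlgebraic (IntermediateField.adjoin k (Set.range ![a,b])) K := by
    rw [h]; exact ⟨fun z => isAlgebraic_algebraMap (⟨z, trivial⟩ : (⊤ : IntermediateField k K))⟩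
  have := IntermediateField.isAlgebraic_adjoin_iff_top.mp h1
  have hb : IsTranscendenceBasis k ![a,b] := by
    apply Algebra.IsAlgebraic.isTranscendenceBasis_of_lift_le_trdeg_of_finite
    simpa using h2
  exact ⟨((hb.1.aevalEquivField.trans (IntermediateField.equivOfEq h)).trans
    IntermediateField.topEquiv).symm⟩

theorem isAlgebraic_of_cubic {k K : Type*} [Field k] [Field K] [Algebra k K]
    (a b c d : k) (ha : a ≠ 0) (z : K)
    (h : algebraMap k K a * z^3 + algebraMap k K b * z^2 + algebraMap k K c * z
      + algebraMap k K d = 0) :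
    IsAlgebraic k z :=
  ⟨(⟨a,b,c,d⟩ : Cubic k).toPoly, Cubic.ne_zero_of_a_ne_zero ha, by simpa [Cubic.toPoly] using h⟩

/-- The denominators `D` are of this shape; evaluating at `(b, 0)` leaves `-c`. -/
theorem sq_sub_ne_zero_of_algebraicIndependent {k K : Type*} [Field k] [Field K] [Algebra k K]
    {x y : K}
    (hind : AlgebraicIndependent k ![x, y]) (a b c : k) (hc : c ≠ 0) :
    (x + algebraMap k K a * y - algebraMap k K b)^2 - algebraMap k K c ≠ 0 := by
  intro h
  have h1 := (algebraicIndependent_iff.mp hind)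
    ((MvPolynomial.X 0 + MvPolynomial.C a * MvPolynomial.X 1 - MvPolynomial.C b)^2
      - MvPolynomial.C c)
    (by simpa using h)
  have h2 := congrArg (MvPolynomial.eval ![b, 0]) h1
  simp at h2
  exact hc h2

/-- Determinant of the linear system `e1`, `e2` for `(v₁, v₂)`. If it vanished, solvability of the
system would force an equation in `u₂` alone, so `u₁` and `u₂` would be algebraic over `k`, and `e2`
would make `K` algebraic over `k(v₁)` or `k(v₂)`. -/
theorem det_ne_zero {k K : Type*} [Field k] [Field K] [CharZero k] [Algebra k K]
    (h2 : 2 ≤ Algebra.trdeg k K)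
    (ω κ : k) (h1 : 1 - ω ≠ 0) (h0 : ω ≠ 0) (hκ : κ ≠ 0) (w c : K) (hw : w = algebraMap k K ω)
    (hc : c = algebraMap k K κ) (u₁ u₂ v₁ v₂ G R : K)
    (hgen : ∀ M : IntermediateField k K, u₁ ∈ M → u₂ ∈ M → v₁ ∈ M → v₂ ∈ M → M = ⊤)
    (hG : G = 2 * (1 - w) * u₂ + 3 * w ^ 2) (hR : R = 3 / 16 * w ^ 2 * (1 - w) - 3 * w * u₂)
    (e1 : (1 - w) * u₁ * v₁ - G * v₂ = R) (e2 : u₂ * v₁ - u₁ * v₂ = c) :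
    (1 - w) * u₁ ^ 2 - u₂ * G ≠ 0 := by
  intro hdet
  have : CharZero K := charZero_of_injective_algebraMap (algebraMap k K).injective
  have hw1 : 1 - w ≠ 0 := by
    rw [hw, ← map_one (algebraMap k K), ← map_sub]; exact (map_ne_zero _).mpr h1
  have hc0 : c ≠ 0 := by rw [hc]; simpa using hκ
  have e3 : u₁ * R = c * G := by linear_combination u₁ * (-e1) + G * e2 + v₁ * hdet
  -- Elimination of `u₁` between the vanishing determinant and `e3`.
  have e4 : G * (u₂ * R ^ 2 - (1 - w) * c ^ 2 * G) = 0 := by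
    linear_combination -R^2*hdet + (1-w)*(u₁*R+c*G)*e3
  have hu₂ : IsAlgebraic k u₂ := by
    rcases mul_eq_zero.mp e4 with h | h
    · have : u₂ = algebraMap k K (-(3*ω^2)/(2*(1-ω))) := by
        simp only [map_div₀, map_neg, map_mul, map_sub, map_pow, map_one, map_ofNat, ← hw]
        field_simp
        linear_combination -hG + h
      rw [this]; exact isAlgebraic_algebraMap _
    · refine isAlgebraic_of_cubic (9*ω^2) (-(9/8*ω^3*(1-ω)))
        ((3/16*ω^2*(1-ω))^2-2*(1-ω)^2*κ^2) (-((1-ω)*κ^2*3*ω^2))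
        (by simpa using h0) u₂ ?_
      simp only [map_div₀, map_neg, map_mul, map_sub, map_pow, map_one, map_ofNat, ← hw, ← hc]
      rw [hR, hG] at h
      linear_combination h
  have key : ∀ z : K, ∀ a : K, IsAlgebraic k a → IsAlgebraic (IntermediateField.adjoin k {z}) a :=
    fun z a h => h.tower_top _
  have mem : ∀ z : K, ∃ N : IntermediateField k K, z ∈ N ∧ u₁ ∈ N ∧ u₂ ∈ N ∧ (N = ⊤ → False) := by
    intro z
    refine ⟨(algebraicClosure (IntermediateField.adjoin k {z}) K).restrictScalars k, ?_, ?_, ?_, ?_⟩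
    · exact mem_algebraicClosure_iff.mpr (isAlgebraic_algebraMap
        (⟨z, IntermediateField.mem_adjoin_simple_self k z⟩ : IntermediateField.adjoin k {z}))
    · refine mem_algebraicClosure_iff.mpr (key z _ ?_)
      refine IsAlgebraic.of_pow two_pos ?_
      have : u₁^2 = u₂ * (2 * u₂ + algebraMap k K (3 * ω^2/(1-ω))) := by
        simp only [map_div₀, map_mul, map_sub, map_pow, map_one, map_ofNat, ← hw]
        field_simp
        linear_combination hdet + u₂ * hG
      rw [this]
      refine hu₂.mul (IsAlgebraic.add ?_ (isAlgebraic_algebraMap _))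
      refine IsAlgebraic.mul ?_ hu₂
      rw [← map_ofNat (algebraMap k K) 2]
      exact (isAlgebraic_algebraMap _)
    · exact mem_algebraicClosure_iff.mpr (key z _ hu₂)
    · intro h
      refine not_isAlgebraic_adjoin_simple h2 z ⟨fun a => mem_algebraicClosure_iff.mp ?_⟩
      have : a ∈ (⊤ : IntermediateField k K) := trivial
      rwa [← h] at this
  by_cases hu₁ : u₁ = 0
  · obtain ⟨N, a1, a2, a3, a4⟩ := mem v₂
    have hu₂0 : u₂ ≠ 0 := by
      rintro rfl
      apply hc0
      rw [← e2, hu₁]; ring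
    refine a4 (hgen N a2 a3 ?_ a1)
    have : v₁ = c / u₂ := by
      field_simp
      linear_combination e2 + v₂ * hu₁
    rw [this, hc]
    exact div_mem (N.algebraMap_mem _) a3
  · obtain ⟨N, a1, a2, a3, a4⟩ := mem v₁
    refine a4 (hgen N a2 a3 a1 ?_)
    have : v₂ = (u₂ * v₁ - c) / u₁ := by
      field_simp
      linear_combination -e2
    rw [this, hc]
    exact div_mem (sub_mem (mul_mem a3 a1) (N.algebraMap_mem _)) a2

/-! ### Rationality -/

/-- Suppose `−22` is a square in `k`, `2` is not a square in `k`, the cubic `X³ + 2X² − 2`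
has no root in `k`, and `A = 2`, `B = 0`, `C = 1/8`.  Then the function field of the del Pezzo
surface `(x³+y³)z + A x²y² + 2B xyz² + C z⁴ = t²` of degree 2 is `k`-rational. -/
theorem delPezzo2_rational_example_A_two
    (k : Type*) [Field k] [CharZero k]
    (ω : k) (hω : IsPrimitiveRoot ω 3)
    (A B C : k)
    (hm22 : IsSquare (-22 : k)) (h2 : ¬ IsSquare (2 : k))
    (hcubic : ∀ r : k, r ^ 3 + 2 * r ^ 2 - 2 ≠ 0)
    (hA : A = 2) (hB : B = 0) (hC : C = 1 / 8)
    -- smoothness of the plane quartic (x³+y³)z + A x²y² + 2B xyz² + C z⁴ = 0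
    (hsm : ∀ x y z : AlgebraicClosure k,
      ((x ^ 3 + y ^ 3) * z + algebraMap k (AlgebraicClosure k) A * x ^ 2 * y ^ 2
          + 2 * algebraMap k (AlgebraicClosure k) B * x * y * z ^ 2
          + algebraMap k (AlgebraicClosure k) C * z ^ 4 = 0 ∧
        3 * x ^ 2 * z + 2 * algebraMap k (AlgebraicClosure k) A * x * y ^ 2
          + 2 * algebraMap k (AlgebraicClosure k) B * y * z ^ 2 = 0 ∧
        3 * y ^ 2 * z + 2 * algebraMap k (AlgebraicClosure k) A * x ^ 2 * y
          + 2 * algebraMap k (AlgebraicClosure k) B * x * z ^ 2 = 0 ∧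
        x ^ 3 + y ^ 3 + 4 * algebraMap k (AlgebraicClosure k) B * x * y * z
          + 4 * algebraMap k (AlgebraicClosure k) C * z ^ 3 = 0) →
      x = 0 ∧ y = 0 ∧ z = 0)
    -- K is the function field of the surface: K = k(x, y, t) with t² = q(x, y)
    (K : Type*) [Field K] [Algebra k K]
    (x y t : K)
    (hind : AlgebraicIndependent k ![x, y])
    (hrel : t ^ 2 = x ^ 3 + y ^ 3 + algebraMap k K A * x ^ 2 * y ^ 2
        + 2 * algebraMap k K B * x * y + algebraMap k K C)
    (hgen : IntermediateField.adjoin k {x, y, t} = ⊤)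
    (ht : t ∉ IntermediateField.adjoin k ({x, y} : Set K)) :
    IsKRational k K := by
  obtain ⟨r, hr⟩ := hm22
  have h1 : 1 - ω ≠ 0 := sub_ne_zero.mpr (hω.ne_one (by norm_num)).symm
  have h0 : ω ≠ 0 := hω.ne_zero (by norm_num)
  have hω2 : ω ^ 2 + ω + 1 = 0 := by
    have h3 := hω.pow_eq_one
    apply mul_left_cancel₀ h1
    linear_combination -h3
  -- `2ω + 1` is a square root of `-3`, so `e₀ = √(-22) √(-3) / 2` has square `33/2`.
  obtain ⟨e₀, he₀⟩ : ∃ e₀ : k, e₀ ^ 2 = 33 / 2 :=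
    ⟨r * (2 * ω + 1) / 2, by linear_combination (-(2 * ω + 1) ^ 2 / 4) * hr - 22 * hω2⟩
  have he₀0 : e₀ ≠ 0 := by rintro rfl; norm_num at he₀
  have : CharZero K := charZero_of_injective_algebraMap (algebraMap k K).injective
  have htr : 2 ≤ Algebra.trdeg k K := by
    simpa using hind.lift_cardinalMk_le_trdeg
  obtain ⟨w, hw⟩ : ∃ w, w = algebraMap k K ω := ⟨_, rfl⟩
  obtain ⟨e, he⟩ : ∃ e, e = algebraMap k K e₀ := ⟨_, rfl⟩
  have hw2 : w ^ 2 + w + 1 = 0 := by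
    rw [hw, ← map_pow, ← map_add, ← map_one (algebraMap k K), ← map_add, hω2, map_zero]
  have he2 : e ^ 2 = 33 / 2 := by
    rw [he, ← map_pow, he₀]; simp [map_ofNat]
  have hrel' : t ^ 2 = x ^ 3 + y ^ 3 + 2 * x ^ 2 * y ^ 2 + 1 / 8 := by
    rw [hrel, hA, hB, hC]; simp [map_ofNat]
  obtain ⟨L₁, hL₁⟩ : ∃ L, L = x + y - 1 / 16 := ⟨_, rfl⟩
  obtain ⟨L₂, hL₂⟩ : ∃ L, L = x + w * y - w ^ 2 / 16 := ⟨_, rfl⟩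
  obtain ⟨Z, hZ⟩ : ∃ Z, Z = x * y - 3 / 64 := ⟨_, rfl⟩
  have hD₁ : L₁ ^ 2 - 33 / 256 ≠ 0 := by
    simpa [hL₁, map_ofNat] using sq_sub_ne_zero_of_algebraicIndependent hind 1 (1 / 16) (33 / 256)
      (by norm_num)
  have hD₂ : L₂ ^ 2 - 33 / 256 * w ≠ 0 := by
    have h := sq_sub_ne_zero_of_algebraicIndependent hind ω (ω ^ 2 / 16) (33 / 256 * ω)
      (by simpa using h0)
    rwa [map_mul, map_div₀, map_div₀, map_pow, map_ofNat, map_ofNat, map_ofNat, ← hw, ← hL₂] at h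
  obtain ⟨p₁, hp₁⟩ := exists_eq_mul_left_of_dvd
    ((IsUnit.mk0 _ hD₂).dvd (a := (t + 3 / 32 * e) * L₂ - w ^ 2 * e / 8 * Z))
  obtain ⟨q₁, hq₁⟩ := exists_eq_mul_left_of_dvd
    ((IsUnit.mk0 _ hD₂).dvd (a := Z * L₂ - (t + 3 / 32 * e) * (w ^ 2 * e / 16)))
  obtain ⟨p₂, hp₂⟩ := exists_eq_mul_left_of_dvd
    ((IsUnit.mk0 _ hD₁).dvd (a := (t - 3 / 32 * e) * L₁ + e / 8 * Z))
  obtain ⟨q₂, hq₂⟩ := exists_eq_mul_left_of_dvd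
    ((IsUnit.mk0 _ hD₁).dvd (a := Z * L₁ + (t - 3 / 32 * e) * (e / 16)))
  obtain ⟨r₁, r₂, r₃, r₄, r₅⟩ := degreeSix_relations w e x y t L₁ L₂ Z p₁ q₁ p₂ q₂ hw2 he2 hrel'
    hL₁ hL₂ hZ hD₁ hD₂ hp₁.symm hq₁.symm hp₂.symm hq₂.symm
  clear hp₁ hp₂ hq₁ hq₂
  have hw1 : 1 - w ≠ 0 := by
    rw [hw, ← map_one (algebraMap k K), ← map_sub]; exact (map_ne_zero _).mpr h1
  have hw1' : 1 + w ≠ 0 := by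
    intro h
    have : w ^ 2 = 0 := by linear_combination hw2 - h
    rw [pow_eq_zero_iff two_ne_zero] at this
    simp [this] at h
  obtain ⟨u₁, hu₁⟩ : ∃ u, u = p₁ - w ^ 2 * p₂ := ⟨_, rfl⟩
  obtain ⟨u₂, hu₂⟩ : ∃ u, u = q₁ - w ^ 2 * q₂ := ⟨_, rfl⟩
  obtain ⟨v₁, hv₁⟩ : ∃ v, v = p₁ - p₂ := ⟨_, rfl⟩
  obtain ⟨v₂, hv₂⟩ : ∃ v, v = q₁ - q₂ := ⟨_, rfl⟩
  -- The `pᵢ, qᵢ` are linear in the `uᵢ, vᵢ`; then `r₃`, `r₄` yield `x + y`, `x + ωy`, and `r₅`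
  -- yields `t`.
  have hgen' : ∀ M : IntermediateField k K, u₁ ∈ M → u₂ ∈ M → v₁ ∈ M → v₂ ∈ M → M = ⊤ := by
    intro M m₁ m₂ m₃ m₄
    have mw : w ∈ M := hw ▸ M.algebraMap_mem ω
    have me : e ∈ M := he ▸ M.algebraMap_mem e₀
    have mone : (1 : K) ∈ M := one_mem M
    have mp₂ : p₂ ∈ M := by
      have : p₂ = (u₁ - v₁) / ((1 - w) * (1 + w)) := by
        field_simp
        linear_combination hv₁ - hu₁
      rw [this]; apply_rules [div_mem, sub_mem, mul_mem, add_mem]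
    have mq₂ : q₂ ∈ M := by
      have : q₂ = (u₂ - v₂) / ((1 - w) * (1 + w)) := by
        field_simp
        linear_combination hv₂ - hu₂
      rw [this]; apply_rules [div_mem, sub_mem, mul_mem, add_mem]
    have mp₁ : p₁ ∈ M := by
      have : p₁ = v₁ + p₂ := by rw [hv₁]; ring
      rw [this]; exact add_mem m₃ mp₂
    have mq₁ : q₁ ∈ M := by
      have : q₁ = v₂ + q₂ := by rw [hv₂]; ring
      rw [this]; exact add_mem m₄ mq₂
    have my : y ∈ M := by
      have : y = ((p₂ ^ 2 - 2 * q₂ ^ 2 + 3 * q₂ - 1 / 8)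
          - (p₁ ^ 2 - 2 * q₁ ^ 2 + 3 * w * q₁ - w ^ 2 / 8)) / (1 - w) := by
        rw [r₃, r₄]; field_simp; ring
      rw [this]
      apply_rules [div_mem, sub_mem, mul_mem, add_mem, pow_mem, ofNat_mem]
    have mx : x ∈ M := by
      have : x = p₂ ^ 2 - 2 * q₂ ^ 2 + 3 * q₂ - 1 / 8 - y := by rw [r₃]; ring
      rw [this]
      apply_rules [div_mem, sub_mem, mul_mem, add_mem, pow_mem, ofNat_mem]
    have mt : t ∈ M := by
      have : t = p₂ * (x + y - 1 / 16) - e / 8 * q₂ + 3 / 32 * e := by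
        rw [← hL₁, r₅]; ring
      rw [this]
      apply_rules [div_mem, sub_mem, mul_mem, add_mem, pow_mem, ofNat_mem]
    rw [← top_le_iff, ← hgen, IntermediateField.adjoin_le_iff]
    rintro z (rfl | rfl | rfl)
    exacts [mx, my, mt]
  obtain ⟨G, hG⟩ : ∃ G, G = 2 * (1 - w) * u₂ + 3 * w ^ 2 := ⟨_, rfl⟩
  obtain ⟨R, hR⟩ : ∃ R, R = 3 / 16 * w ^ 2 * (1 - w) - 3 * w * u₂ := ⟨_, rfl⟩
  obtain ⟨c, hc⟩ : ∃ c, c = algebraMap k K ((1 - ω) * e₀ / 16) := ⟨_, rfl⟩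
  have hc' : c = (1 - w) * e / 16 := by rw [hc, hw, he]; simp [map_ofNat]
  -- The combination in which `x` and `y` cancel, because `1 + ω + ω² = 0`.
  have r₆ : w * (p₂ ^ 2 - 2 * q₂ ^ 2 + 3 * q₂) + w ^ 2 * (p₁ ^ 2 - 2 * q₁ ^ 2 + 3 * w * q₁)
      + (p₁ * p₂ - 2 * q₁ * q₂) = 3 / 16 * w := by
    rw [r₂, r₃, r₄]
    clear * - hw2
    grind
  have e1 : (1 - w) * u₁ * v₁ - G * v₂ = R := by
    rw [hG, hR, hu₁, hu₂, hv₁, hv₂]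
    clear * - hw2 r₆
    grind
  have e2 : u₂ * v₁ - u₁ * v₂ = c := by
    rw [hc', hu₁, hu₂, hv₁, hv₂]
    clear * - hw2 r₁
    grind
  have hdet := det_ne_zero htr ω ((1 - ω) * e₀ / 16) h1 h0 (by simp [h1, he₀0]) w c hw hc
    u₁ u₂ v₁ v₂ G R hgen' hG hR e1 e2
  apply nonempty_algEquiv_of_adjoin_pair htr u₁ u₂
  have m₁ : u₁ ∈ IntermediateField.adjoin k {u₁, u₂} :=
    IntermediateField.subset_adjoin k _ (by simp)
  have m₂ : u₂ ∈ IntermediateField.adjoin k {u₁, u₂} :=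
    IntermediateField.subset_adjoin k _ (by simp)
  generalize IntermediateField.adjoin k {u₁, u₂} = M at m₁ m₂ ⊢
  have mw : w ∈ M := hw ▸ M.algebraMap_mem ω
  have mc : c ∈ M := hc ▸ M.algebraMap_mem _
  have mone : (1 : K) ∈ M := one_mem M
  have mG : G ∈ M := by
    rw [hG]; apply_rules [div_mem, sub_mem, mul_mem, add_mem, pow_mem, ofNat_mem]
  have mR : R ∈ M := by
    rw [hR]; apply_rules [div_mem, sub_mem, mul_mem, add_mem, pow_mem, ofNat_mem]
  apply hgen' M m₁ m₂
  · have : v₁ = (u₁ * R - c * G) / ((1 - w) * u₁ ^ 2 - u₂ * G) := by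
      rw [eq_div_iff hdet]; linear_combination u₁ * e1 - G * e2
    rw [this]; apply_rules [div_mem, sub_mem, mul_mem, add_mem, pow_mem]
  · have : v₂ = (u₂ * R - c * (1 - w) * u₁) / ((1 - w) * u₁ ^ 2 - u₂ * G) := by
      rw [eq_div_iff hdet]; linear_combination u₂ * e1 - (1 - w) * u₁ * e2
    rw [this]; apply_rules [div_mem, sub_mem, mul_mem, add_mem, pow_mem]
end
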